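/- In dimension 10, every finite set S of points on the unit sphere of EuclideanSpace ℝ (Fin 10) (i.e., ‖x‖ = 1 for all x ∈ S) such that any two distinct points of S are at Euclidean distance at least 1 has cardinality at most 554; that is, the kissing number in dimension 10 is at most 554. -/

import Mathlib

section part1

open MvPolynomial

/-- scaled Gegenbauer kernel by recurrence -/
def gU {R : Type*} [CommRing R] (ν : ℕ) (w s : R) : ℕ → R
  | 0 => 1
  | 1 => (ν : R) * w
  | k + 2 => ((2 * (k + 1) + ν : ℕ) : R) * (w * gU ν w s (k + 1))
      - (((k + 1) * (k + ν) : ℕ) : R) * (s * gU ν w s k)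

section fischer
variable {n : ℕ}

noncomputable def fB : MvPolynomial (Fin n) ℝ →ₗ[ℝ] MvPolynomial (Fin n) ℝ →ₗ[ℝ] ℝ :=
  (basisMonomials (Fin n) ℝ).constr ℝ (fun m => ((∏ i, (m i).factorial : ℕ) : ℝ) • lcoeff ℝ m)

theorem fB_mon (m : Fin n →₀ ℕ) (q : MvPolynomial (Fin n) ℝ) :
    fB (monomial m 1) q = ((∏ i, (m i).factorial : ℕ) : ℝ) * coeff m q := by
  have h := (basisMonomials (Fin n) ℝ).constr_basis ℝ
    (fun m => ((∏ i, (m i).factorial : ℕ) : ℝ) • lcoeff ℝ m) m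
  rw [coe_basisMonomials] at h
  rw [fB, h]; rfl

theorem fB_expand (p q : MvPolynomial (Fin n) ℝ) :
    fB p q = ∑ m ∈ p.support, ((∏ i, (m i).factorial : ℕ) : ℝ) * (coeff m p * coeff m q) := by
  conv_lhs => rw [as_sum p]
  rw [map_sum, LinearMap.sum_apply]
  refine Finset.sum_congr rfl fun m _ => ?_
  have : monomial m (coeff m p) = coeff m p • monomial m (1:ℝ) := by
    rw [smul_monomial, smul_eq_mul, mul_one]
  rw [this, map_smul, LinearMap.smul_apply, fB_mon, smul_eq_mul]; ring

theorem fB_symm (p q : MvPolynomial (Fin n) ℝ) : fB p q = fB q p := by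
  rw [fB_expand, fB_expand]
  rw [Finset.sum_subset (Finset.subset_union_left (s₂ := q.support)),
    Finset.sum_subset (Finset.subset_union_right (s₁ := p.support) (s₂ := q.support))]
  · exact Finset.sum_congr rfl fun m _ => by ring
  · intro x _ hx
    rw [notMem_support_iff.mp hx]; ring
  · intro x _ hx
    rw [notMem_support_iff.mp hx]; ring

theorem fB_nonneg (p : MvPolynomial (Fin n) ℝ) : 0 ≤ fB p p := by
  rw [fB_expand]
  exact Finset.sum_nonneg fun m _ => mul_nonneg (by positivity) (mul_self_nonneg _)

theorem fB_adj (i : Fin n) (p q : MvPolynomial (Fin n) ℝ) :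
    fB (X i * p) q = fB p (pderiv i q) := by
  induction p using MvPolynomial.induction_on' with
  | add a b ha hb => rw [mul_add, map_add, map_add, LinearMap.add_apply, LinearMap.add_apply, ha, hb]
  | monomial m c =>
    have h1 : monomial m c = c • monomial m (1:ℝ) := by
      rw [smul_monomial, smul_eq_mul, mul_one]
    rw [h1, mul_smul_comm, map_smul, map_smul, LinearMap.smul_apply, LinearMap.smul_apply]
    congr 1
    have h2 : (X i : MvPolynomial (Fin n) ℝ) * monomial m 1 = monomial (m + Finsupp.single i 1) 1 := by
      rw [X, monomial_mul, add_comm, one_mul]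
    rw [h2, fB_mon, fB_mon, coeff_pderiv]
    have h3 : (∏ j, ((m + Finsupp.single i 1 : Fin n →₀ ℕ) j).factorial) = (∏ j, (m j).factorial) * (m i + 1) := by
      rw [← Finset.mul_prod_erase _ _ (Finset.mem_univ i),
        ← Finset.mul_prod_erase _ (fun j => (m j).factorial) (Finset.mem_univ i)]
      have : ∏ x ∈ Finset.univ.erase i, ((m + Finsupp.single i 1 : Fin n →₀ ℕ) x).factorial
          = ∏ x ∈ Finset.univ.erase i, (m x).factorial := by
        refine Finset.prod_congr rfl fun x hx => ?_
        have : i ≠ x := fun h => (Finset.ne_of_mem_erase hx) h.symm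
        simp [Finsupp.single_apply, this]
      rw [this]
      simp only [Finsupp.add_apply, Finsupp.single_eq_same, Nat.factorial_succ]
      ring
    rw [h3]; push_cast; ring

noncomputable def fl (y : Fin n → ℝ) : MvPolynomial (Fin n) ℝ := ∑ i, C (y i) * X i
noncomputable def fr : MvPolynomial (Fin n) ℝ := ∑ i, X i * X i
noncomputable def fD (y : Fin n → ℝ) (p : MvPolynomial (Fin n) ℝ) : MvPolynomial (Fin n) ℝ :=
  ∑ i, C (y i) * pderiv i p
noncomputable def fE (p : MvPolynomial (Fin n) ℝ) : MvPolynomial (Fin n) ℝ :=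
  ∑ i, X i * pderiv i p
noncomputable def fL (p : MvPolynomial (Fin n) ℝ) : MvPolynomial (Fin n) ℝ :=
  ∑ i, pderiv i (pderiv i p)

theorem fB_l (y : Fin n → ℝ) (p q : MvPolynomial (Fin n) ℝ) :
    fB (fl y * p) q = fB p (fD y q) := by
  unfold fl fD
  rw [Finset.sum_mul, map_sum, map_sum, LinearMap.sum_apply]
  refine Finset.sum_congr rfl fun i _ => ?_
  rw [mul_assoc, ← smul_eq_C_mul, ← smul_eq_C_mul, map_smul, map_smul, LinearMap.smul_apply, fB_adj]

theorem fB_r (p q : MvPolynomial (Fin n) ℝ) : fB (fr * p) q = fB p (fL q) := by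
  unfold fr fL
  rw [Finset.sum_mul, map_sum, map_sum, LinearMap.sum_apply]
  refine Finset.sum_congr rfl fun i _ => ?_
  rw [mul_assoc, fB_adj, fB_adj]

theorem pd_fl (y : Fin n → ℝ) (i : Fin n) : pderiv i (fl y) = C (y i) := by
  unfold fl
  rw [map_sum, Finset.sum_eq_single i]
  · rw [pderiv_C_mul, pderiv_X_self, mul_one]
  · intro b _ hb
    rw [pderiv_C_mul, pderiv_X_of_ne hb, mul_zero]
  · intro h; exact absurd (Finset.mem_univ i) h

theorem pd_fr (i : Fin n) : pderiv i (fr : MvPolynomial (Fin n) ℝ) = 2 * X i := by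
  unfold fr
  rw [map_sum, Finset.sum_eq_single i]
  · rw [Derivation.leibniz, pderiv_X_self, smul_eq_mul]; ring
  · intro b _ hb
    rw [Derivation.leibniz, pderiv_X_of_ne hb, smul_zero, add_zero]
  · intro h; exact absurd (Finset.mem_univ i) h

theorem pd_mul (i : Fin n) (p q : MvPolynomial (Fin n) ℝ) :
    pderiv i (p * q) = p * pderiv i q + q * pderiv i p := by
  rw [Derivation.leibniz]; rfl

noncomputable def dt (x y : Fin n → ℝ) : ℝ := ∑ i, x i * y i

-- product rules
theorem fD_l (y y' : Fin n → ℝ) (p : MvPolynomial (Fin n) ℝ) :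
    fD y (fl y' * p) = C (dt y y') * p + fl y' * fD y p := by
  unfold fD dt
  simp only [pd_mul, pd_fl, mul_add, Finset.sum_add_distrib, Finset.mul_sum, map_sum, Finset.sum_mul, C_mul]
  rw [add_comm]
  congr 1 <;> exact Finset.sum_congr rfl fun i _ => by ring

theorem fD_r (y : Fin n → ℝ) (p : MvPolynomial (Fin n) ℝ) :
    fD y (fr * p) = 2 * fl y * p + fr * fD y p := by
  unfold fD fl
  simp only [pd_mul, pd_fr, mul_add, Finset.sum_add_distrib, Finset.mul_sum, Finset.sum_mul]
  rw [add_comm]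
  congr 1 <;> exact Finset.sum_congr rfl fun i _ => by ring

theorem fE_l (y : Fin n → ℝ) (p : MvPolynomial (Fin n) ℝ) :
    fE (fl y * p) = fl y * p + fl y * fE p := by
  unfold fE
  simp only [pd_mul, pd_fl, mul_add, Finset.sum_add_distrib, Finset.mul_sum]
  rw [add_comm]
  congr 1
  · unfold fl; rw [Finset.sum_mul]; exact Finset.sum_congr rfl fun i _ => by ring
  · exact Finset.sum_congr rfl fun i _ => by ring

theorem fE_r (p : MvPolynomial (Fin n) ℝ) :
    fE (fr * p) = 2 * (fr * p) + fr * fE p := by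
  unfold fE
  simp only [pd_mul, pd_fr, mul_add, Finset.sum_add_distrib, Finset.mul_sum]
  rw [add_comm]
  congr 1
  · unfold fr; rw [Finset.sum_mul, Finset.mul_sum]; exact Finset.sum_congr rfl fun i _ => by ring
  · exact Finset.sum_congr rfl fun i _ => by ring

theorem fL_l (y : Fin n → ℝ) (p : MvPolynomial (Fin n) ℝ) :
    fL (fl y * p) = 2 * fD y p + fl y * fL p := by
  unfold fL fD
  simp only [pd_mul, pd_fl, map_add, pderiv_C, Finset.mul_sum]
  rw [← Finset.sum_add_distrib]
  exact Finset.sum_congr rfl fun i _ => by ring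

theorem fL_r (p : MvPolynomial (Fin n) ℝ) :
    fL (fr * p) = ((2 * n : ℕ) : MvPolynomial (Fin n) ℝ) * p + 4 * fE p + fr * fL p := by
  unfold fL fE
  have : ((2 * n : ℕ) : MvPolynomial (Fin n) ℝ) * p = ∑ i : Fin n, 2 * p := by
    simp; ring
  rw [this]
  have h2 : ∀ i : Fin n, pderiv i (2 : MvPolynomial (Fin n) ℝ) = 0 := fun i => by
    rw [← map_ofNat (C : ℝ →+* MvPolynomial (Fin n) ℝ) 2, pderiv_C]
  simp only [pd_mul, pd_fr, map_add, pderiv_X_self, h2, Finset.mul_sum]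
  rw [← Finset.sum_add_distrib, ← Finset.sum_add_distrib]
  exact Finset.sum_congr rfl fun i _ => by ring

theorem fD_add (y : Fin n → ℝ) (p q : MvPolynomial (Fin n) ℝ) : fD y (p + q) = fD y p + fD y q := by
  simp [fD, mul_add, Finset.sum_add_distrib]
theorem fE_add (p q : MvPolynomial (Fin n) ℝ) : fE (p + q) = fE p + fE q := by
  simp [fE, mul_add, Finset.sum_add_distrib]
theorem fL_add (p q : MvPolynomial (Fin n) ℝ) : fL (p + q) = fL p + fL q := by
  simp [fL, Finset.sum_add_distrib]
theorem fD_smul (y : Fin n → ℝ) (c : ℝ) (p : MvPolynomial (Fin n) ℝ) : fD y (c • p) = c • fD y p := by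
  simp [fD, Finset.smul_sum]
theorem fE_smul (c : ℝ) (p : MvPolynomial (Fin n) ℝ) : fE (c • p) = c • fE p := by
  simp [fE, Finset.smul_sum]
theorem fL_smul (c : ℝ) (p : MvPolynomial (Fin n) ℝ) : fL (c • p) = c • fL p := by
  simp [fL, Finset.smul_sum]
theorem fD_one (y : Fin n → ℝ) : fD y 1 = 0 := by simp [fD]
theorem fE_one : fE (1 : MvPolynomial (Fin n) ℝ) = 0 := by simp [fE]
theorem fL_one : fL (1 : MvPolynomial (Fin n) ℝ) = 0 := by simp [fL]
theorem fD_L (y : Fin n → ℝ) (q : MvPolynomial (Fin n) ℝ) : fL (fD y q) = fD y (fL q) := by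
  unfold fL fD
  simp only [map_sum, Finset.mul_sum]
  rw [Finset.sum_comm]
  refine Finset.sum_congr rfl fun i _ => Finset.sum_congr rfl fun j _ => ?_
  rw [pderiv_C_mul, pderiv_C_mul]
  congr 1
  have hc : ∀ f : MvPolynomial (Fin n) ℝ, pderiv j (pderiv i f) = pderiv i (pderiv j f) := fun f => by
    ext m
    simp only [coeff_pderiv]
    by_cases h : i = j
    · subst h; rfl
    · simp [Finsupp.single_apply, h, Ne.symm h, add_right_comm, mul_right_comm]
  rw [hc, hc]

noncomputable def fU (y : Fin n → ℝ) (k : ℕ) : MvPolynomial (Fin n) ℝ :=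
  gU (n - 2) (fl y) (C (dt y y) * fr) k

theorem fU_succ (y : Fin n → ℝ) (k : ℕ) : fU y (k + 2) =
    ((2 * (k + 1) + (n - 2) : ℕ) : ℝ) • (fl y * fU y (k + 1))
     + (-(((k + 1) * (k + (n - 2)) : ℕ) : ℝ) * dt y y) • (fr * fU y k) := by
  have : ∀ m : ℕ, (C (m : ℝ) : MvPolynomial (Fin n) ℝ) = (m : MvPolynomial (Fin n) ℝ) := fun m => by simp
  simp only [fU, gU, smul_eq_C_mul, C_mul, C_neg, this]
  ring

theorem fU_one (y : Fin n → ℝ) : fU y 1 = ((n - 2 : ℕ) : ℝ) • (fl y * 1) := by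
  simp only [fU, gU, smul_eq_C_mul, mul_one, map_natCast]

theorem fU_D (y : Fin n → ℝ) (k : ℕ) :
    fD y (fU y (k + 1)) = (((k + 1) * (k + (n - 2)) : ℕ) * dt y y : ℝ) • fU y k := by
  induction k using Nat.twoStepInduction with
  | zero => 
    rw [fU_one, fD_smul, fD_l, fD_one]
    simp [fU, gU, smul_eq_C_mul]
  | one =>
    rw [fU_succ, fD_add, fD_smul, fD_smul, fD_l, fD_r, fU_one, fD_smul, fD_l]
    simp only [fU, gU, fD_one, smul_eq_C_mul, mul_one, mul_zero, add_zero]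
    simp only [C_mul, C_neg]
    have : ∀ m : ℕ, (C (m : ℝ) : MvPolynomial (Fin n) ℝ) = (m : MvPolynomial (Fin n) ℝ) := fun m => by simp
    simp only [this]; push_cast; ring
  | more k h0 h1 =>
    rw [fU_succ y (k+1), fD_add, fD_smul, fD_smul, fD_l, fD_r, h1, h0]
    rw [fU_succ y k]
    simp only [smul_eq_C_mul, C_mul, C_neg]
    have : ∀ m : ℕ, (C (m : ℝ) : MvPolynomial (Fin n) ℝ) = (m : MvPolynomial (Fin n) ℝ) := fun m => by simp
    simp only [this]; push_cast; ring

theorem fU_E (y : Fin n → ℝ) (k : ℕ) : fE (fU y k) = (k : ℝ) • fU y k := by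
  induction k using Nat.twoStepInduction with
  | zero => simp [fU, gU, fE_one]
  | one => rw [fU_one, fE_smul, fE_l, fE_one]; simp
  | more k h0 h1 =>
    rw [fU_succ y k, fE_add, fE_smul, fE_smul, fE_l, fE_r, h1, h0]
    simp only [smul_eq_C_mul, C_mul, C_neg]
    have : ∀ m : ℕ, (C (m : ℝ) : MvPolynomial (Fin n) ℝ) = (m : MvPolynomial (Fin n) ℝ) := fun m => by simp
    simp only [this]; push_cast; ring

theorem fU_L (hn : 2 ≤ n) (y : Fin n → ℝ) (k : ℕ) : fL (fU y k) = 0 := by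
  induction k using Nat.twoStepInduction with
  | zero => simp [fU, gU, fL_one]
  | one => rw [fU_one, fL_smul, fL_l, fL_one, fD_one]; simp
  | more k h0 h1 =>
    rw [fU_succ y k, fL_add, fL_smul, fL_smul, fL_l, fL_r, h1, h0, fU_D, fU_E]
    simp only [smul_eq_C_mul, C_mul, C_neg]
    have : ∀ m : ℕ, (C (m : ℝ) : MvPolynomial (Fin n) ℝ) = (m : MvPolynomial (Fin n) ℝ) := fun m => by simp
    simp only [this]
    obtain ⟨m, rfl⟩ : ∃ m, n = m + 2 := ⟨n - 2, by omega⟩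
    simp only [Nat.add_sub_cancel]
    push_cast; ring

theorem fB_U (hn : 3 ≤ n) (k : ℕ) : ∃ c : ℝ, 0 < c ∧
    ∀ (y : Fin n → ℝ) (q), fL q = 0 → fB (fU y k) q = c * fB (fl y ^ k) q := by
  induction k using Nat.twoStepInduction with
  | zero => exact ⟨1, zero_lt_one, fun y q _ => by simp [fU, gU]⟩
  | one => exact ⟨((n - 2 : ℕ) : ℝ), by exact_mod_cast (by omega : 0 < n - 2), fun y q _ => by
      rw [fU_one, map_smul, LinearMap.smul_apply, smul_eq_mul]; simp⟩
  | more k h0 h1 =>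
    obtain ⟨c, hc, h⟩ := h1
    refine ⟨((2 * (k + 1) + (n - 2) : ℕ) : ℝ) * c, by positivity, fun y q hq => ?_⟩
    rw [fU_succ, map_add, map_smul, map_smul, LinearMap.add_apply, LinearMap.smul_apply,
      LinearMap.smul_apply, fB_l, fB_r, hq, map_zero, smul_zero, add_zero,
      h _ _ (by rw [fD_L, hq]; simp [fD]),
      ← fB_l, smul_eq_mul, ← pow_succ', mul_assoc]

theorem fD_pow (y y' : Fin n → ℝ) (k : ℕ) :
    fD y' (fl y ^ (k + 1)) = ((k + 1 : ℝ) * dt y' y) • fl y ^ k := by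
  induction k with
  | zero => rw [zero_add, pow_one, ← mul_one (fl y), fD_l, fD_one]; simp [smul_eq_C_mul]
  | succ k ih =>
    rw [pow_succ', fD_l, ih]
    simp only [smul_eq_C_mul, C_mul, pow_succ]
    push_cast
    simp only [C_add, C_1]
    ring

theorem fL_pow (y : Fin n → ℝ) (k : ℕ) :
    fL (fl y ^ (k + 2)) = ((k + 2 : ℝ) * (k + 1) * dt y y) • fl y ^ k := by
  induction k with
  | zero =>
    rw [zero_add, pow_two, fL_l, ← mul_one (fl y), fL_l, fD_l, fL_one, fD_one]
    simp only [smul_eq_C_mul, C_mul, map_add, map_natCast, map_ofNat, map_one, mul_zero, mul_one, add_zero, pow_zero, map_zero]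
    push_cast; ring
  | succ k ih =>
    rw [pow_succ', fL_l, ih, show k + 1 + 1 = (k+1) + 1 from rfl, fD_pow]
    simp only [smul_eq_C_mul, C_mul, pow_succ]
    push_cast
    simp only [C_add, C_1, map_ofNat]
    ring

theorem fB_pow (y y' : Fin n → ℝ) (k : ℕ) :
    fB (fU y' k) (fl y ^ k) = k.factorial * gU (n - 2) (dt y' y) (dt y' y' * dt y y) k := by
  induction k using Nat.twoStepInduction with
  | zero =>
    have := fB_mon (0 : Fin n →₀ ℕ) (1 : MvPolynomial (Fin n) ℝ)
    simp at this
    simp [fU, gU, this]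
  | one =>
    have := fB_mon (0 : Fin n →₀ ℕ) (1 : MvPolynomial (Fin n) ℝ)
    simp at this
    rw [fU_one, map_smul, LinearMap.smul_apply, fB_l, fD_pow, map_smul]
    simp [gU, this]
  | more k h0 h1 =>
    rw [fU_succ, map_add, map_smul, map_smul, LinearMap.add_apply, LinearMap.smul_apply,
      LinearMap.smul_apply, fB_l, fB_r, fD_pow, fL_pow, map_smul, map_smul, h1, h0, gU]
    simp only [smul_eq_mul, Nat.factorial_succ]
    push_cast; ring

theorem dt_comm (x y : Fin n → ℝ) : dt x y = dt y x := by
  unfold dt; exact Finset.sum_congr rfl fun i _ => mul_comm _ _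

theorem gU_psd (hn : 3 ≤ n) {ι : Type*} (s : Finset ι) (c : ι → ℝ) (x : ι → Fin n → ℝ) (k : ℕ) :
    0 ≤ ∑ i ∈ s, ∑ j ∈ s, c i * c j * gU (n - 2) (dt (x i) (x j)) (dt (x i) (x i) * dt (x j) (x j)) k := by
  obtain ⟨a, ha, h⟩ := fB_U hn k
  have h0 := fB_nonneg (∑ i ∈ s, c i • fU (x i) k)
  have hk : (0:ℝ) < a * k.factorial := by positivity
  refine (mul_nonneg_iff_of_pos_left hk).mp ?_
  refine h0.trans_eq ?_
  rw [map_sum fB, LinearMap.sum_apply, Finset.mul_sum]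
  refine Finset.sum_congr rfl fun i _ => ?_
  rw [map_sum, Finset.mul_sum]
  refine Finset.sum_congr rfl fun j _ => ?_
  rw [map_smul, map_smul, LinearMap.smul_apply, h _ _ (fU_L (by omega) _ _), fB_symm, fB_pow,
    dt_comm (x j) (x i), mul_comm (dt (x j) (x j))]
  simp only [smul_eq_mul]; ring
end fischer

end part1

section kiss
open Finset
local notation "E10" => EuclideanSpace ℝ (Fin 10)

noncomputable def ip (x y : E10) : ℝ := inner ℝ x y

def Adm (S : Finset E10) (A : ℝ) (B : ℝ → ℝ) (K : ℝ → ℝ → ℝ → ℝ) : Prop :=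
  0 ≤ (S.card : ℝ) * A + ∑ z ∈ S, ∑ x ∈ S.erase z, B (ip x z)
    + ∑ z ∈ S, ∑ x ∈ S.erase z, ∑ y ∈ (S.erase z).erase x, K (ip x z) (ip y z) (ip x y)

theorem Adm.add {S : Finset E10} {A A' : ℝ} {B B' : ℝ → ℝ} {K K' : ℝ → ℝ → ℝ → ℝ}
    (h : Adm S A B K) (h' : Adm S A' B' K') :
    Adm S (A + A') (fun u => B u + B' u) (fun u v t => K u v t + K' u v t) := by
  unfold Adm at *
  simp only [sum_add_distrib]
  linarith

theorem Adm.zero (S : Finset E10) : Adm S 0 (fun _ => 0) (fun _ _ _ => 0) := by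
  simp [Adm]

theorem Adm.smul {S : Finset E10} {A : ℝ} {B : ℝ → ℝ} {K : ℝ → ℝ → ℝ → ℝ} (c : ℝ) (hc : 0 ≤ c)
    (h : Adm S A B K) :
    Adm S (c * A) (fun u => c * B u) (fun u v t => c * K u v t) := by
  unfold Adm at *
  simp only [← mul_sum]
  have := mul_nonneg hc h
  linarith

theorem sum_split {ι : Type*} [DecidableEq ι] (T : Finset ι) (g : ι → ι → ℝ) :
    ∑ x ∈ T, ∑ y ∈ T, g x y = ∑ x ∈ T, g x x + ∑ x ∈ T, ∑ y ∈ T.erase x, g x y := by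
  rw [← sum_add_distrib]
  refine sum_congr rfl fun x hx => ?_
  rw [← add_sum_erase T _ hx]

theorem adm0 (S : Finset E10) (c : ℝ) (f : ℝ → ℝ) :
    Adm S (c * c) (fun u => 2 * c * f u + f u * f u) (fun u v _ => f u * f v) := by
  unfold Adm
  have h : ∀ z ∈ S, 0 ≤ c * c + ∑ x ∈ S.erase z, (2 * c * f (ip x z) + f (ip x z) * f (ip x z))
      + ∑ x ∈ S.erase z, ∑ y ∈ (S.erase z).erase x, f (ip x z) * f (ip y z) := by
    intro z _
    have h1 : 0 ≤ (c + ∑ x ∈ S.erase z, f (ip x z)) ^ 2 := sq_nonneg _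
    have h2 := sum_split (S.erase z) (fun x y => f (ip x z) * f (ip y z))
    rw [← sum_mul_sum] at h2
    rw [sum_add_distrib, ← mul_sum]
    nlinarith
  have := sum_nonneg h
  rw [sum_add_distrib, sum_add_distrib, sum_const, nsmul_eq_mul] at this
  exact this

theorem adm2 (S : Finset E10) (hnorm : ∀ x ∈ S, ‖x‖ = 1) (k : ℕ) :
    Adm S (gU 8 1 1 k) (fun u => gU 8 u 1 k) (fun _ _ _ => 0) := by
  have h := gU_psd (n := 10) (by norm_num) S (fun _ => 1) (fun x i => x i) k
  have hd : ∀ x y : E10, dt (fun i => x i) (fun i => y i) = ip x y := by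
    intro x y
    simp only [dt, ip, PiLp.inner_apply, RCLike.inner_apply, conj_trivial]
    exact sum_congr rfl fun i _ => mul_comm _ _
  simp only [hd] at h
  have h1 : ∀ x ∈ S, ip x x = 1 := fun x hx => by
    rw [ip, real_inner_self_eq_norm_sq, hnorm x hx]; norm_num
  have h2 : ∑ x ∈ S, ∑ y ∈ S, 1 * 1 * gU (10 - 2) (ip x y) (ip x x * ip y y) k
      = ∑ x ∈ S, ∑ y ∈ S, gU 8 (ip x y) 1 k := by
    refine sum_congr rfl fun x hx => sum_congr rfl fun y hy => ?_
    rw [h1 x hx, h1 y hy]; norm_num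
  rw [h2, sum_split] at h
  unfold Adm
  simp only [sum_const_zero, add_zero]
  refine h.trans_eq ?_
  congr 1
  · rw [sum_congr rfl fun x hx => by rw [h1 x hx], sum_const, nsmul_eq_mul]
  · refine sum_congr rfl fun x hx => sum_congr rfl fun y hy => ?_
    rw [ip, real_inner_comm]; rfl

theorem ortho_psd (z : E10) (hz : ‖z‖ = 1) (T : Finset E10) (hT : ∀ x ∈ T, ‖x‖ = 1) (f : E10 → ℝ) (k : ℕ) :
    0 ≤ ∑ x ∈ T, ∑ y ∈ T, f x * f y * gU 7 (ip x y - ip x z * ip y z)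
      ((1 - ip x z ^ 2) * (1 - ip y z ^ 2)) k := by
  have hz0 : z ≠ 0 := by intro h; rw [h, norm_zero] at hz; norm_num at hz
  have : Fact (Module.finrank ℝ E10 = 9 + 1) := ⟨by simp⟩
  have hfr : Module.finrank ℝ (Submodule.span ℝ {z})ᗮ = 9 :=
    Submodule.finrank_orthogonal_span_singleton hz0
  let b : OrthonormalBasis (Fin 9) ℝ (Submodule.span ℝ {z})ᗮ :=
    (stdOrthonormalBasis ℝ (Submodule.span ℝ {z})ᗮ).reindex (finCongr hfr)
  have hmem : ∀ x : E10, x - ip x z • z ∈ (Submodule.span ℝ {z})ᗮ := by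
    intro x
    rw [Submodule.mem_orthogonal_singleton_iff_inner_right, inner_sub_right, inner_smul_right,
      real_inner_self_eq_norm_sq, hz, ip, real_inner_comm]
    norm_num
  let p : E10 → (Fin 9 → ℝ) := fun x i => b.repr ⟨x - ip x z • z, hmem x⟩ i
  have hp : ∀ x y : E10, dt (p x) (p y) = ip x y - ip x z * ip y z := by
    intro x y
    have h1 := b.repr.inner_map_map ⟨x - ip x z • z, hmem x⟩ ⟨y - ip y z • z, hmem y⟩
    rw [PiLp.inner_apply] at h1
    simp only [RCLike.inner_apply, conj_trivial, Submodule.coe_inner] at h1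
    rw [inner_sub_left, inner_sub_right, inner_sub_right, inner_smul_left, inner_smul_right,
      inner_smul_left, inner_smul_right, real_inner_self_eq_norm_sq, hz, real_inner_comm y z] at h1
    simp only [conj_trivial] at h1
    have h2 : dt (p x) (p y) = ∑ i, (b.repr ⟨y - ip y z • z, hmem y⟩) i * (b.repr ⟨x - ip x z • z, hmem x⟩) i :=
      sum_congr rfl fun i _ => mul_comm _ _
    rw [h2, h1]
    simp only [ip]; ring
  have h := gU_psd (n := 9) (by norm_num) T f p k
  refine h.trans_eq ?_
  refine sum_congr rfl fun x hx => sum_congr rfl fun y hy => ?_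
  have h1 : ∀ x ∈ T, ip x x = 1 := fun x hx => by
    rw [ip, real_inner_self_eq_norm_sq, hT x hx]; norm_num
  rw [hp, hp, hp, h1 x hx, h1 y hy, pow_two, pow_two]

theorem adm1 (S : Finset E10) (hnorm : ∀ x ∈ S, ‖x‖ = 1) (f : ℝ → ℝ) (k : ℕ) :
    Adm S 0 (fun u => f u * f u * gU 7 (1 - u ^ 2) ((1 - u ^ 2) * (1 - u ^ 2)) k)
      (fun u v t => f u * f v * gU 7 (t - u * v) ((1 - u ^ 2) * (1 - v ^ 2)) k) := by
  unfold Adm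
  rw [mul_zero, zero_add, ← sum_add_distrib]
  refine sum_nonneg fun z hz => ?_
  have h := ortho_psd z (hnorm z hz) (S.erase z) (fun x hx => hnorm x (mem_of_mem_erase hx))
    (fun x => f (ip x z)) k
  rw [sum_split] at h
  refine h.trans_eq ?_
  congr 1
  refine sum_congr rfl fun x hx => ?_
  have : ip x x = 1 := by
    rw [ip, real_inner_self_eq_norm_sq, hnorm x (mem_of_mem_erase hx)]; norm_num
  simp only [this, pow_two]

theorem gram3 (x y z : E10) (hx : ‖x‖ = 1) (hy : ‖y‖ = 1) (hz : ‖z‖ = 1) :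
    0 ≤ 1 + 2 * ip x z * ip y z * ip x y - ip x z ^ 2 - ip y z ^ 2 - ip x y ^ 2 := by
  have h := real_inner_mul_inner_self_le (x - ip x z • z) (y - ip y z • z)
  have key : ∀ x y : E10, inner ℝ (x - ip x z • z) (y - ip y z • z) = ip x y - ip x z * ip y z := by
    intro x y
    rw [inner_sub_left, inner_sub_right, inner_sub_right, inner_smul_left, inner_smul_right,
      inner_smul_left, inner_smul_right, real_inner_self_eq_norm_sq, hz, real_inner_comm y z]
    simp only [conj_trivial, ip]
    ring
  have h1 : ∀ x : E10, ‖x‖ = 1 → ip x x = 1 := fun x hx => by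
    rw [ip, real_inner_self_eq_norm_sq, hx]; norm_num
  rw [key, key, key, h1 x hx, h1 y hy] at h
  nlinarith

theorem triple_perm (S : Finset E10) (g : E10 → E10 → E10 → ℝ) :
    ∑ z ∈ S, ∑ x ∈ S.erase z, ∑ y ∈ (S.erase z).erase x, g z x y
     = ∑ z ∈ S, ∑ x ∈ S.erase z, ∑ y ∈ (S.erase z).erase x, g x z y
    ∧ ∑ z ∈ S, ∑ x ∈ S.erase z, ∑ y ∈ (S.erase z).erase x, g z x y
     = ∑ z ∈ S, ∑ x ∈ S.erase z, ∑ y ∈ (S.erase z).erase x, g y z x := by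
  have h : ∀ g : E10 → E10 → E10 → ℝ,
      ∑ z ∈ S, ∑ x ∈ S.erase z, ∑ y ∈ (S.erase z).erase x, g z x y
      = ∑ z ∈ S, ∑ x ∈ S, ∑ y ∈ S, if (z ≠ x ∧ z ≠ y ∧ x ≠ y) then g z x y else 0 := by
    intro g
    refine sum_congr rfl fun z hz => ?_
    rw [← filter_ne, sum_filter]
    refine sum_congr rfl fun x hx => ?_
    by_cases hzx : z = x
    · simp [hzx]
    · simp only [ne_eq, hzx, not_false_eq_true, if_true, true_and]
      rw [← filter_ne, filter_filter, sum_filter]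
  have sw1 : ∀ g : E10 → E10 → E10 → ℝ,
      ∑ z ∈ S, ∑ x ∈ S.erase z, ∑ y ∈ (S.erase z).erase x, g z x y
      = ∑ z ∈ S, ∑ x ∈ S.erase z, ∑ y ∈ (S.erase z).erase x, g x z y := by
    intro g
    rw [h, h (fun z x y => g x z y), sum_comm]
    refine sum_congr rfl fun x _ => sum_congr rfl fun z _ => sum_congr rfl fun y _ => ?_
    refine if_congr ?_ rfl rfl
    tauto
  have sw2 : ∀ g : E10 → E10 → E10 → ℝ,
      ∑ z ∈ S, ∑ x ∈ S.erase z, ∑ y ∈ (S.erase z).erase x, g z x y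
      = ∑ z ∈ S, ∑ x ∈ S.erase z, ∑ y ∈ (S.erase z).erase x, g z y x := by
    intro g
    rw [h, h (fun z x y => g z y x)]
    refine sum_congr rfl fun z _ => ?_
    rw [sum_comm]
    refine sum_congr rfl fun x _ => sum_congr rfl fun y _ => ?_
    refine if_congr ?_ rfl rfl
    tauto
  exact ⟨sw1 g, by rw [sw1 g, sw2 (fun z x y => g x z y)]⟩

theorem kiss_bound (S : Finset E10) (hnorm : ∀ x ∈ S, ‖x‖ = 1)
    (hdist : ∀ x ∈ S, ∀ y ∈ S, x ≠ y → 1 ≤ dist x y)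
    (A : ℝ) (B : ℝ → ℝ) (K : ℝ → ℝ → ℝ → ℝ) (h : Adm S A B K) (b : ℝ)
    (hB : ∀ u, -1 ≤ u → u ≤ 1 / 2 → B u ≤ -b)
    (hK : ∀ u v t, -1 ≤ u → u ≤ 1 / 2 → -1 ≤ v → v ≤ 1 / 2 → -1 ≤ t → t ≤ 1 / 2 →
      0 ≤ 1 + 2 * u * v * t - u ^ 2 - v ^ 2 - t ^ 2 → K u v t + K u t v + K v t u ≤ 0) :
    (S.card : ℝ) * ((S.card - 1) * b) ≤ S.card * A := by
  have hip : ∀ x ∈ S, ∀ y ∈ S, x ≠ y → -1 ≤ ip x y ∧ ip x y ≤ 1 / 2 := by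
    intro x hx y hy hxy
    have h1 := hdist x hx y hy hxy
    rw [dist_eq_norm] at h1
    have h2 := norm_sub_sq_real x y
    rw [hnorm x hx, hnorm y hy] at h2
    have h3 := abs_real_inner_le_norm x y
    rw [hnorm x hx, hnorm y hy, abs_le] at h3
    unfold ip
    constructor
    · linarith [h3.1]
    · nlinarith
  have sy : ∀ x y : E10, ip x y = ip y x := fun x y => real_inner_comm _ _
  have hBs : ∑ z ∈ S, ∑ x ∈ S.erase z, B (ip x z) ≤ S.card * ((S.card - 1) * (-b)) := by
    rw [← nsmul_eq_mul]
    refine sum_le_card_nsmul _ _ _ fun z hz => ?_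
    have : ((S.card : ℝ) - 1) = (S.erase z).card := by
      rw [card_erase_of_mem hz, Nat.cast_sub (card_pos.mpr ⟨z, hz⟩)]; simp
    rw [this, ← nsmul_eq_mul]
    refine sum_le_card_nsmul _ _ _ fun x hx => ?_
    have := hip x (mem_of_mem_erase hx) z hz (ne_of_mem_erase hx)
    exact hB _ this.1 this.2
  obtain ⟨e1, e2⟩ := triple_perm S (fun z x y => K (ip x z) (ip y z) (ip x y))
  have hKs : ∑ z ∈ S, ∑ x ∈ S.erase z, ∑ y ∈ (S.erase z).erase x,
      (K (ip x z) (ip y z) (ip x y) + K (ip z x) (ip y x) (ip z y) + K (ip z y) (ip x y) (ip z x)) ≤ 0 := by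
    refine sum_nonpos fun z hz => sum_nonpos fun x hx => sum_nonpos fun y hy => ?_
    have hxz := ne_of_mem_erase hx
    have hyx := ne_of_mem_erase hy
    have hyz := ne_of_mem_erase (mem_of_mem_erase hy)
    have hx' := mem_of_mem_erase hx
    have hy' := mem_of_mem_erase (mem_of_mem_erase hy)
    have a1 := hip x hx' z hz hxz
    have a2 := hip y hy' z hz hyz
    have a3 := hip x hx' y hy' hyx.symm
    have := hK _ _ _ a1.1 a1.2 a2.1 a2.2 a3.1 a3.2 (gram3 x y z (hnorm x hx') (hnorm y hy') (hnorm z hz))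
    rw [sy z x, sy y x, sy z y]
    exact this
  simp only [sum_add_distrib] at hKs
  rw [← e1, ← e2] at hKs
  unfold Adm at h
  nlinarith
end kiss

section slots

/-- the `i`-th base `2^w` digit -/
def slot (w T i : ℕ) : ℕ := T / 2 ^ (w * i) % 2 ^ w

theorem slot_lt (w T i : ℕ) : slot w T i < 2 ^ w := Nat.mod_lt _ (by positivity)

theorem slot_shr (w T s i : ℕ) : slot w (T >>> (w * s)) i = slot w T (i + s) := by
  rw [slot, slot, Nat.shiftRight_eq_div_pow, Nat.div_div_eq_div_mul, ← pow_add]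
  congr 3; ring

theorem slot_shl_lo (w T s i : ℕ) (h : i < s) : slot w (T <<< (w * s)) i = 0 := by
  rw [slot, Nat.shiftLeft_eq]
  obtain ⟨k, rfl⟩ := Nat.exists_eq_add_of_lt h
  have : T * 2 ^ (w * (i + k + 1)) = (T * 2 ^ (w * k) * 2 ^ w) * 2 ^ (w * i) := by
    rw [mul_assoc, mul_assoc, ← pow_add, ← pow_add]; congr 2; ring
  rw [this, Nat.mul_div_cancel _ (by positivity), Nat.mul_mod_left]

theorem slot_shl_hi (w T s i : ℕ) : slot w (T <<< (w * s)) (i + s) = slot w T i := by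
  rw [slot, slot, Nat.shiftLeft_eq]
  have : 2 ^ (w * (i + s)) = 2 ^ (w * i) * 2 ^ (w * s) := by rw [← pow_add]; congr 1; ring
  rw [this, Nat.mul_div_mul_right _ _ (by positivity)]

theorem slot_shl (w T s i : ℕ) :
    slot w (T <<< (w * s)) i = if i < s then 0 else slot w T (i - s) := by
  split_ifs with h
  · exact slot_shl_lo w T s i h
  · obtain ⟨k, rfl⟩ := Nat.exists_eq_add_of_le (not_lt.mp h)
    rw [add_comm s k, slot_shl_hi, Nat.add_sub_cancel]

theorem slot_land (w T U i : ℕ) : slot w (T &&& U) i = slot w T i &&& slot w U i := by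
  refine Nat.eq_of_testBit_eq fun j => ?_
  simp only [slot, Nat.testBit_land, Nat.testBit_mod_two_pow, Nat.testBit_div_two_pow]
  by_cases h : j < w <;> simp [h]

theorem div_add_slots {w T U : ℕ} (h : ∀ i, slot w T i + slot w U i < 2 ^ w) (i : ℕ) :
    (T + U) / 2 ^ (w * i) = T / 2 ^ (w * i) + U / 2 ^ (w * i) := by
  induction i with
  | zero => simp
  | succ i ih =>
    have e : 2 ^ (w * (i + 1)) = 2 ^ (w * i) * 2 ^ w := by rw [← pow_add]; congr 1
    rw [e, ← Nat.div_div_eq_div_mul, ← Nat.div_div_eq_div_mul, ← Nat.div_div_eq_div_mul, ih,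
      Nat.add_div (by positivity), if_neg, add_zero]
    exact not_le.mpr (h i)

theorem slot_add {w T U : ℕ} (h : ∀ i, slot w T i + slot w U i < 2 ^ w) (i : ℕ) :
    slot w (T + U) i = slot w T i + slot w U i := by
  rw [slot, div_add_slots h, Nat.add_mod, ← slot, ← slot, Nat.mod_eq_of_lt (h i)]

theorem div_mul_slots {w T c : ℕ} (h : ∀ i, slot w T i * c < 2 ^ w) (i : ℕ) :
    (T * c) / 2 ^ (w * i) = T / 2 ^ (w * i) * c := by
  induction i with
  | zero => simp
  | succ i ih =>
    have e : 2 ^ (w * (i + 1)) = 2 ^ (w * i) * 2 ^ w := by rw [← pow_add]; congr 1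
    rw [e, ← Nat.div_div_eq_div_mul, ← Nat.div_div_eq_div_mul, ih]
    set X := T / 2 ^ (w * i) with hX
    have h1 := h i
    rw [slot, ← hX] at h1
    conv_lhs => rw [← Nat.div_add_mod X (2 ^ w)]
    rw [add_mul, mul_assoc, Nat.mul_add_div (by positivity), Nat.div_eq_of_lt h1, add_zero]

theorem slot_mul {w T c : ℕ} (h : ∀ i, slot w T i * c < 2 ^ w) (i : ℕ) :
    slot w (T * c) i = slot w T i * c := by
  rw [slot, div_mul_slots h, Nat.mul_mod]
  rcases Nat.eq_zero_or_pos (slot w T i) with h0 | h0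
  · rw [slot] at h0 ⊢; simp [h0]
  · have hc : c < 2 ^ w := lt_of_le_of_lt (Nat.le_mul_of_pos_left c h0) (h i)
    rw [Nat.mod_eq_of_lt hc, ← slot, Nat.mod_eq_of_lt (h i)]

theorem slot_shlk {w T k : ℕ} (h : ∀ i, slot w T i * 2 ^ k < 2 ^ w) (i : ℕ) :
    slot w (T <<< k) i = slot w T i * 2 ^ k := by
  rw [Nat.shiftLeft_eq, slot_mul h]

theorem slot_of_lt {w T N : ℕ} (h : T < 2 ^ (w * N)) {i : ℕ} (hi : N ≤ i) : slot w T i = 0 := by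
  rw [slot, Nat.div_eq_of_lt, Nat.zero_mod]
  exact lt_of_lt_of_le h (Nat.pow_le_pow_right (by norm_num) (Nat.mul_le_mul_left _ hi))

theorem slot_zero' (w T : ℕ) (h : T < 2 ^ w) : slot w T 0 = T := by
  simp [slot, Nat.mod_eq_of_lt h]

/-- `m` copies of `X`, at distance `s` slots -/
def rep (w s X : ℕ) : ℕ → ℕ
  | 0 => 0
  | m + 1 => X + (rep w s X m) <<< (w * s)

theorem slot_rep (w s X : ℕ) (hX : ∀ i, s ≤ i → slot w X i = 0) (m i : ℕ) :
    slot w (rep w s X m) i = if i < s * m then slot w X (i % s) else 0 := by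
  induction m generalizing i with
  | zero => simp [rep, slot]
  | succ m ih =>
    rw [rep, slot_add]
    · rw [slot_shl]
      split_ifs with h1 h2 h2
      · rw [Nat.mod_eq_of_lt h1, add_zero]
      · exact absurd (lt_of_lt_of_le h1 (by nlinarith)) h2
      · rw [hX i (not_lt.mp h1), zero_add, ih, if_pos]
        · conv_rhs => rw [← Nat.sub_add_cancel (not_lt.mp h1), Nat.add_mod_right]
        · rw [Nat.mul_succ] at h2; omega
      · rw [hX i (not_lt.mp h1), zero_add, ih, if_neg]
        rw [Nat.mul_succ] at h2; omega
    · intro j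
      rw [slot_shl]
      split_ifs with h1
      · simpa using slot_lt _ _ _
      · rw [hX j (not_lt.mp h1), zero_add]; exact slot_lt _ _ _

/-- `N` slots with value `c` -/
def cst (w N c : ℕ) : ℕ := c * ((2 ^ (w * N) - 1) / (2 ^ w - 1))

theorem ones_eq (w N : ℕ) (hw : 0 < w) : (2 ^ (w * N) - 1) / (2 ^ w - 1) = rep w 1 1 N := by
  have h2 : 1 < 2 ^ w := Nat.one_lt_two_pow (by omega)
  refine Nat.div_eq_of_eq_mul_right (by omega) ?_
  induction N with
  | zero => simp [rep]
  | succ N ih =>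
    have e : (2 ^ w - 1) * (1 + rep w 1 1 N * 2 ^ w) = (2 ^ w - 1) + (2 ^ w - 1) * rep w 1 1 N * 2 ^ w := by ring
    have e2 : 2 ^ (w * (N + 1)) = 2 ^ (w * N) * 2 ^ w := by rw [← pow_add]; congr 1
    rw [rep, Nat.shiftLeft_eq, mul_one, e, ← ih, Nat.sub_mul, one_mul, ← e2]
    have : 2 ^ w ≤ 2 ^ (w * (N + 1)) := Nat.pow_le_pow_right (by norm_num) (by nlinarith)
    omega

theorem slot_cst (w N c i : ℕ) (hc : c < 2 ^ w) : slot w (cst w N c) i = if i < N then c else 0 := by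
  rcases Nat.eq_zero_or_pos w with rfl | hw
  · have : c = 0 := by simpa using hc
    subst this; simp [cst, slot]
  have h1 : ∀ i, slot w (rep w 1 1 N) i = if i < N then 1 else 0 := by
    intro i
    have h2 : 1 < 2 ^ w := Nat.one_lt_two_pow (by omega)
    rw [slot_rep]
    · simp only [one_mul, Nat.mod_one]
      rw [slot_zero' w 1 h2]
    · intro i hi
      exact slot_of_lt (N := 1) (by simpa using h2) hi
  rw [cst, ones_eq w N hw, mul_comm, slot_mul]
  · rw [h1]; split_ifs <;> simp
  · intro j
    rw [h1]; split_ifs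
    · simpa using hc
    · simp

/-- `(T >>> k)` slotwise on the first `N` slots -/
def shk (w N k T : ℕ) : ℕ := (T >>> k) &&& cst w N (2 ^ (w - k) - 1)

theorem slot_shk (w N k T i : ℕ) (hk : k ≤ w) :
    slot w (shk w N k T) i = if i < N then slot w T i / 2 ^ k else 0 := by
  rw [shk, slot_land, slot_cst]
  · split_ifs with h
    · rw [Nat.and_two_pow_sub_one_eq_mod]
      refine Nat.eq_of_testBit_eq fun j => ?_
      simp only [slot, Nat.testBit_mod_two_pow, Nat.testBit_div_two_pow, Nat.testBit_shiftRight]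
      by_cases h1 : j < w - k
      · have h2 : j + k < w := by omega
        have h3 : j < w := by omega
        have h4 : k + (j + w * i) = j + k + w * i := by ring
        simp [h1, h2, h3, h4]
      · have h2 : ¬ j + k < w := by omega
        simp [h1, h2]
    · simp
  · have : 2 ^ (w - k) ≤ 2 ^ w := Nat.pow_le_pow_right (by norm_num) (by omega)
    have : 0 < 2 ^ (w - k) := by positivity
    omega

theorem slot_eq_zero {w : ℕ} (i : ℕ) : slot w 0 i = 0 := by simp [slot]

/-- mask: full slots exactly where the index on the axis of stride `s` is zero -/
def msk (w N n s : ℕ) : ℕ := rep w (s * n) (cst w s (2 ^ w - 1)) (N / (s * n))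

theorem slot_msk (w N n s i : ℕ) (hN : s * n ∣ N) (hn : 0 < n) :
    slot w (msk w N n s) i = if i < N ∧ i % (s * n) < s then 2 ^ w - 1 else 0 := by
  have hw : 2 ^ w - 1 < 2 ^ w := Nat.sub_lt (by positivity) (by norm_num)
  rw [msk, slot_rep, Nat.mul_div_cancel' hN]
  · rw [slot_cst _ _ _ _ hw]
    by_cases h1 : i < N <;> simp [h1]
  · intro j hj
    rw [slot_cst _ _ _ _ hw, if_neg]
    have : s ≤ s * n := Nat.le_mul_of_pos_right _ hn
    omega

end slots

section casteljau

def pw {R : Type} [Add R] (s : ℕ) : ℕ → (ℕ → R) → ℕ → R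
  | 0, f => f
  | t + 1, f => pw s t (fun i => f i + f (i + s))

theorem pw_shift {R : Type} [Add R] (s t c : ℕ) (f : ℕ → R) (i : ℕ) :
    pw s t (fun i => f (i + c)) i = pw s t f (i + c) := by
  induction t generalizing f with
  | zero => rfl
  | succ t ih =>
    simp only [pw]
    rw [← ih]
    congr 1; ext i; congr 2; ring

theorem pw_cast (s t : ℕ) (f : ℕ → ℕ) (i : ℕ) :
    ((pw s t f i : ℕ) : ℝ) = pw s t (fun i => (f i : ℝ)) i := by
  induction t generalizing f with
  | zero => rfl
  | succ t ih =>
    simp only [pw]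
    rw [ih]; congr 1; ext i; push_cast; rfl

theorem pw_bd (s t : ℕ) (f : ℕ → ℕ) (B : ℕ) (hf : ∀ i, f i ≤ B) (i : ℕ) : pw s t f i ≤ 2 ^ t * B := by
  induction t generalizing f B with
  | zero => simpa [pw] using hf i
  | succ t ih =>
    simp only [pw]
    refine (ih _ (2 * B) fun j => ?_).trans (le_of_eq (by ring))
    have := hf j; have := hf (j + s); omega

def cas : ℕ → (ℕ → ℝ) → ℝ → ℝ → ℝ
  | 0, f, _, _ => f 0
  | d + 1, f, x, y => y * cas d f x y + x * cas d (fun i => f (i + 1)) x y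

theorem cas_add (d : ℕ) (f g : ℕ → ℝ) (x y : ℝ) :
    cas d (fun i => f i + g i) x y = cas d f x y + cas d g x y := by
  induction d generalizing f g with
  | zero => rfl
  | succ d ih => simp only [cas]; rw [ih, ih]; ring

theorem cas_smul (d : ℕ) (c : ℝ) (f : ℕ → ℝ) (x y : ℝ) :
    cas d (fun i => c * f i) x y = c * cas d f x y := by
  induction d generalizing f with
  | zero => rfl
  | succ d ih => simp only [cas]; rw [ih, ih]; ring

theorem cas_scale (d : ℕ) (c : ℝ) (f : ℕ → ℝ) (x y : ℝ) :
    cas d f (c * x) (c * y) = c ^ d * cas d f x y := by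
  induction d generalizing f with
  | zero => simp [cas]
  | succ d ih => simp only [cas]; rw [ih, ih]; ring

theorem cas_mono (d : ℕ) (f g : ℕ → ℝ) (x y : ℝ) (hx : 0 ≤ x) (hy : 0 ≤ y)
    (h : ∀ i, i < d + 1 → f i ≤ g i) : cas d f x y ≤ cas d g x y := by
  induction d generalizing f g with
  | zero => exact h 0 (by norm_num)
  | succ d ih =>
    simp only [cas]
    have h1 := ih f g fun i hi => h i (by omega)
    have h2 := ih (fun i => f (i + 1)) (fun i => g (i + 1)) fun i hi => h (i + 1) (by omega)
    exact add_le_add (mul_le_mul_of_nonneg_left h1 hy) (mul_le_mul_of_nonneg_left h2 hx)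

theorem cas_congr (d : ℕ) (f g : ℕ → ℝ) (x y : ℝ)
    (h : ∀ i, i < d + 1 → f i = g i) : cas d f x y = cas d g x y := by
  induction d generalizing f g with
  | zero => exact h 0 (by norm_num)
  | succ d ih =>
    simp only [cas]
    rw [ih f g fun i hi => h i (by omega),
      ih (fun i => f (i + 1)) (fun i => g (i + 1)) fun i hi => h (i + 1) (by omega)]

theorem cas_sum (d : ℕ) (f : ℕ → ℝ) (x y : ℝ) :
    cas d f x y = ∑ j ∈ Finset.range (d + 1), (d.choose j : ℝ) * (x ^ j * y ^ (d - j)) * f j := by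
  induction d generalizing f with
  | zero => simp [cas]
  | succ d ih =>
    rw [cas, ih, ih, Finset.sum_range_succ' _ (d + 1)]
    have h1 : ∑ j ∈ Finset.range (d + 1), ((d + 1).choose (j + 1) : ℝ) * (x ^ (j + 1) * y ^ (d + 1 - (j + 1))) * f (j + 1)
      = x * ∑ j ∈ Finset.range (d + 1), (d.choose j : ℝ) * (x ^ j * y ^ (d - j)) * f (j + 1)
      + ∑ j ∈ Finset.range (d + 1), (d.choose (j + 1) : ℝ) * (x ^ (j + 1) * y ^ (d - j)) * f (j + 1) := by
      rw [Finset.mul_sum, ← Finset.sum_add_distrib]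
      refine Finset.sum_congr rfl fun j _ => ?_
      rw [Nat.choose_succ_succ, Nat.add_sub_add_right]; push_cast; ring
    rw [h1]
    have h2 : y * ∑ j ∈ Finset.range (d + 1), (d.choose j : ℝ) * (x ^ j * y ^ (d - j)) * f j
       = ∑ j ∈ Finset.range (d + 1), (d.choose (j + 1) : ℝ) * (x ^ (j + 1) * y ^ (d - j)) * f (j + 1) + y ^ (d + 1) * f 0 := by
      rw [Finset.sum_range_succ' _ d, Finset.sum_range_succ _ d, Nat.choose_succ_self, mul_add, Finset.mul_sum]
      have : ∀ j ∈ Finset.range d, y * ((d.choose (j + 1) : ℝ) * (x ^ (j + 1) * y ^ (d - (j + 1))) * f (j + 1))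
         = (d.choose (j + 1) : ℝ) * (x ^ (j + 1) * y ^ (d - j)) * f (j + 1) := by
        intro j hj
        have : d - j = (d - (j + 1)) + 1 := by have := Finset.mem_range.mp hj; omega
        rw [this, pow_succ]; ring
      rw [Finset.sum_congr rfl this]
      simp; ring
    rw [h2]
    simp; ring

theorem cas_one (d : ℕ) (c x y : ℝ) (h : x + y = 1) : cas d (fun _ => c) x y = c := by
  induction d with
  | zero => rfl
  | succ d ih => simp only [cas]; rw [ih, ← add_mul, add_comm y x, h, one_mul]

theorem cas_left (d : ℕ) (f : ℕ → ℝ) (x y : ℝ) :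
    cas d f x (2 * y + x) = cas d (fun j => 2 ^ (d - j) * pw 1 j f 0) x y := by
  induction d generalizing f with
  | zero => simp [cas, pw]
  | succ d ih =>
    simp only [cas]
    have h1 : cas d (fun j => 2 ^ (d + 1 - j) * pw 1 j f 0) x y = 2 * cas d f x (2 * y + x) := by
      rw [ih, ← cas_smul]
      refine cas_congr _ _ _ _ _ fun i hi => ?_
      have : d + 1 - i = (d - i) + 1 := by omega
      rw [this, pow_succ]; ring
    have h2 : cas d (fun i => 2 ^ (d + 1 - (i + 1)) * pw 1 (i + 1) f 0) x y
        = cas d f x (2 * y + x) + cas d (fun i => f (i + 1)) x (2 * y + x) := by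
      rw [← cas_add, ih]
      refine cas_congr _ _ _ _ _ fun i hi => ?_
      rw [Nat.add_sub_add_right, pw]
    rw [h1, h2]; ring

theorem cas_right (d : ℕ) (f : ℕ → ℝ) (x y : ℝ) :
    cas d f (2 * x + y) y = cas d (fun j => 2 ^ j * pw 1 (d - j) f j) x y := by
  induction d generalizing f with
  | zero => simp [cas, pw]
  | succ d ih =>
    simp only [cas]
    have h1 : cas d (fun j => 2 ^ j * pw 1 (d + 1 - j) f j) x y
        = cas d f (2 * x + y) y + cas d (fun i => f (i + 1)) (2 * x + y) y := by
      rw [← cas_add, ih]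
      refine cas_congr _ _ _ _ _ fun i hi => ?_
      have : d + 1 - i = (d - i) + 1 := by omega
      rw [this, pw]
    have h2 : cas d (fun i => 2 ^ (i + 1) * pw 1 (d + 1 - (i + 1)) f (i + 1)) x y
        = 2 * cas d (fun i => f (i + 1)) (2 * x + y) y := by
      rw [ih, ← cas_smul]
      refine cas_congr _ _ _ _ _ fun i hi => ?_
      rw [Nat.add_sub_add_right, pw_shift, pow_succ]; ring
    rw [h1, h2]; ring

/-- tensor Bernstein form with `A` axes -/
def val (d : ℕ) : ℕ → (ℕ → ℝ) → (ℕ → ℝ) → (ℕ → ℝ) → ℝ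
  | 0, f, _, _ => f 0
  | A + 1, f, x, y => cas d (fun j => val d A (fun i => f (i + j * (d + 1) ^ A)) x y) (x A) (y A)

variable (d : ℕ)

theorem val_add (A : ℕ) (f g : ℕ → ℝ) (x y : ℕ → ℝ) :
    val d A (fun i => f i + g i) x y = val d A f x y + val d A g x y := by
  induction A generalizing f g with
  | zero => rfl
  | succ A ih => simp only [val]; rw [← cas_add]; congr 1; ext j; rw [ih]

theorem val_smul (A : ℕ) (c : ℝ) (f : ℕ → ℝ) (x y : ℕ → ℝ) :
    val d A (fun i => c * f i) x y = c * val d A f x y := by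
  induction A generalizing f with
  | zero => rfl
  | succ A ih => simp only [val]; rw [← cas_smul]; congr 1; ext j; rw [ih]

theorem val_one (A : ℕ) (c : ℝ) (x y : ℕ → ℝ) (h : ∀ a, x a + y a = 1) :
    val d A (fun _ => c) x y = c := by
  induction A with
  | zero => rfl
  | succ A ih => simp only [val]; simp only [ih]; exact cas_one _ _ _ _ (h A)

theorem blk_lt {A i j : ℕ} (hi : i < (d + 1) ^ A) (hj : j < d + 1) :
    i + j * (d + 1) ^ A < (d + 1) ^ (A + 1) := by
  rw [pow_succ]; nlinarith

theorem val_mono (A : ℕ) (f g : ℕ → ℝ) (x y : ℕ → ℝ) (hx : ∀ a, 0 ≤ x a) (hy : ∀ a, 0 ≤ y a)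
    (h : ∀ i, i < (d + 1) ^ A → f i ≤ g i) : val d A f x y ≤ val d A g x y := by
  induction A generalizing f g with
  | zero => exact h 0 (by norm_num)
  | succ A ih =>
    simp only [val]
    refine cas_mono _ _ _ _ _ (hx A) (hy A) fun j hj => ih _ _ fun i hi => h _ (blk_lt d hi hj)

theorem val_pt (A : ℕ) (f : ℕ → ℝ) (x y x' y' : ℕ → ℝ) (h : ∀ a, a < A → x a = x' a ∧ y a = y' a) :
    val d A f x y = val d A f x' y' := by
  induction A generalizing f with
  | zero => rfl
  | succ A ih =>
    simp only [val]
    rw [(h A (by omega)).1, (h A (by omega)).2]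
    congr 1; ext j; exact ih _ fun a ha => h a (by omega)

theorem val_pw (A s t : ℕ) (f : ℕ → ℝ) (x y : ℕ → ℝ) (k : ℕ) :
    pw 1 t (fun j => val d A (fun i => f (i + j * s)) x y) k
      = val d A (fun i => pw s t f (i + k * s)) x y := by
  induction t generalizing f with
  | zero => rfl
  | succ t ih =>
    simp only [pw]
    rw [← ih]
    congr 1; ext j; rw [← val_add]; congr 1; ext i; congr 2; ring

theorem val_left {A a : ℕ} (ha : a < A) (f g : ℕ → ℝ) (xo yo x y : ℕ → ℝ)
    (hx : ∀ a, 0 ≤ x a) (hy : ∀ a, 0 ≤ y a)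
    (hb : ∀ b, b ≠ a → xo b = x b ∧ yo b = y b) (h1 : 2 * xo a = x a) (h2 : 2 * yo a = 2 * y a + x a)
    (hg : ∀ lo j hi, lo < (d + 1) ^ a → j < d + 1 → hi < (d + 1) ^ (A - 1 - a) →
      2 ^ (d - j) * pw ((d + 1) ^ a) j f (lo + (d + 1) ^ a * ((d + 1) * hi))
        ≤ g (lo + (d + 1) ^ a * (j + (d + 1) * hi))) :
    2 ^ d * val d A f xo yo ≤ val d A g x y := by
  induction A generalizing f g with
  | zero => omega
  | succ A ih =>
    simp only [val]
    rcases Nat.lt_succ_iff_lt_or_eq.mp ha with hlt | rfl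
    · rw [(hb A (by omega)).1, (hb A (by omega)).2, ← cas_smul]
      refine cas_mono _ _ _ _ _ (hx A) (hy A) fun k hk => ?_
      refine ih hlt _ _ fun lo j hi hlo hj hhi => ?_
      have e1 : (d + 1) ^ A = (d + 1) ^ a * ((d + 1) * (d + 1) ^ (A - 1 - a)) := by
        rw [← pow_succ', ← pow_add]; congr 1; omega
      have e2 : ∀ q, lo + (d + 1) ^ a * (q + (d + 1) * hi) + k * (d + 1) ^ A
          = lo + (d + 1) ^ a * (q + (d + 1) * (hi + k * (d + 1) ^ (A - 1 - a))) := by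
        intro q; rw [e1]; ring
      have e3 := e2 0
      rw [zero_add, zero_add] at e3
      rw [pw_shift, e2, e3]
      refine hg _ _ _ hlo hj ?_
      have : A + 1 - 1 - a = (A - 1 - a) + 1 := by omega
      rw [this]; exact blk_lt d hhi hk
    · rw [← cas_scale, h1, h2, cas_left]
      refine cas_mono _ _ _ _ _ (hx a) (hy a) fun j hj => ?_
      rw [val_pw, ← val_smul, val_pt d a _ xo yo x y (fun b hba => hb b (by omega))]
      refine val_mono _ _ _ _ _ _ hx hy fun i hi => ?_
      have := hg i j 0 hi hj (by positivity)
      simp only [mul_zero, add_zero, zero_mul] at this ⊢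
      rw [mul_comm j]; exact this

theorem val_right {A a : ℕ} (ha : a < A) (f g : ℕ → ℝ) (xo yo x y : ℕ → ℝ)
    (hx : ∀ a, 0 ≤ x a) (hy : ∀ a, 0 ≤ y a)
    (hb : ∀ b, b ≠ a → xo b = x b ∧ yo b = y b) (h1 : 2 * xo a = 2 * x a + y a) (h2 : 2 * yo a = y a)
    (hg : ∀ lo j hi, lo < (d + 1) ^ a → j < d + 1 → hi < (d + 1) ^ (A - 1 - a) →
      2 ^ j * pw ((d + 1) ^ a) (d - j) f (lo + (d + 1) ^ a * (j + (d + 1) * hi))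
        ≤ g (lo + (d + 1) ^ a * (j + (d + 1) * hi))) :
    2 ^ d * val d A f xo yo ≤ val d A g x y := by
  induction A generalizing f g with
  | zero => omega
  | succ A ih =>
    simp only [val]
    rcases Nat.lt_succ_iff_lt_or_eq.mp ha with hlt | rfl
    · rw [(hb A (by omega)).1, (hb A (by omega)).2, ← cas_smul]
      refine cas_mono _ _ _ _ _ (hx A) (hy A) fun k hk => ?_
      refine ih hlt _ _ fun lo j hi hlo hj hhi => ?_
      have e1 : (d + 1) ^ A = (d + 1) ^ a * ((d + 1) * (d + 1) ^ (A - 1 - a)) := by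
        rw [← pow_succ', ← pow_add]; congr 1; omega
      have e2 : ∀ q, lo + (d + 1) ^ a * (q + (d + 1) * hi) + k * (d + 1) ^ A
          = lo + (d + 1) ^ a * (q + (d + 1) * (hi + k * (d + 1) ^ (A - 1 - a))) := by
        intro q; rw [e1]; ring
      rw [pw_shift, e2]
      refine hg _ _ _ hlo hj ?_
      have : A + 1 - 1 - a = (A - 1 - a) + 1 := by omega
      rw [this]; exact blk_lt d hhi hk
    · rw [← cas_scale, h1, h2, cas_right]
      refine cas_mono _ _ _ _ _ (hx a) (hy a) fun j hj => ?_
      rw [val_pw, ← val_smul, val_pt d a _ xo yo x y (fun b hba => hb b (by omega))]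
      refine val_mono _ _ _ _ _ _ hx hy fun i hi => ?_
      have := hg i j 0 hi hj (by positivity)
      simp only [mul_zero, add_zero] at this ⊢
      rw [mul_comm j]; exact this

end casteljau

section splitting

def spL (w s M : ℕ) : ℕ → ℕ → ℕ
  | 0, W => W &&& M
  | k + 1, W => ((W &&& M) <<< (k + 1)) + (spL w s M k (W + W >>> (w * s))) <<< (w * s)

def spR (w s M : ℕ) : ℕ → ℕ → ℕ
  | 0, W => W &&& M
  | k + 1, W => ((W &&& (M <<< (w * (s * (k + 1))))) <<< (k + 1)) + spR w s M k (W + W >>> (w * s))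

theorem and_full {w a : ℕ} (h : a < 2 ^ w) : a &&& (2 ^ w - 1) = a := by
  rw [Nat.and_two_pow_sub_one_eq_mod, Nat.mod_eq_of_lt h]

theorem ix_exists (s n i : ℕ) (hs : 0 < s) (hn : 0 < n) :
    ∃ lo j hi, lo < s ∧ j < n ∧ i = lo + s * (j + n * hi) :=
  ⟨i % s, i / s % n, i / s / n, Nat.mod_lt _ hs, Nat.mod_lt _ hn, by
    rw [Nat.mod_add_div, Nat.mod_add_div]⟩

theorem ix_mod {s n lo j hi : ℕ} (hlo : lo < s) (hj : j < n) :
    (lo + s * (j + n * hi)) % (s * n) = lo + s * j := by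
  have : lo + s * (j + n * hi) = (lo + s * j) + s * n * hi := by ring
  rw [this, Nat.add_mul_mod_self_left, Nat.mod_eq_of_lt]; nlinarith

theorem ix_lt {s n H lo j hi : ℕ} (hlo : lo < s) (hj : j < n) :
    lo + s * (j + n * hi) < s * n * H ↔ hi < H := by
  constructor
  · intro h
    by_contra hc
    have : s * n * H ≤ s * n * hi := Nat.mul_le_mul_left _ (not_lt.mp hc)
    nlinarith
  · intro h
    have : s * n * (hi + 1) ≤ s * n * H := Nat.mul_le_mul_left _ h
    have : s * (j + 1) ≤ s * n := Nat.mul_le_mul_left _ hj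
    nlinarith

theorem slot_msk_ix {w n s H lo j hi : ℕ} (hlo : lo < s) (hj : j < n) :
    slot w (msk w (s * n * H) n s) (lo + s * (j + n * hi)) = if j = 0 ∧ hi < H then 2 ^ w - 1 else 0 := by
  rw [slot_msk _ _ _ _ _ (Dvd.intro _ rfl) (by omega), ix_mod hlo hj]
  simp only [ix_lt hlo hj]
  have : lo + s * j < s ↔ j = 0 := by
    constructor
    · intro h; by_contra hc
      have : s * 1 ≤ s * j := Nat.mul_le_mul_left _ (by omega)
      omega
    · rintro rfl; simpa using hlo
  simp only [this, and_comm]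

theorem slot_mskk_ix {w n s H lo j hi k : ℕ} (hlo : lo < s) (hj : j < n) (hk : k < n) :
    slot w (msk w (s * n * H) n s <<< (w * (s * k))) (lo + s * (j + n * hi))
      = if j = k ∧ hi < H then 2 ^ w - 1 else 0 := by
  rcases le_or_gt k j with h | h
  · obtain ⟨q, rfl⟩ := Nat.exists_eq_add_of_le h
    have : lo + s * (k + q + n * hi) = (lo + s * (q + n * hi)) + s * k := by ring
    rw [this, slot_shl_hi, slot_msk_ix hlo (by omega)]
    congr 1; simp
  · rw [if_neg (by omega)]
    rcases Nat.eq_zero_or_pos hi with rfl | hp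
    · apply slot_shl_lo
      have : s * (j + 1) ≤ s * k := Nat.mul_le_mul_left _ h
      nlinarith
    · obtain ⟨q, rfl⟩ := Nat.exists_eq_add_of_lt hp
      obtain ⟨r, hr⟩ : ∃ r, j + n = r + k := ⟨j + n - k, by omega⟩
      have : lo + s * (j + n * (0 + q + 1)) = (lo + s * (r + n * q)) + s * k := by
        have : j + n * (0 + q + 1) = r + n * q + k := by linear_combination hr
        rw [this]; ring
      rw [this, slot_shl_hi, slot_msk_ix hlo (by omega), if_neg (by omega)]

theorem step_slots {w s W B : ℕ} (hB : ∀ i, slot w W i ≤ B) (hw : 2 * B < 2 ^ w) (i : ℕ) :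
    slot w (W + W >>> (w * s)) i = slot w W i + slot w W (i + s) := by
  rw [slot_add, slot_shr]
  intro j; rw [slot_shr]
  have := hB j; have := hB (j + s); omega

theorem slot_spL {w s n H : ℕ} (hs : 0 < s) (k : ℕ) (hk : k < n) (W B : ℕ)
    (hB : ∀ i, slot w W i ≤ B) (hw : 2 ^ k * B < 2 ^ w) (lo j hi : ℕ) (hlo : lo < s) (hj : j < n) :
    slot w (spL w s (msk w (s * n * H) n s) k W) (lo + s * (j + n * hi))
      = if j ≤ k ∧ hi < H then 2 ^ (k - j) * pw s j (slot w W) (lo + s * (n * hi)) else 0 := by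
  induction k generalizing W B lo j hi with
  | zero =>
    rw [spL, slot_land, slot_msk_ix hlo hj]
    simp only [Nat.le_zero]
    split_ifs with h
    · rw [and_full (slot_lt _ _ _), h.1]; simp [pw]
    · simp
  | succ k ih =>
    have hBw : 2 * B < 2 ^ w := by
      refine lt_of_le_of_lt (Nat.mul_le_mul_right _ ?_) hw
      calc 2 = 2 ^ 1 := rfl
        _ ≤ _ := Nat.pow_le_pow_right (by norm_num) (by omega)
    have hst := fun i => step_slots (s := s) hB hBw i
    have ih' := fun lo j hi hlo hj => ih (by omega) (W + W >>> (w * s)) (2 * B)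
      (fun i => by rw [hst]; have := hB i; have := hB (i + s); omega)
      (lt_of_eq_of_lt (by ring) hw) lo j hi hlo hj
    set M := msk w (s * n * H) n s with hM
    have hand : ∀ lo j hi, lo < s → j < n → slot w (W &&& M) (lo + s * (j + n * hi))
        = if j = 0 ∧ hi < H then slot w W (lo + s * (j + n * hi)) else 0 := by
      intro lo j hi hlo hj
      rw [slot_land, hM, slot_msk_ix hlo hj]
      split_ifs with h
      · rw [and_full (slot_lt _ _ _)]
      · simp
    have h1 : ∀ i, slot w ((W &&& M) <<< (k + 1)) i = slot w (W &&& M) i * 2 ^ (k + 1) := by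
      refine slot_shlk fun i => ?_
      obtain ⟨lo, j, hi, a, b, rfl⟩ := ix_exists s n i hs (by omega)
      rw [hand _ _ _ a b]
      split_ifs
      · rw [mul_comm]; exact lt_of_le_of_lt (Nat.mul_le_mul_left _ (hB _)) hw
      · simp
    have h2 : ∀ lo j hi, lo < s → j < n →
        slot w (spL w s M k (W + W >>> (w * s)) <<< (w * s)) (lo + s * (j + n * hi))
        = if 1 ≤ j ∧ j ≤ k + 1 ∧ hi < H then 2 ^ (k + 1 - j) * pw s j (slot w W) (lo + s * (n * hi)) else 0 := by
      intro lo j hi hlo hj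
      rcases Nat.eq_zero_or_pos j with rfl | hjp
      · rw [if_neg (by omega)]
        rcases Nat.eq_zero_or_pos hi with rfl | hp
        · apply slot_shl_lo; simpa using hlo
        · obtain ⟨q, rfl⟩ := Nat.exists_eq_add_of_lt hp
          have : lo + s * (0 + n * (0 + q + 1)) = (lo + s * ((n - 1) + n * q)) + s := by
            obtain ⟨r, rfl⟩ := Nat.exists_eq_add_of_lt hj
            simp only [zero_add, Nat.add_sub_cancel]; ring
          rw [this, slot_shl_hi, ih' _ _ _ hlo (by omega), if_neg (by omega)]
      · obtain ⟨q, rfl⟩ := Nat.exists_eq_add_of_lt hjp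
        have : lo + s * (0 + q + 1 + n * hi) = (lo + s * (q + n * hi)) + s := by ring
        rw [this, slot_shl_hi, ih' _ _ _ hlo (by omega)]
        have e : (slot w (W + W >>> (w * s))) = fun i => slot w W i + slot w W (i + s) := funext hst
        rw [e]
        have c : (q ≤ k ∧ hi < H) ↔ (1 ≤ 0 + q + 1 ∧ 0 + q + 1 ≤ k + 1 ∧ hi < H) := by omega
        simp only [c, zero_add, Nat.add_sub_add_right, pw]
    rw [spL, slot_add, h1, hand _ _ _ hlo hj, h2 _ _ _ hlo hj]
    · rcases Nat.eq_zero_or_pos j with rfl | hjp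
      · simp only [true_and, zero_le, zero_add, pw]
        split_ifs <;> simp_all [mul_comm]
      · have : ¬ (j = 0 ∧ hi < H) := by omega
        rw [if_neg this, zero_mul, zero_add]
        have c : (1 ≤ j ∧ j ≤ k + 1 ∧ hi < H) ↔ (j ≤ k + 1 ∧ hi < H) := by omega
        simp only [c]
    · intro i
      obtain ⟨lo, j, hi, a, b, rfl⟩ := ix_exists s n i hs (by omega)
      rcases Nat.eq_zero_or_pos j with rfl | hjp
      · rw [h2 _ _ _ a b, if_neg (by omega), add_zero]; exact slot_lt _ _ _
      · rw [h1, hand _ _ _ a b, if_neg (by omega), zero_mul, zero_add]; exact slot_lt _ _ _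

theorem slot_spR {w s n H : ℕ} (hs : 0 < s) (k : ℕ) (hk : k < n) (W B : ℕ)
    (hB : ∀ i, slot w W i ≤ B) (hw : 2 ^ k * B < 2 ^ w) (lo j hi : ℕ) (hlo : lo < s) (hj : j < n) :
    slot w (spR w s (msk w (s * n * H) n s) k W) (lo + s * (j + n * hi))
      = if j ≤ k ∧ hi < H then 2 ^ j * pw s (k - j) (slot w W) (lo + s * (j + n * hi)) else 0 := by
  induction k generalizing W B lo j hi with
  | zero =>
    rw [spR, slot_land, slot_msk_ix hlo hj]
    simp only [Nat.le_zero]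
    split_ifs with h
    · rw [and_full (slot_lt _ _ _), h.1]; simp [pw]
    · simp
  | succ k ih =>
    have hBw : 2 * B < 2 ^ w := by
      refine lt_of_le_of_lt (Nat.mul_le_mul_right _ ?_) hw
      calc 2 = 2 ^ 1 := rfl
        _ ≤ _ := Nat.pow_le_pow_right (by norm_num) (by omega)
    have hst := fun i => step_slots (s := s) hB hBw i
    have ih' := fun lo j hi hlo hj => ih (by omega) (W + W >>> (w * s)) (2 * B)
      (fun i => by rw [hst]; have := hB i; have := hB (i + s); omega)
      (lt_of_eq_of_lt (by ring) hw) lo j hi hlo hj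
    set M := msk w (s * n * H) n s with hM
    set M' := M <<< (w * (s * (k + 1))) with hM'
    have hand : ∀ lo j hi, lo < s → j < n → slot w (W &&& M') (lo + s * (j + n * hi))
        = if j = k + 1 ∧ hi < H then slot w W (lo + s * (j + n * hi)) else 0 := by
      intro lo j hi hlo hj
      rw [slot_land, hM', hM, slot_mskk_ix hlo hj hk]
      split_ifs with h
      · rw [and_full (slot_lt _ _ _)]
      · simp
    have h1 : ∀ i, slot w ((W &&& M') <<< (k + 1)) i = slot w (W &&& M') i * 2 ^ (k + 1) := by
      refine slot_shlk fun i => ?_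
      obtain ⟨lo, j, hi, a, b, rfl⟩ := ix_exists s n i hs (by omega)
      rw [hand _ _ _ a b]
      split_ifs
      · rw [mul_comm]; exact lt_of_le_of_lt (Nat.mul_le_mul_left _ (hB _)) hw
      · simp
    rw [spR, slot_add, h1, hand _ _ _ hlo hj, ih' _ _ _ hlo hj]
    · have e : (slot w (W + W >>> (w * s))) = fun i => slot w W i + slot w W (i + s) := funext hst
      rw [e]
      by_cases hjk : j = k + 1
      · subst hjk
        rw [if_neg (c := k + 1 ≤ k ∧ hi < H) (by omega), add_zero]
        simp only [true_and, le_refl, Nat.sub_self, pw]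
        split_ifs <;> simp [mul_comm]
      · rw [if_neg (by omega), zero_mul, zero_add]
        have c : (j ≤ k ∧ hi < H) ↔ (j ≤ k + 1 ∧ hi < H) := by omega
        simp only [c]
        split_ifs with h
        · have : k + 1 - j = (k - j) + 1 := by omega
          rw [this, pw]
        · rfl
    · intro i
      obtain ⟨lo, j, hi, a, b, rfl⟩ := ix_exists s n i hs (by omega)
      by_cases hjk : j = k + 1
      · rw [ih' _ _ _ a b, if_neg (by omega), add_zero]; exact slot_lt _ _ _
      · rw [h1, hand _ _ _ a b, if_neg (by omega), zero_mul, zero_add]; exact slot_lt _ _ _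

/-- final rescaling, rounding up -/
def resc (w N d X : ℕ) : ℕ := shk w N d (X + cst w N (2 ^ d - 1))

theorem slot_resc {w N d X m : ℕ} (hX : ∀ i, slot w X i ≤ 2 ^ d * (2 ^ m - 1)) (hw : m + d ≤ w) (i : ℕ) :
    slot w (resc w N d X) i = if i < N then (slot w X i + (2 ^ d - 1)) / 2 ^ d else 0 := by
  have hd : 0 < 2 ^ d := by positivity
  have hm : 0 < 2 ^ m := by positivity
  have hdw : 2 ^ d * 2 ^ m ≤ 2 ^ w := by
    rw [← pow_add]; exact Nat.pow_le_pow_right (by norm_num) (by omega)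
  have hdw' : 2 ^ d ≤ 2 ^ w := Nat.pow_le_pow_right (by norm_num) (by omega)
  have hc := fun i => slot_cst w N (2 ^ d - 1) i (by omega)
  have hsum : ∀ i, slot w X i + slot w (cst w N (2 ^ d - 1)) i < 2 ^ w := by
    intro i
    have h1 : slot w (cst w N (2 ^ d - 1)) i ≤ 2 ^ d - 1 := by rw [hc]; split_ifs <;> omega
    have h2 := hX i
    rw [Nat.mul_sub, mul_one] at h2
    have : 2 ^ d * 1 ≤ 2 ^ d * 2 ^ m := Nat.mul_le_mul_left _ hm
    omega
  rw [resc, slot_shk _ _ _ _ _ (by omega)]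
  split_ifs with h
  · rw [slot_add hsum, hc, if_pos h]
  · rfl

def Bd (w m T : ℕ) : Prop := ∀ i, slot w T i < 2 ^ m

def nL (w d A a T : ℕ) : ℕ :=
  resc w ((d + 1) ^ A) d (spL w ((d + 1) ^ a) (msk w ((d + 1) ^ A) (d + 1) ((d + 1) ^ a)) d T)

def nR (w d A a T : ℕ) : ℕ :=
  resc w ((d + 1) ^ A) d (spR w ((d + 1) ^ a) (msk w ((d + 1) ^ A) (d + 1) ((d + 1) ^ a)) d T)

theorem pow_decomp (d : ℕ) {A a : ℕ} (ha : a < A) :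
    (d + 1) ^ A = (d + 1) ^ a * (d + 1) * (d + 1) ^ (A - 1 - a) := by
  rw [← pow_succ, ← pow_add]; congr 1; omega

theorem spL_bd {w d A a T m : ℕ} (ha : a < A) (hT : Bd w m T) (hw : m + d ≤ w) (i : ℕ) :
    slot w (spL w ((d + 1) ^ a) (msk w ((d + 1) ^ A) (d + 1) ((d + 1) ^ a)) d T) i
      ≤ 2 ^ d * (2 ^ m - 1) := by
  have hm : 0 < 2 ^ m := by positivity
  have hB : ∀ i, slot w T i ≤ 2 ^ m - 1 := fun i => by have := hT i; omega
  have hw' : 2 ^ d * (2 ^ m - 1) < 2 ^ w := by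
    have : 2 ^ d * 2 ^ m ≤ 2 ^ w := by
      rw [← pow_add]; exact Nat.pow_le_pow_right (by norm_num) (by omega)
    have : 0 < 2 ^ d := by positivity
    have : 2 ^ d * 1 ≤ 2 ^ d * 2 ^ m := Nat.mul_le_mul_left _ hm
    rw [Nat.mul_sub, mul_one]; omega
  obtain ⟨lo, j, hi, a1, b1, rfl⟩ := ix_exists ((d + 1) ^ a) (d + 1) i (by positivity) (by omega)
  rw [pow_decomp d ha, slot_spL (by positivity) d (by omega) T _ hB hw' _ _ _ a1 b1]
  split_ifs with h
  · calc _ ≤ 2 ^ (d - j) * (2 ^ j * (2 ^ m - 1)) := Nat.mul_le_mul_left _ (pw_bd _ _ _ _ hB _)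
      _ = _ := by rw [← mul_assoc, ← pow_add]; congr 2; omega
  · omega

theorem spR_bd {w d A a T m : ℕ} (ha : a < A) (hT : Bd w m T) (hw : m + d ≤ w) (i : ℕ) :
    slot w (spR w ((d + 1) ^ a) (msk w ((d + 1) ^ A) (d + 1) ((d + 1) ^ a)) d T) i
      ≤ 2 ^ d * (2 ^ m - 1) := by
  have hm : 0 < 2 ^ m := by positivity
  have hB : ∀ i, slot w T i ≤ 2 ^ m - 1 := fun i => by have := hT i; omega
  have hw' : 2 ^ d * (2 ^ m - 1) < 2 ^ w := by
    have : 2 ^ d * 2 ^ m ≤ 2 ^ w := by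
      rw [← pow_add]; exact Nat.pow_le_pow_right (by norm_num) (by omega)
    have : 0 < 2 ^ d := by positivity
    have : 2 ^ d * 1 ≤ 2 ^ d * 2 ^ m := Nat.mul_le_mul_left _ hm
    rw [Nat.mul_sub, mul_one]; omega
  obtain ⟨lo, j, hi, a1, b1, rfl⟩ := ix_exists ((d + 1) ^ a) (d + 1) i (by positivity) (by omega)
  rw [pow_decomp d ha, slot_spR (by positivity) d (by omega) T _ hB hw' _ _ _ a1 b1]
  split_ifs with h
  · calc _ ≤ 2 ^ j * (2 ^ (d - j) * (2 ^ m - 1)) := Nat.mul_le_mul_left _ (pw_bd _ _ _ _ hB _)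
      _ = _ := by rw [← mul_assoc, ← pow_add]; congr 2; omega
  · omega

theorem resc_Bd {w N d X m : ℕ} (hX : ∀ i, slot w X i ≤ 2 ^ d * (2 ^ m - 1)) (hw : m + d ≤ w) :
    Bd w m (resc w N d X) := by
  intro i
  have hm : 0 < 2 ^ m := by positivity
  have hd : 0 < 2 ^ d := by positivity
  rw [slot_resc hX hw]
  split_ifs with h
  · rw [Nat.div_lt_iff_lt_mul hd]
    have := hX i
    rw [Nat.mul_sub, mul_one] at this
    have : 2 ^ d * 1 ≤ 2 ^ d * 2 ^ m := Nat.mul_le_mul_left _ hm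
    rw [mul_comm (2 ^ m)]; omega
  · exact hm

theorem le_ceil (a b : ℕ) (hb : 0 < b) : a ≤ b * ((a + (b - 1)) / b) := by
  have h1 := Nat.div_add_mod (a + (b - 1)) b
  have h2 := Nat.mod_lt (a + (b - 1)) hb
  omega

def nv (w d A T : ℕ) (x y : ℕ → ℝ) : ℝ := val d A (fun i => (slot w T i : ℝ)) x y

theorem nL_val {w d A a T m : ℕ} (ha : a < A) (hT : Bd w m T) (hw : m + d ≤ w) (xo yo x y : ℕ → ℝ)
    (hx : ∀ a, 0 ≤ x a) (hy : ∀ a, 0 ≤ y a)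
    (hb : ∀ b, b ≠ a → xo b = x b ∧ yo b = y b) (h1 : 2 * xo a = x a) (h2 : 2 * yo a = 2 * y a + x a) :
    nv w d A T xo yo ≤ nv w d A (nL w d A a T) x y := by
  have hm : 0 < 2 ^ m := by positivity
  have hB : ∀ i, slot w T i ≤ 2 ^ m - 1 := fun i => by have := hT i; omega
  have hw' : 2 ^ d * (2 ^ m - 1) < 2 ^ w := by
    have : 2 ^ d * 2 ^ m ≤ 2 ^ w := by
      rw [← pow_add]; exact Nat.pow_le_pow_right (by norm_num) (by omega)
    have : 0 < 2 ^ d := by positivity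
    have : 2 ^ d * 1 ≤ 2 ^ d * 2 ^ m := Nat.mul_le_mul_left _ hm
    rw [Nat.mul_sub, mul_one]; omega
  have key := val_left d ha (fun i => (slot w T i : ℝ)) (fun i => 2 ^ d * (slot w (nL w d A a T) i : ℝ))
    xo yo x y hx hy hb h1 h2 ?_
  · rw [val_smul] at key
    exact le_of_mul_le_mul_left key (by positivity)
  · intro lo j hi hlo hj hhi
    rw [nL, slot_resc (spL_bd ha hT hw) hw, if_pos (by rw [pow_decomp d ha, ix_lt hlo hj]; exact hhi)]
    have h := le_ceil (slot w (spL w ((d + 1) ^ a) (msk w ((d + 1) ^ A) (d + 1) ((d + 1) ^ a)) d T) (lo + (d + 1) ^ a * (j + (d + 1) * hi))) (2 ^ d) (by positivity)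
    conv_lhs at h => rw [pow_decomp d ha, slot_spL (by positivity) d (by omega) T _ hB hw' _ _ _ hlo hj,
      if_pos ⟨by omega, hhi⟩]
    have h' : ((_ : ℕ) : ℝ) ≤ ((_ : ℕ) : ℝ) := Nat.cast_le.mpr h
    rw [Nat.cast_mul, pw_cast, Nat.cast_mul] at h'
    simpa only [Nat.cast_pow, Nat.cast_ofNat] using h'

theorem nR_val {w d A a T m : ℕ} (ha : a < A) (hT : Bd w m T) (hw : m + d ≤ w) (xo yo x y : ℕ → ℝ)
    (hx : ∀ a, 0 ≤ x a) (hy : ∀ a, 0 ≤ y a)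
    (hb : ∀ b, b ≠ a → xo b = x b ∧ yo b = y b) (h1 : 2 * xo a = 2 * x a + y a) (h2 : 2 * yo a = y a) :
    nv w d A T xo yo ≤ nv w d A (nR w d A a T) x y := by
  have hm : 0 < 2 ^ m := by positivity
  have hB : ∀ i, slot w T i ≤ 2 ^ m - 1 := fun i => by have := hT i; omega
  have hw' : 2 ^ d * (2 ^ m - 1) < 2 ^ w := by
    have : 2 ^ d * 2 ^ m ≤ 2 ^ w := by
      rw [← pow_add]; exact Nat.pow_le_pow_right (by norm_num) (by omega)
    have : 0 < 2 ^ d := by positivity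
    have : 2 ^ d * 1 ≤ 2 ^ d * 2 ^ m := Nat.mul_le_mul_left _ hm
    rw [Nat.mul_sub, mul_one]; omega
  have key := val_right d ha (fun i => (slot w T i : ℝ)) (fun i => 2 ^ d * (slot w (nR w d A a T) i : ℝ))
    xo yo x y hx hy hb h1 h2 ?_
  · rw [val_smul] at key
    exact le_of_mul_le_mul_left key (by positivity)
  · intro lo j hi hlo hj hhi
    rw [nR, slot_resc (spR_bd ha hT hw) hw, if_pos (by rw [pow_decomp d ha, ix_lt hlo hj]; exact hhi)]
    have h := le_ceil (slot w (spR w ((d + 1) ^ a) (msk w ((d + 1) ^ A) (d + 1) ((d + 1) ^ a)) d T) (lo + (d + 1) ^ a * (j + (d + 1) * hi))) (2 ^ d) (by positivity)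
    conv_lhs at h => rw [pow_decomp d ha, slot_spR (by positivity) d (by omega) T _ hB hw' _ _ _ hlo hj,
      if_pos ⟨by omega, hhi⟩]
    have h' : ((_ : ℕ) : ℝ) ≤ ((_ : ℕ) : ℝ) := Nat.cast_le.mpr h
    rw [Nat.cast_mul, pw_cast, Nat.cast_mul] at h'
    simpa only [Nat.cast_pow, Nat.cast_ofNat] using h'

/-- all the (first `N`) slots are `< 2^m` -/
def bdChk (w N m T : ℕ) : Bool := Nat.beq (shk w N m T) 0

theorem bdChk_lt {w N m T : ℕ} (hm : m ≤ w) (h : bdChk w N m T = true) (i : ℕ) (hi : i < N) :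
    slot w T i < 2 ^ m := by
  have h0 : shk w N m T = 0 := Nat.eq_of_beq_eq_true h
  have := slot_shk w N m T i hm
  rw [h0, slot_eq_zero, if_pos hi] at this
  exact (Nat.div_eq_zero_iff_lt (by positivity)).mp this.symm

/-- position of a box in the root box; coordinate `a` is `c + 2^e * x` -/
structure Pos where
  c0 : ℕ
  e0 : ℕ
  c1 : ℕ
  e1 : ℕ
  c2 : ℕ
  e2 : ℕ

def Pos.left (p : Pos) : ℕ → Pos
  | 0 => ⟨p.c0, p.e0 - 1, p.c1, p.e1, p.c2, p.e2⟩
  | 1 => ⟨p.c0, p.e0, p.c1, p.e1 - 1, p.c2, p.e2⟩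
  | _ => ⟨p.c0, p.e0, p.c1, p.e1, p.c2, p.e2 - 1⟩

def Pos.right (p : Pos) : ℕ → Pos
  | 0 => ⟨p.c0 + 2 ^ (p.e0 - 1), p.e0 - 1, p.c1, p.e1, p.c2, p.e2⟩
  | 1 => ⟨p.c0, p.e0, p.c1 + 2 ^ (p.e1 - 1), p.e1 - 1, p.c2, p.e2⟩
  | _ => ⟨p.c0, p.e0, p.c1, p.e1, p.c2 + 2 ^ (p.e2 - 1), p.e2 - 1⟩

def Pos.ok (p : Pos) : ℕ → Bool
  | 0 => Nat.ble 1 p.e0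
  | 1 => Nat.ble 1 p.e1
  | _ => Nat.ble 1 p.e2

def Pos.skip (p : Pos) : Bool :=
  Nat.ble (p.c1 + 2 ^ p.e1) p.c0 || Nat.ble (p.c2 + 2 ^ p.e2) p.c1 || Nat.ble (p.c2 + 2 ^ p.e2) p.c0

/-- the point lies in the ordered region -/
structure Pos.Ord (p : Pos) (x : ℕ → ℝ) : Prop where
  h01 : (p.c0 : ℝ) + 2 ^ p.e0 * x 0 ≤ p.c1 + 2 ^ p.e1 * x 1
  h12 : (p.c1 : ℝ) + 2 ^ p.e1 * x 1 ≤ p.c2 + 2 ^ p.e2 * x 2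
  p0 : 0 < p.c0 → 0 < x 0
  p1 : 0 < p.c1 → 0 < x 1
  p2 : 0 < p.c2 → 0 < x 2

theorem Pos.Ord.left {p : Pos} {x xn : ℕ → ℝ} {a : ℕ} (ha : a < 3) (h : p.Ord x) (hk : p.ok a = true)
    (h1 : ∀ b, b ≠ a → x b = xn b) (h2 : 2 * x a = xn a) : (p.left a).Ord xn := by
  obtain ⟨q1, q2, q3, q4, q5⟩ := h
  interval_cases a
  · have hk : 1 ≤ p.e0 := Nat.le_of_ble_eq_true hk
    obtain ⟨e, he⟩ := Nat.exists_eq_add_of_le' hk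
    rw [he, pow_succ] at q1
    rw [h1 1 (by omega)] at q1 q2 q4
    rw [h1 2 (by omega)] at q2 q5
    refine ⟨?_, q2, fun z => ?_, q4, q5⟩
    · simp only [Pos.left, he, Nat.add_sub_cancel, ← h2]; linarith
    · have := q3 z; linarith
  · have hk : 1 ≤ p.e1 := Nat.le_of_ble_eq_true hk
    obtain ⟨e, he⟩ := Nat.exists_eq_add_of_le' hk
    rw [he, pow_succ] at q1 q2
    rw [h1 0 (by omega)] at q1 q3
    rw [h1 2 (by omega)] at q2 q5
    refine ⟨?_, ?_, q3, fun z => ?_, q5⟩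
    · simp only [Pos.left, he, Nat.add_sub_cancel, ← h2]; linarith
    · simp only [Pos.left, he, Nat.add_sub_cancel, ← h2]; linarith
    · have := q4 z; linarith
  · have hk : 1 ≤ p.e2 := Nat.le_of_ble_eq_true hk
    obtain ⟨e, he⟩ := Nat.exists_eq_add_of_le' hk
    rw [he, pow_succ] at q2
    rw [h1 0 (by omega)] at q1 q3
    rw [h1 1 (by omega)] at q1 q2 q4
    refine ⟨q1, ?_, q3, q4, fun z => ?_⟩
    · simp only [Pos.left, he, Nat.add_sub_cancel, ← h2]; linarith
    · have := q5 z; linarith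

theorem Pos.Ord.right {p : Pos} {x xn : ℕ → ℝ} {a : ℕ} (ha : a < 3) (h : p.Ord x) (hk : p.ok a = true)
    (h1 : ∀ b, b ≠ a → x b = xn b) (h2 : 2 * x a = xn a + 1) (h3 : 0 < xn a) : (p.right a).Ord xn := by
  obtain ⟨q1, q2, q3, q4, q5⟩ := h
  interval_cases a
  · have hk : 1 ≤ p.e0 := Nat.le_of_ble_eq_true hk
    obtain ⟨e, he⟩ := Nat.exists_eq_add_of_le' hk
    rw [he, pow_succ, mul_assoc, h2] at q1
    rw [h1 1 (by omega)] at q1 q2 q4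
    rw [h1 2 (by omega)] at q2 q5
    refine ⟨?_, q2, fun z => h3, q4, q5⟩
    simp only [Pos.right, he, Nat.add_sub_cancel]; push_cast; linarith
  · have hk : 1 ≤ p.e1 := Nat.le_of_ble_eq_true hk
    obtain ⟨e, he⟩ := Nat.exists_eq_add_of_le' hk
    rw [he, pow_succ, mul_assoc, h2] at q1 q2
    rw [h1 0 (by omega)] at q1 q3
    rw [h1 2 (by omega)] at q2 q5
    refine ⟨?_, ?_, q3, fun z => h3, q5⟩
    · simp only [Pos.right, he, Nat.add_sub_cancel]; push_cast; linarith
    · simp only [Pos.right, he, Nat.add_sub_cancel]; push_cast; linarith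
  · have hk : 1 ≤ p.e2 := Nat.le_of_ble_eq_true hk
    obtain ⟨e, he⟩ := Nat.exists_eq_add_of_le' hk
    rw [he, pow_succ, mul_assoc, h2] at q2
    rw [h1 0 (by omega)] at q1 q3
    rw [h1 1 (by omega)] at q1 q2 q4
    refine ⟨q1, ?_, q3, q4, fun z => h3⟩
    simp only [Pos.right, he, Nat.add_sub_cancel]; push_cast; linarith

theorem Pos.Ord.no {p : Pos} {x : ℕ → ℝ} (h : p.Ord x) (hs : p.skip = true) (hx : ∀ a, x a ≤ 1) : False := by
  obtain ⟨q1, q2, q3, q4, q5⟩ := h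
  have aux : ∀ (c e c' e' : ℕ) (s s' : ℝ), c' + 2 ^ e' ≤ c → (0 < c → 0 < s) → s' ≤ 1 →
      (c' : ℝ) + 2 ^ e' * s' < c + 2 ^ e * s := by
    intro c e c' e' s s' h1 h2 h3
    have hp : 0 < 2 ^ e' := by positivity
    have h4 : (0:ℝ) < 2 ^ e * s := mul_pos (by positivity) (h2 (by omega))
    have h5 : (2:ℝ) ^ e' * s' ≤ 2 ^ e' * 1 := mul_le_mul_of_nonneg_left h3 (by positivity)
    have h6 : ((c' + 2 ^ e' : ℕ) : ℝ) ≤ c := by exact_mod_cast h1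
    push_cast at h6; linarith
  rw [Pos.skip, Bool.or_eq_true, Bool.or_eq_true] at hs
  rcases hs with (hs | hs) | hs
  · have := aux p.c0 p.e0 _ _ (x 0) (x 1) (Nat.le_of_ble_eq_true hs) q3 (hx 1); linarith
  · have := aux p.c1 p.e1 _ _ (x 1) (x 2) (Nat.le_of_ble_eq_true hs) q4 (hx 2); linarith
  · have := aux p.c0 p.e0 _ _ (x 0) (x 2) (Nat.le_of_ble_eq_true hs) q3 (hx 2); linarith

/-- the main semantic statement -/
def Good (w d A m md T off D offD : ℕ) (p : Pos) : Prop :=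
  Bd w m T → Bd w md D → ∀ x y : ℕ → ℝ, (∀ a, 0 ≤ x a) → (∀ a, 0 ≤ y a) → (∀ a, x a + y a = 1) → p.Ord x →
    (offD : ℝ) ≤ nv w d A D x y → nv w d A T x y ≤ off

theorem Good.split {w d A m md T off D offD : ℕ} {p : Pos} (hw : m + d ≤ w) (hw' : md + d ≤ w) (a : ℕ) (ha : a < A) (ha3 : a < 3) (hk : p.ok a = true)
    (h1 : Good w d A m md (nL w d A a T) off (nL w d A a D) offD (p.left a))
    (h2 : Good w d A m md (nR w d A a T) off (nR w d A a D) offD (p.right a)) : Good w d A m md T off D offD p := by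
  intro hT hD x y hx hy hxy hord hDx
  rcases le_or_gt (x a) (1 / 2) with h | h
  · set xn : ℕ → ℝ := fun b => if b = a then 2 * x a else x b with hxn
    set yn : ℕ → ℝ := fun b => if b = a then 1 - 2 * x a else y b with hyn
    have e0 : ∀ b, 0 ≤ xn b := by
      intro b; simp only [hxn]; split_ifs; linarith [hx a]; exact hx b
    have e1 : ∀ b, 0 ≤ yn b := by
      intro b; simp only [hyn]; split_ifs; linarith [hx a]; exact hy b
    have e2 : ∀ b, xn b + yn b = 1 := by
      intro b; simp only [hxn, hyn]; split_ifs; ring; exact hxy b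
    have e3 : ∀ b, b ≠ a → x b = xn b ∧ y b = yn b := by
      intro b hb; simp [hxn, hyn, hb]
    have e4 : 2 * x a = xn a := by simp [hxn]
    have e5 : 2 * y a = 2 * yn a + xn a := by simp [hxn, hyn]; linarith [hxy a]
    exact (nL_val ha hT hw x y xn yn e0 e1 e3 e4 e5).trans
      (h1 (resc_Bd (spL_bd ha hT hw) hw) (resc_Bd (spL_bd ha hD hw') hw') xn yn e0 e1 e2
        (hord.left ha3 hk (fun b hb => (e3 b hb).1) e4) (hDx.trans (nL_val ha hD hw' x y xn yn e0 e1 e3 e4 e5)))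
  · set xn : ℕ → ℝ := fun b => if b = a then 2 * x a - 1 else x b with hxn
    set yn : ℕ → ℝ := fun b => if b = a then 2 * y a else y b with hyn
    have e0 : ∀ b, 0 ≤ xn b := by
      intro b; simp only [hxn]; split_ifs; linarith [hx a]; exact hx b
    have e1 : ∀ b, 0 ≤ yn b := by
      intro b; simp only [hyn]; split_ifs; linarith [hy a]; exact hy b
    have e2 : ∀ b, xn b + yn b = 1 := by
      intro b; simp only [hxn, hyn]; split_ifs; linarith [hxy a]; exact hxy b
    have e3 : ∀ b, b ≠ a → x b = xn b ∧ y b = yn b := by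
      intro b hb; simp [hxn, hyn, hb]
    have e4 : 2 * x a = 2 * xn a + yn a := by simp [hxn, hyn]; linarith [hxy a]
    have e5 : 2 * y a = yn a := by simp [hyn]
    exact (nR_val ha hT hw x y xn yn e0 e1 e3 e4 e5).trans
      (h2 (resc_Bd (spR_bd ha hT hw) hw) (resc_Bd (spR_bd ha hD hw') hw') xn yn e0 e1 e2
        (hord.right ha3 hk (fun b hb => (e3 b hb).1) (by simp [hxn]) (by simp [hxn]; linarith)) (hDx.trans (nR_val ha hD hw' x y xn yn e0 e1 e3 e4 e5)))

inductive Tr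
  | Z : Tr
  | S : Tr
  | G : ℕ → Tr
  | A : Tr → Tr → Tr
  | B : Tr → Tr → Tr
  | C : Tr → Tr → Tr

/-- all slots are `≤ off`, provided they are `< 2^m` -/
def lfChk (w N m off T : ℕ) : Bool :=
  Nat.ble off (2 ^ m - 1) && bdChk w N m (T + cst w N (2 ^ m - 1 - off))

def chk (w d A m md : ℕ) : Tr → ℕ → ℕ → ℕ → ℕ → Pos → Bool
  | .S, _, _, _, _, p => p.skip
  | .Z, T, off, _, _, _ => lfChk w ((d + 1) ^ A) m off T
  | .G g, T, off, D, offD, _ => Nat.ble (g * 2 ^ md + 2 ^ m) (2 ^ w) &&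
      bdChk w ((d + 1) ^ A) m (T + D * g) && lfChk w ((d + 1) ^ A) m (off + g * offD) (T + D * g)
  | .A l r, T, off, D, offD, p => (Nat.blt 0 A && p.ok 0) &&
      chk w d A m md l (nL w d A 0 T) off (nL w d A 0 D) offD (p.left 0) &&
      chk w d A m md r (nR w d A 0 T) off (nR w d A 0 D) offD (p.right 0)
  | .B l r, T, off, D, offD, p => (Nat.blt 1 A && p.ok 1) &&
      chk w d A m md l (nL w d A 1 T) off (nL w d A 1 D) offD (p.left 1) &&
      chk w d A m md r (nR w d A 1 T) off (nR w d A 1 D) offD (p.right 1)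
  | .C l r, T, off, D, offD, p => (Nat.blt 2 A && p.ok 2) &&
      chk w d A m md l (nL w d A 2 T) off (nL w d A 2 D) offD (p.left 2) &&
      chk w d A m md r (nR w d A 2 T) off (nR w d A 2 D) offD (p.right 2)

theorem lfChk_le {w N m off T : ℕ} (hm : m < w) (hT' : ∀ i, slot w T i + 2 ^ m ≤ 2 ^ w)
    (h : lfChk w N m off T = true) (i : ℕ) (hi : i < N) : slot w T i ≤ off := by
  rw [lfChk, Bool.and_eq_true] at h
  have h0 : off ≤ 2 ^ m - 1 := Nat.le_of_ble_eq_true h.1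
  have hm0 : 0 < 2 ^ m := by positivity
  have hmw : 2 ^ m < 2 ^ w := Nat.pow_lt_pow_right (by norm_num) hm
  have h1 := bdChk_lt hm.le h.2 i hi
  rw [slot_add, slot_cst _ _ _ _ (by omega), if_pos hi] at h1
  · omega
  · intro j
    rw [slot_cst _ _ _ _ (by omega)]
    have := hT' j
    split_ifs <;> omega

theorem val_le_of_slots {w d A off T : ℕ} (h : ∀ i, i < (d + 1) ^ A → slot w T i ≤ off) (x y : ℕ → ℝ)
    (hx : ∀ a, 0 ≤ x a) (hy : ∀ a, 0 ≤ y a) (hxy : ∀ a, x a + y a = 1) : nv w d A T x y ≤ off := by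
  rw [← val_one d A (off : ℝ) x y hxy]
  exact val_mono _ _ _ _ _ _ hx hy fun i hi => by exact_mod_cast h i hi

theorem chk_good {w d A m md : ℕ} (hw : m + d ≤ w) (hw' : md + d ≤ w) (hm : m < w) (t : Tr) :
    ∀ (T off D offD : ℕ) (p : Pos), chk w d A m md t T off D offD p = true → Good w d A m md T off D offD p := by
  have hpw : 2 ^ m + 2 ^ m ≤ 2 ^ w := by
    rw [← two_mul, ← pow_succ']; exact Nat.pow_le_pow_right (by norm_num) (by omega)
  induction t with
  | S =>
    intro T off D offD p h hT hD x y hx hy hxy hord hDx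
    exact (hord.no h fun a => by have := hy a; have := hxy a; linarith).elim
  | Z =>
    intro T off D offD p h hT hD x y hx hy hxy hord hDx
    rw [chk] at h
    exact val_le_of_slots (lfChk_le hm (fun i => by have := hT i; omega) h) x y hx hy hxy
  | G g =>
    intro T off D offD p h hT hD x y hx hy hxy hord hDx
    rw [chk, Bool.and_eq_true, Bool.and_eq_true] at h
    obtain ⟨⟨h1, h2⟩, h3⟩ := h
    have h1 := Nat.le_of_ble_eq_true h1
    have hm0 : 0 < 2 ^ m := by positivity
    have hb : ∀ i, slot w T i + slot w D i * g + 1 ≤ (g * 2 ^ md + 2 ^ m) := by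
      intro i
      have a1 := hT i
      have a2 : slot w D i * g ≤ 2 ^ md * g := Nat.mul_le_mul_right _ (hD i).le
      rw [mul_comm g]; omega
    have e1 : ∀ i, slot w (D * g) i = slot w D i * g := slot_mul fun i => by
      have := hb i; omega
    have e2 : ∀ i, slot w (T + D * g) i = slot w T i + slot w D i * g := by
      intro i
      rw [slot_add, e1]
      intro j; rw [e1]; have := hb j; omega
    have e3 := bdChk_lt hm.le h2
    have e4 : ∀ i, slot w (T + D * g) i + 2 ^ m ≤ 2 ^ w ∨ ¬ i < (d + 1) ^ A := by
      intro i
      by_cases hi : i < (d + 1) ^ A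
      · left; have := e3 i hi; omega
      · right; exact hi
    have key : ∀ i, i < (d + 1) ^ A → slot w (T + D * g) i ≤ off + g * offD := by
      intro i hi
      rw [lfChk, Bool.and_eq_true] at h3
      have h0 : off + g * offD ≤ 2 ^ m - 1 := Nat.le_of_ble_eq_true h3.1
      have hmw : 2 ^ m < 2 ^ w := Nat.pow_lt_pow_right (by norm_num) hm
      have h4 := bdChk_lt hm.le h3.2 i hi
      rw [slot_add, slot_cst _ _ _ _ (by omega), if_pos hi] at h4
      · omega
      · intro j
        rw [slot_cst _ _ _ _ (by omega)]
        split_ifs with hj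
        · have := e3 j hj; omega
        · rw [add_zero]; exact slot_lt _ _ _
    have := val_le_of_slots key x y hx hy hxy
    have e5 : nv w d A (T + D * g) x y = nv w d A T x y + g * nv w d A D x y := by
      rw [nv, nv, nv, ← val_smul, ← val_add]
      congr 1; ext i; rw [e2]; push_cast; ring
    rw [e5] at this
    push_cast at this
    have hg : (g : ℝ) * offD ≤ g * nv w d A D x y := mul_le_mul_of_nonneg_left hDx (by positivity)
    linarith
  | A l r ihl ihr =>
    intro T off D offD p h
    rw [chk, Bool.and_eq_true, Bool.and_eq_true, Bool.and_eq_true] at h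
    exact Good.split hw hw' 0 (Nat.le_of_ble_eq_true h.1.1.1) (by norm_num) h.1.1.2 (ihl _ _ _ _ _ h.1.2) (ihr _ _ _ _ _ h.2)
  | B l r ihl ihr =>
    intro T off D offD p h
    rw [chk, Bool.and_eq_true, Bool.and_eq_true, Bool.and_eq_true] at h
    exact Good.split hw hw' 1 (Nat.le_of_ble_eq_true h.1.1.1) (by norm_num) h.1.1.2 (ihl _ _ _ _ _ h.1.2) (ihr _ _ _ _ _ h.2)
  | C l r ihl ihr =>
    intro T off D offD p h
    rw [chk, Bool.and_eq_true, Bool.and_eq_true, Bool.and_eq_true] at h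
    exact Good.split hw hw' 2 (Nat.le_of_ble_eq_true h.1.1.1) (by norm_num) h.1.1.2 (ihl _ _ _ _ _ h.1.2) (ihr _ _ _ _ _ h.2)

end splitting

section programs

structure Ops (R : Type) where
  add : R → R → R
  sub : R → R → R
  mul : R → R → R
  cst : ℤ → R

def oZ : Ops ℤ := ⟨Int.add, Int.sub, Int.mul, fun c => c⟩
noncomputable def oR : Ops ℝ := ⟨fun a b => a + b, fun a b => a - b, fun a b => a * b, fun c => (c : ℝ)⟩
def oN : Ops ℕ := ⟨Nat.add, Nat.add, Nat.mul, Int.natAbs⟩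

variable {R : Type} (o : Ops R)

def hF (x y : R) : ℕ → List ℤ → R → R → R
  | 0, _, acc, _ => acc
  | j + 1, l, acc, yp =>
    hF x y j l.tail (o.add (o.mul acc x) (o.mul (o.cst (l.headD 0)) yp)) (o.mul yp y)

def hF0 (x y : R) (m : ℕ) (l : List ℤ) : R := hF o x y m l.tail (o.cst (l.headD 0)) y

def gram (x1 y1 x2 y2 : R) (m : ℕ) : List (List ℤ) → R
  | [] => o.cst 0
  | r :: rs => o.add (o.mul (hF0 o x1 y1 m r) (hF0 o x2 y2 m r)) (gram x1 y1 x2 y2 m rs)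

def blk (x1 y1 x2 y2 : R) (m : ℕ) (b : ℕ × List (List ℤ)) : R :=
  o.mul (o.cst (Int.ofNat (2 ^ b.1))) (gram o x1 y1 x2 y2 m b.2)

/-- the ultraspherical recursion -/
def nxt (ν : ℕ) (w s : R) (k : ℕ) (Up Uc : R) : R :=
  o.sub (o.mul (o.cst (Int.ofNat (2 * (k + 1) + ν))) (o.mul w Uc))
    (o.mul (o.cst (Int.ofNat ((k + 1) * (k + ν)))) (o.mul s Up))

def kgo (x1 y1 x2 y2 w s e3 : R) : ℕ → List (ℕ × List (List ℤ)) → ℕ → R → R → R → R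
  | 0, _, _, acc, _, _ => acc
  | m + 1, bs, k, acc, Up, Uc =>
    kgo x1 y1 x2 y2 w s e3 m bs.tail (k + 1)
      (o.add (o.mul acc e3) (o.mul (blk o x1 y1 x2 y2 m (bs.headD (0, []))) Uc)) Uc (nxt o 7 w s k Up Uc)

def kTop (bs : List (ℕ × List (List ℤ))) (m : ℕ) (x1 y1 x2 y2 w s e3 : R) : R :=
  kgo o x1 y1 x2 y2 w s e3 m bs.tail 0 (blk o x1 y1 x2 y2 m (bs.headD (0, []))) (o.cst 1) (o.mul (o.cst 7) w)

def uF (x y : R) : R := o.sub x (o.mul (o.cst 2) y)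

def qF (e u : R) : R := o.sub (o.mul (o.cst 4) (o.mul e e)) (o.mul u u)

def KE (bs : List (ℕ × List (List ℤ))) (m : ℕ) (x1 y1 x2 y2 x3 y3 : R) : R :=
  kTop o bs m x1 y1 x2 y2
    (o.sub (o.mul (o.cst 2) (o.mul (uF o x3 y3) (o.mul (o.add x1 y1) (o.add x2 y2))))
      (o.mul (o.mul (uF o x1 y1) (uF o x2 y2)) (o.add x3 y3)))
    (o.mul (o.mul (qF o (o.add x1 y1) (uF o x1 y1)) (qF o (o.add x2 y2) (uF o x2 y2)))
      (o.mul (o.add x3 y3) (o.add x3 y3)))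
    (o.add x3 y3)

def Ks (bs : List (ℕ × List (List ℤ))) (m : ℕ) (x0 y0 x1 y1 x2 y2 : R) : R :=
  o.add (KE o bs m x0 y0 x1 y1 x2 y2) (o.add (KE o bs m x0 y0 x2 y2 x1 y1) (KE o bs m x1 y1 x2 y2 x0 y0))

def sqF (a : R) : R := o.mul a a

def DE' (e0 e1 e2 u0 u1 u2 E : R) : R :=
  o.sub (o.add (o.mul (o.cst 4) (o.mul E E)) (o.mul (o.mul u0 (o.mul u1 u2)) E))
    (o.add (sqF o (o.mul u0 (o.mul e1 e2))) (o.add (sqF o (o.mul u1 (o.mul e0 e2))) (sqF o (o.mul u2 (o.mul e0 e1)))))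

def DE (x0 y0 x1 y1 x2 y2 : R) : R :=
  o.mul (DE' o (o.add x0 y0) (o.add x1 y1) (o.add x2 y2) (uF o x0 y0) (uF o x1 y1) (uF o x2 y2)
      (o.mul (o.add x0 y0) (o.mul (o.add x1 y1) (o.add x2 y2))))
    (o.mul (o.cst 16384)
      (o.mul (sqF o (sqF o (sqF o (o.mul (o.add x0 y0) (o.mul (o.add x1 y1) (o.add x2 y2))))))
        (o.mul (sqF o (sqF o (o.mul (o.add x0 y0) (o.mul (o.add x1 y1) (o.add x2 y2)))))
          (sqF o (o.mul (o.add x0 y0) (o.mul (o.add x1 y1) (o.add x2 y2)))))))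

def ago (u e q : R) : List ℤ → ℕ → R → R → R → R
  | [], _, acc, _, _ => acc
  | t :: l, k, acc, Up, Uc =>
    ago u e q l (k + 1) (o.add (o.mul acc e) (o.mul (o.cst t) Uc)) Uc (nxt o 8 u q k Up Uc)

def BE (bs : List (ℕ × List (List ℤ))) (c a0 : ℤ) (al : List ℤ) (x y : R) : R :=
  o.add
    (o.add
      (kTop o bs 16 x y x y (qF o (o.add x y) (uF o x y)) (sqF o (qF o (o.add x y) (uF o x y))) (o.cst 1))
      (o.mul (o.mul (o.cst (Int.mul 2 (Int.mul (Int.ofNat (2 ^ (bs.headD (0, [])).1)) c)))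
        (hF0 o x y 16 ((bs.headD (0, [])).2.headD []))) (sqF o (sqF o (sqF o (sqF o (o.add x y)))))))
    (ago o (uF o x y) (o.add x y) (o.mul (o.cst 4) (sqF o (o.add x y))) al 0 (o.cst a0) (o.cst 1)
      (o.mul (o.cst 8) (uF o x y)))

end programs

section hrel

variable {A n w0 : ℕ} {x y : ℕ → ℝ}

/-- `Z` is the Kronecker substitution of a form of multidegree `D` with value `r` and `ℓ¹` norm at most `L` -/
def HR (A n w0 : ℕ) (x y : ℕ → ℝ) (D : ℕ → ℕ) (Z : ℤ) (r : ℝ) (L : ℕ) : Prop :=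
  ∃ (ι : Type) (_ : Fintype ι) (c : ι → ℤ) (e : ι → ℕ → ℕ), (∀ i a, e i a ≤ D a) ∧
    Z = ∑ i, c i * ∏ a ∈ Finset.range A, ((2:ℤ) ^ (w0 * n ^ a)) ^ e i a ∧
    r = ∑ i, (c i : ℝ) * ∏ a ∈ Finset.range A, (x a ^ e i a * y a ^ (D a - e i a)) ∧
    ∑ i, (c i).natAbs ≤ L

theorem HR.cast {D D' : ℕ → ℕ} {Z : ℤ} {r : ℝ} {L : ℕ} (h : HR A n w0 x y D Z r L) (hD : ∀ a, D a = D' a) :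
    HR A n w0 x y D' Z r L := by
  have : D = D' := funext hD
  exact this ▸ h

theorem HR.add {D : ℕ → ℕ} {Z Z' : ℤ} {r r' : ℝ} {L L' : ℕ} (h : HR A n w0 x y D Z r L)
    (h' : HR A n w0 x y D Z' r' L') : HR A n w0 x y D (oZ.add Z Z') (oR.add r r') (oN.add L L') := by
  obtain ⟨ι, _, c, e, h1, h2, h3, h4⟩ := h
  obtain ⟨ι', _, c', e', h1', h2', h3', h4'⟩ := h'
  refine ⟨ι ⊕ ι', inferInstance, Sum.elim c c', Sum.elim e e', ?_, ?_, ?_, ?_⟩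
  · rintro (i | i) a
    · exact h1 i a
    · exact h1' i a
  · rw [Fintype.sum_sum_type]; simp only [Sum.elim_inl, Sum.elim_inr, ← h2, ← h2']; rfl
  · rw [Fintype.sum_sum_type]; simp only [Sum.elim_inl, Sum.elim_inr, ← h3, ← h3']; rfl
  · rw [Fintype.sum_sum_type]; simp only [Sum.elim_inl, Sum.elim_inr]; exact Nat.add_le_add h4 h4'

theorem HR.sub {D : ℕ → ℕ} {Z Z' : ℤ} {r r' : ℝ} {L L' : ℕ} (h : HR A n w0 x y D Z r L)
    (h' : HR A n w0 x y D Z' r' L') : HR A n w0 x y D (oZ.sub Z Z') (oR.sub r r') (oN.sub L L') := by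
  obtain ⟨ι, _, c, e, h1, h2, h3, h4⟩ := h
  obtain ⟨ι', _, c', e', h1', h2', h3', h4'⟩ := h'
  refine ⟨ι ⊕ ι', inferInstance, Sum.elim c (fun i => - c' i), Sum.elim e e', ?_, ?_, ?_, ?_⟩
  · rintro (i | i) a
    · exact h1 i a
    · exact h1' i a
  · rw [Fintype.sum_sum_type]
    simp only [Sum.elim_inl, Sum.elim_inr, neg_mul, Finset.sum_neg_distrib, ← h2, ← h2']
    exact Int.sub_eq_add_neg
  · rw [Fintype.sum_sum_type]
    simp only [Sum.elim_inl, Sum.elim_inr, Int.cast_neg, neg_mul, Finset.sum_neg_distrib, ← h3, ← h3']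
    exact sub_eq_add_neg r r'
  · rw [Fintype.sum_sum_type]; simp only [Sum.elim_inl, Sum.elim_inr, Int.natAbs_neg]
    exact Nat.add_le_add h4 h4'

theorem HR.mul {D D' : ℕ → ℕ} {Z Z' : ℤ} {r r' : ℝ} {L L' : ℕ} (h : HR A n w0 x y D Z r L)
    (h' : HR A n w0 x y D' Z' r' L') :
    HR A n w0 x y (fun a => D a + D' a) (oZ.mul Z Z') (oR.mul r r') (oN.mul L L') := by
  obtain ⟨ι, _, c, e, h1, h2, h3, h4⟩ := h
  obtain ⟨ι', _, c', e', h1', h2', h3', h4'⟩ := h'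
  refine ⟨ι × ι', inferInstance, fun p => c p.1 * c' p.2, fun p a => e p.1 a + e' p.2 a, ?_, ?_, ?_, ?_⟩
  · rintro ⟨i, j⟩ a
    exact Nat.add_le_add (h1 i a) (h1' j a)
  · have : oZ.mul Z Z' = Z * Z' := rfl
    rw [this, h2, h2', Fintype.sum_mul_sum, Fintype.sum_prod_type]
    refine Finset.sum_congr rfl fun i _ => Finset.sum_congr rfl fun j _ => ?_
    simp only [pow_add, Finset.prod_mul_distrib]; ring
  · have : oR.mul r r' = r * r' := rfl
    rw [this, h3, h3', Fintype.sum_mul_sum, Fintype.sum_prod_type]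
    refine Finset.sum_congr rfl fun i _ => Finset.sum_congr rfl fun j _ => ?_
    have : ∀ a, D a + D' a - (e i a + e' j a) = (D a - e i a) + (D' a - e' j a) := by
      intro a; have := h1 i a; have := h1' j a; omega
    simp only [this, pow_add, Finset.prod_mul_distrib]; push_cast; ring
  · have : oN.mul L L' = L * L' := rfl
    rw [this, Fintype.sum_prod_type]
    simp only [Int.natAbs_mul]
    rw [← Fintype.sum_mul_sum]
    exact Nat.mul_le_mul h4 h4'

theorem HR.cst (c : ℤ) : HR A n w0 x y (fun _ => 0) (oZ.cst c) (oR.cst c) (oN.cst c) := by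
  refine ⟨Unit, inferInstance, fun _ => c, fun _ _ => 0, by simp, ?_, ?_, ?_⟩
  · simp [oZ]
  · simp [oR]
  · simp [oN]

theorem HR.zero (D : ℕ → ℕ) : HR A n w0 x y D (oZ.cst 0) (oR.cst 0) (oN.cst 0) := by
  refine ⟨Empty, inferInstance, fun _ => 0, fun _ _ => 0, by simp, ?_, ?_, ?_⟩ <;> simp [oZ, oR, oN]

theorem HR.smul {D : ℕ → ℕ} {Z : ℤ} {r : ℝ} {L : ℕ} (c : ℤ) (h : HR A n w0 x y D Z r L) :
    HR A n w0 x y D (oZ.mul (oZ.cst c) Z) (oR.mul (oR.cst c) r) (oN.mul (oN.cst c) L) :=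
  ((HR.cst c).mul h).cast fun a => by simp

theorem HR.atom (a : ℕ) (ha : a < A) (s : ℕ) (hs : s ≤ 1) :
    HR A n w0 x y (Pi.single a 1) (((2:ℤ) ^ (w0 * n ^ a)) ^ s) (x a ^ s * y a ^ (1 - s)) 1 := by
  refine ⟨Unit, inferInstance, fun _ => 1, fun _ => Pi.single a s, ?_, ?_, ?_, by simp⟩
  · intro _ b
    by_cases h : b = a
    · subst h; simpa using hs
    · simp [h]
  · simp only [Finset.univ_unique, Finset.sum_singleton, one_mul]
    rw [Finset.prod_eq_single a]
    · simp
    · intro b _ hb; simp [hb]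
    · intro h; exact absurd (Finset.mem_range.mpr ha) h
  · simp only [Finset.univ_unique, Finset.sum_singleton, Int.cast_one, one_mul]
    rw [Finset.prod_eq_single a]
    · simp
    · intro b _ hb; simp [hb]
    · intro h; exact absurd (Finset.mem_range.mpr ha) h

theorem HR.X (a : ℕ) (ha : a < A) : HR A n w0 x y (Pi.single a 1) ((2:ℤ) ^ (w0 * n ^ a)) (x a) 1 := by
  simpa using HR.atom (n := n) (w0 := w0) (x := x) (y := y) a ha 1 le_rfl

theorem HR.Y (a : ℕ) (ha : a < A) : HR A n w0 x y (Pi.single a 1) 1 (y a) 1 := by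
  simpa using HR.atom (n := n) (w0 := w0) (x := x) (y := y) a ha 0 (by norm_num)

variable {D1 D2 D3 : ℕ → ℕ} {X1 Y1 X2 Y2 W S E3 : ℤ} {x1 y1 x2 y2 w s e3 : ℝ} {lx1 ly1 lx2 ly2 lw ls le3 : ℕ}

local notation "HH" => HR A n w0 x y

theorem HR.hF (hx : HH D1 X1 x1 lx1) (hy : HH D1 Y1 y1 ly1) (j : ℕ) : ∀ (l : List ℤ) (k : ℕ) (a : ℤ) (a' : ℝ) (a'' : ℕ)
    (b : ℤ) (b' : ℝ) (b'' : ℕ), HH (fun i => k * D1 i) a a' a'' → HH (fun i => (k + 1) * D1 i) b b' b'' →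
    HH (fun i => (k + j) * D1 i) (hF oZ X1 Y1 j l a b) (hF oR x1 y1 j l a' b') (hF oN lx1 ly1 j l a'' b'') := by
  induction j with
  | zero => intro l k a a' a'' b b' b'' ha hb; exact ha
  | succ j ih =>
    intro l k a a' a'' b b' b'' ha hb
    refine (ih l.tail (k + 1) _ _ _ _ _ _ (((ha.mul hx).cast fun i => ?_).add (hb.smul _))
      ((hb.mul hy).cast fun i => ?_)).cast fun i => ?_ <;> ring

theorem HR.hF0 (hx : HH D1 X1 x1 lx1) (hy : HH D1 Y1 y1 ly1) (m : ℕ) (l : List ℤ) :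
    HH (fun i => m * D1 i) (hF0 oZ X1 Y1 m l) (hF0 oR x1 y1 m l) (hF0 oN lx1 ly1 m l) :=
  (HR.hF hx hy m l.tail 0 _ _ _ _ _ _ ((HR.cst _).cast fun i => by ring) (hy.cast fun i => by ring)).cast
    fun i => by ring

theorem HR.gram (hx : HH D1 X1 x1 lx1) (hy : HH D1 Y1 y1 ly1) (hx2 : HH D2 X2 x2 lx2) (hy2 : HH D2 Y2 y2 ly2)
    (m : ℕ) (l : List (List ℤ)) : HH (fun i => m * (D1 i + D2 i)) (gram oZ X1 Y1 X2 Y2 m l)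
      (gram oR x1 y1 x2 y2 m l) (gram oN lx1 ly1 lx2 ly2 m l) := by
  induction l with
  | nil => exact HR.zero _
  | cons r l ih =>
    exact (((HR.hF0 hx hy m r).mul (HR.hF0 hx2 hy2 m r)).cast fun i => by ring).add ih

theorem HR.blk (hx : HH D1 X1 x1 lx1) (hy : HH D1 Y1 y1 ly1) (hx2 : HH D2 X2 x2 lx2) (hy2 : HH D2 Y2 y2 ly2)
    (m : ℕ) (b : ℕ × List (List ℤ)) : HH (fun i => m * (D1 i + D2 i)) (blk oZ X1 Y1 X2 Y2 m b)
      (blk oR x1 y1 x2 y2 m b) (blk oN lx1 ly1 lx2 ly2 m b) :=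
  (HR.gram hx hy hx2 hy2 m b.2).smul _

theorem HR.nxt (ν : ℕ) (hw : HH D1 W w lw) (hs : HH (fun i => 2 * D1 i) S s ls) (k : ℕ) {a b : ℤ} {a' b' : ℝ} {a'' b'' : ℕ}
    (ha : HH (fun i => k * D1 i) a a' a'') (hb : HH (fun i => (k + 1) * D1 i) b b' b'') :
    HH (fun i => (k + 2) * D1 i) (nxt oZ ν W S k a b) (nxt oR ν w s k a' b') (nxt oN ν lw ls k a'' b'') :=
  (((hw.mul hb).cast fun i => by ring).smul _).sub (((hs.mul ha).cast fun i => by ring).smul _)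

theorem HR.kgo (hx : HH D1 X1 x1 lx1) (hy : HH D1 Y1 y1 ly1) (hx2 : HH D2 X2 x2 lx2) (hy2 : HH D2 Y2 y2 ly2)
    (hw : HH (fun i => D1 i + D2 i + D3 i) W w lw) (hs : HH (fun i => 2 * (D1 i + D2 i + D3 i)) S s ls)
    (he : HH D3 E3 e3 le3) (m : ℕ) : ∀ (bs : List (ℕ × List (List ℤ))) (k : ℕ) (a : ℤ) (a' : ℝ) (a'' : ℕ)
    (b : ℤ) (b' : ℝ) (b'' : ℕ) (c : ℤ) (c' : ℝ) (c'' : ℕ),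
    HH (fun i => (m + k) * (D1 i + D2 i) + k * D3 i) a a' a'' →
    HH (fun i => k * (D1 i + D2 i + D3 i)) b b' b'' → HH (fun i => (k + 1) * (D1 i + D2 i + D3 i)) c c' c'' →
    HH (fun i => (m + k) * (D1 i + D2 i + D3 i)) (kgo oZ X1 Y1 X2 Y2 W S E3 m bs k a b c)
      (kgo oR x1 y1 x2 y2 w s e3 m bs k a' b' c') (kgo oN lx1 ly1 lx2 ly2 lw ls le3 m bs k a'' b'' c'') := by
  induction m with
  | zero => intro bs k a a' a'' b b' b'' c c' c'' ha hb hc; exact ha.cast fun i => by ring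
  | succ m ih =>
    intro bs k a a' a'' b b' b'' c c' c'' ha hb hc
    refine (ih bs.tail (k + 1) _ _ _ _ _ _ _ _ _ (((ha.mul he).cast fun i => ?_).add
      (((HR.blk hx hy hx2 hy2 m _).mul hc).cast fun i => ?_)) hc ((HR.nxt 7 hw hs k hb hc).cast fun i => ?_)).cast
      fun i => ?_ <;> ring

theorem HR.kTop (hx : HH D1 X1 x1 lx1) (hy : HH D1 Y1 y1 ly1) (hx2 : HH D2 X2 x2 lx2) (hy2 : HH D2 Y2 y2 ly2)
    (hw : HH (fun i => D1 i + D2 i + D3 i) W w lw) (hs : HH (fun i => 2 * (D1 i + D2 i + D3 i)) S s ls)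
    (he : HH D3 E3 e3 le3) (m : ℕ) (bs : List (ℕ × List (List ℤ))) :
    HH (fun i => m * (D1 i + D2 i + D3 i)) (kTop oZ bs m X1 Y1 X2 Y2 W S E3)
      (kTop oR bs m x1 y1 x2 y2 w s e3) (kTop oN bs m lx1 ly1 lx2 ly2 lw ls le3) := by
  refine (HR.kgo hx hy hx2 hy2 hw hs he m bs.tail 0 _ _ _ _ _ _ _ _ _
    ((HR.blk hx hy hx2 hy2 m _).cast fun i => ?_) ((HR.cst 1).cast fun i => ?_) ((hw.smul 7).cast fun i => ?_)).cast
    fun i => ?_ <;> ring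

theorem HR.uF (hx : HH D1 X1 x1 lx1) (hy : HH D1 Y1 y1 ly1) :
    HH D1 (uF oZ X1 Y1) (uF oR x1 y1) (uF oN lx1 ly1) := hx.sub (hy.smul 2)

theorem HR.qF (hx : HH D1 X1 x1 lx1) (hy : HH D1 Y1 y1 ly1) :
    HH (fun i => 2 * D1 i) (qF oZ X1 Y1) (qF oR x1 y1) (qF oN lx1 ly1) :=
  (((hx.mul hx).smul 4).sub (hy.mul hy)).cast fun i => by ring

theorem HR.sqF (hx : HH D1 X1 x1 lx1) : HH (fun i => 2 * D1 i) (sqF oZ X1) (sqF oR x1) (sqF oN lx1) :=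
  (hx.mul hx).cast fun i => by ring

theorem HR.KE (a b c : ℕ) (ha : a < A) (hb : b < A) (hc : c < A) (m : ℕ) (bs : List (ℕ × List (List ℤ))) :
    HH (fun i => m * ((Pi.single a 1 : ℕ → ℕ) i + (Pi.single b 1 : ℕ → ℕ) i + (Pi.single c 1 : ℕ → ℕ) i))
      (KE oZ bs m (2 ^ (w0 * n ^ a)) 1 (2 ^ (w0 * n ^ b)) 1 (2 ^ (w0 * n ^ c)) 1)
      (KE oR bs m (x a) (y a) (x b) (y b) (x c) (y c)) (KE oN bs m 1 1 1 1 1 1) := by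
  have X1 := HR.X (n := n) (w0 := w0) (x := x) (y := y) a ha
  have X2 := HR.X (n := n) (w0 := w0) (x := x) (y := y) b hb
  have X3 := HR.X (n := n) (w0 := w0) (x := x) (y := y) c hc
  have Y1 := HR.Y (n := n) (w0 := w0) (x := x) (y := y) a ha
  have Y2 := HR.Y (n := n) (w0 := w0) (x := x) (y := y) b hb
  have Y3 := HR.Y (n := n) (w0 := w0) (x := x) (y := y) c hc
  have E1 := X1.add Y1
  have E2 := X2.add Y2
  have E3 := X3.add Y3
  have U1 := X1.uF Y1
  have U2 := X2.uF Y2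
  have U3 := X3.uF Y3
  refine HR.kTop X1 Y1 X2 Y2 ((((U3.mul (E1.mul E2)).smul 2).cast fun i => ?_).sub (((U1.mul U2).mul E3)))
    ((((E1.qF U1).mul (E2.qF U2)).mul (E3.mul E3)).cast fun i => ?_) E3 m bs <;> ring

theorem HR.Ks (m : ℕ) (bs : List (ℕ × List (List ℤ))) :
    HR 3 n w0 x y (fun i => m * ((Pi.single 0 1 : ℕ → ℕ) i + (Pi.single 1 1 : ℕ → ℕ) i + (Pi.single 2 1 : ℕ → ℕ) i))
      (Ks oZ bs m (2 ^ (w0 * n ^ 0)) 1 (2 ^ (w0 * n ^ 1)) 1 (2 ^ (w0 * n ^ 2)) 1)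
      (Ks oR bs m (x 0) (y 0) (x 1) (y 1) (x 2) (y 2)) (Ks oN bs m 1 1 1 1 1 1) :=
  (HR.KE 0 1 2 (by norm_num) (by norm_num) (by norm_num) m bs).add
    (((HR.KE 0 2 1 (by norm_num) (by norm_num) (by norm_num) m bs).cast fun i => by ring).add
      ((HR.KE 1 2 0 (by norm_num) (by norm_num) (by norm_num) m bs).cast fun i => by ring))

theorem HR.DE :
    HR 3 n w0 x y (fun i => 16 * ((Pi.single 0 1 : ℕ → ℕ) i + (Pi.single 1 1 : ℕ → ℕ) i + (Pi.single 2 1 : ℕ → ℕ) i))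
      (DE oZ (2 ^ (w0 * n ^ 0)) 1 (2 ^ (w0 * n ^ 1)) 1 (2 ^ (w0 * n ^ 2)) 1)
      (DE oR (x 0) (y 0) (x 1) (y 1) (x 2) (y 2)) (DE oN 1 1 1 1 1 1) := by
  have X1 := HR.X (A := 3) (n := n) (w0 := w0) (x := x) (y := y) 0 (by norm_num)
  have X2 := HR.X (A := 3) (n := n) (w0 := w0) (x := x) (y := y) 1 (by norm_num)
  have X3 := HR.X (A := 3) (n := n) (w0 := w0) (x := x) (y := y) 2 (by norm_num)
  have Y1 := HR.Y (A := 3) (n := n) (w0 := w0) (x := x) (y := y) 0 (by norm_num)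
  have Y2 := HR.Y (A := 3) (n := n) (w0 := w0) (x := x) (y := y) 1 (by norm_num)
  have Y3 := HR.Y (A := 3) (n := n) (w0 := w0) (x := x) (y := y) 2 (by norm_num)
  have E1 := X1.add Y1
  have E2 := X2.add Y2
  have E3 := X3.add Y3
  have U1 := X1.uF Y1
  have U2 := X2.uF Y2
  have U3 := X3.uF Y3
  have E := E1.mul (E2.mul E3)
  refine (((((E.mul E).smul 4).add (((U1.mul (U2.mul U3)).mul E).cast fun i => ?_)).sub
    ((((U1.mul (E2.mul E3)).sqF).cast fun i => ?_).add ((((U2.mul (E1.mul E3)).sqF).cast fun i => ?_).add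
      (((U3.mul (E1.mul E2)).sqF).cast fun i => ?_)))).mul
    ((E.sqF.sqF.sqF.mul (E.sqF.sqF.mul E.sqF)).smul 16384)).cast fun i => ?_ <;> ring

theorem HR.ago {U E Q : ℤ} {u e q : ℝ} {lu le lq : ℕ} (hu : HH D1 U u lu) (he : HH D1 E e le)
    (hq : HH (fun i => 2 * D1 i) Q q lq) (l : List ℤ) : ∀ (k : ℕ) (a : ℤ) (a' : ℝ) (a'' : ℕ)
    (b : ℤ) (b' : ℝ) (b'' : ℕ) (c : ℤ) (c' : ℝ) (c'' : ℕ), HH (fun i => k * D1 i) a a' a'' →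
    HH (fun i => k * D1 i) b b' b'' → HH (fun i => (k + 1) * D1 i) c c' c'' →
    HH (fun i => (k + l.length) * D1 i) (ago oZ U E Q l k a b c) (ago oR u e q l k a' b' c')
      (ago oN lu le lq l k a'' b'' c'') := by
  induction l with
  | nil => intro k a a' a'' b b' b'' c c' c'' ha hb hc; exact ha
  | cons t l ih =>
    intro k a a' a'' b b' b'' c c' c'' ha hb hc
    refine (ih (k + 1) _ _ _ _ _ _ _ _ _ (((ha.mul he).cast fun i => ?_).add (hc.smul t)) hc
      ((HR.nxt 8 hu hq k hb hc).cast fun i => ?_)).cast fun i => ?_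
    · ring
    · ring
    · rw [List.length_cons]; ring

theorem HR.BE (bs : List (ℕ × List (List ℤ))) (c a0 : ℤ) (al : List ℤ) (hl : al.length = 32) :
    HR 1 n w0 x y (fun i => 32 * (Pi.single 0 1 : ℕ → ℕ) i)
      (BE oZ bs c a0 al (2 ^ (w0 * n ^ 0)) 1) (BE oR bs c a0 al (x 0) (y 0)) (BE oN bs c a0 al 1 1) := by
  have X1 := HR.X (A := 1) (n := n) (w0 := w0) (x := x) (y := y) 0 (by norm_num)
  have Y1 := HR.Y (A := 1) (n := n) (w0 := w0) (x := x) (y := y) 0 (by norm_num)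
  have E := X1.add Y1
  have U := X1.uF Y1
  have K := HR.kTop (D3 := fun _ => 0) X1 Y1 X1 Y1 ((E.qF U).cast fun i => by ring) ((E.qF U).sqF.cast fun i => by ring)
    (HR.cst 1) 16 bs
  have G := HR.ago U E ((E.sqF.smul 4)) al 0 _ _ _ _ _ _ _ _ _ ((HR.cst a0).cast fun i => by ring)
    ((HR.cst 1).cast fun i => by ring) ((U.smul 8).cast fun i => by ring)
  refine ((K.cast fun i => ?_).add ((((X1.hF0 Y1 16 ((bs.headD (0, [])).2.headD [])).smul _).mul
    E.sqF.sqF.sqF.sqF).cast fun i => ?_)).add (G.cast fun i => ?_)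
  · ring
  · ring
  · rw [hl, zero_add]

end hrel

section repack

theorem slot_sum (w : ℕ) (N : ℕ) : ∀ (f : ℕ → ℕ), (∀ i, f i < 2 ^ w) → ∀ i, i < N →
    slot w (∑ j ∈ Finset.range N, f j * 2 ^ (w * j)) i = f i := by
  induction N with
  | zero => intro f hf i hi; omega
  | succ N ih =>
    intro f hf i hi
    have e : ∑ j ∈ Finset.range (N + 1), f j * 2 ^ (w * j)
        = f 0 + (∑ j ∈ Finset.range N, f (j + 1) * 2 ^ (w * j)) * 2 ^ w := by
      rw [Finset.sum_range_succ', Finset.sum_mul, add_comm]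
      congr 1
      · simp
      · refine Finset.sum_congr rfl fun j _ => ?_
        rw [mul_assoc, ← pow_add]; rfl
    rw [e]
    cases i with
    | zero => simp [slot, Nat.mod_eq_of_lt (hf 0)]
    | succ i =>
      rw [← ih (fun j => f (j + 1)) (fun j => hf _) i (by omega)]
      rw [slot, slot, Nat.mul_succ, pow_add, mul_comm (2 ^ (w * i)), ← Nat.div_div_eq_div_mul,
        Nat.add_mul_div_right _ _ (by positivity), Nat.div_eq_of_lt (hf 0), zero_add]

theorem slot_mod (w T s i : ℕ) (h : i < s) : slot w (T % 2 ^ (w * s)) i = slot w T i := by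
  refine Nat.eq_of_testBit_eq fun j => ?_
  simp only [slot, Nat.testBit_mod_two_pow, Nat.testBit_div_two_pow]
  by_cases h' : j < w
  · have : w * i + j < w * s := by nlinarith
    have this' : j + w * i < w * s := by omega
    simp [h', this']
  · simp [h']

/-- repacking, one level -/
def rs (f : ℕ → ℕ → ℕ) (v0 v : ℕ) : List ℕ → ℕ → ℕ
  | [], _ => 0
  | c :: l, Q => f c (Q % 2 ^ v0) + (rs f v0 v l (Q >>> v0)) <<< v

theorem rs_lt (f : ℕ → ℕ → ℕ) (v0 v : ℕ) (hf : ∀ c q, f c q < 2 ^ v) (l : List ℕ) :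
    ∀ Q, rs f v0 v l Q < 2 ^ (v * l.length) := by
  induction l with
  | nil => intro Q; simp [rs]
  | cons c l ih =>
    intro Q
    have h1 := hf c (Q % 2 ^ v0)
    have h2 := ih (Q >>> v0)
    rw [rs, Nat.shiftLeft_eq, List.length_cons, Nat.mul_succ, pow_add]
    nlinarith

theorem slot_rs (w w0 s : ℕ) (f : ℕ → ℕ → ℕ) (hf : ∀ c q, f c q < 2 ^ (w * s)) (l : List ℕ) :
    ∀ (Q i j : ℕ) (_ : i < s) (hj : j < l.length),
      slot w (rs f (w0 * s) (w * s) l Q) (i + j * s) = slot w (f l[j] ((Q >>> (w0 * s * j)) % 2 ^ (w0 * s))) i := by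
  induction l with
  | nil => intro Q i j _ hj; simp at hj
  | cons c l ih =>
    intro Q i j hi hj
    have hlt : ∀ a, slot w (f c (Q % 2 ^ (w0 * s))) a + slot w (rs f (w0 * s) (w * s) l (Q >>> (w0 * s)) <<< (w * s)) a
        < 2 ^ w := by
      intro a
      rw [slot_shl]
      split_ifs with h
      · simpa using slot_lt _ _ _
      · rw [slot_of_lt (hf _ _) (not_lt.mp h), zero_add]; exact slot_lt _ _ _
    rw [rs, slot_add hlt, slot_shl]
    cases j with
    | zero => simp [hi]
    | succ j =>
      have e : i + (j + 1) * s = (i + j * s) + s := by ring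
      rw [e, if_neg (by omega), slot_of_lt (hf _ _) (by omega), zero_add, Nat.add_sub_cancel,
        ih _ i j hi (by simpa using hj), List.getElem_cons_succ, ← Nat.shiftRight_add]
      rw [Nat.mul_succ, add_comm (w0 * s * j)]

/-- rounding of one coefficient -/
def lf (Half p Off m b q : ℕ) : ℕ := min ((q + b * 2 ^ p * Off - Half) / (b * 2 ^ p) + 1) (2 ^ m)

def rp (w w0 n Half p Off m : ℕ) (bl : List ℕ) : ℕ → ℕ → ℕ → ℕ
  | 0, b, Q => lf Half p Off m b (Q % 2 ^ w0)
  | lv + 1, b, Q => rs (fun c q => rp w w0 n Half p Off m bl lv (b * c) q) (w0 * n ^ lv) (w * n ^ lv) bl Q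

def binp (d : ℕ) : ℕ → ℕ → ℕ
  | 0, _ => 1
  | A + 1, i => d.choose (i / (d + 1) ^ A) * binp d A (i % (d + 1) ^ A)

variable {w w0 d Half p Off m : ℕ} {bl : List ℕ}

theorem rp_lt (hm : m < w) (hl : bl.length = d + 1) (lv : ℕ) :
    ∀ b Q, rp w w0 (d + 1) Half p Off m bl lv b Q < 2 ^ (w * (d + 1) ^ lv) := by
  induction lv with
  | zero =>
    intro b Q
    rw [rp, lf, pow_zero, mul_one]
    exact lt_of_le_of_lt (min_le_right _ _) (Nat.pow_lt_pow_right (by norm_num) hm)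
  | succ lv ih =>
    intro b Q
    have := rs_lt (fun c q => rp w w0 (d + 1) Half p Off m bl lv (b * c) q) (w0 * (d + 1) ^ lv) (w * (d + 1) ^ lv)
      (fun c q => ih _ _) bl Q
    rwa [hl, mul_assoc, ← pow_succ] at this

theorem slot_rp (hm : m < w) (hl : bl = (List.range (d + 1)).map d.choose) (lv : ℕ) :
    ∀ b Q i, i < (d + 1) ^ lv →
    slot w (rp w w0 (d + 1) Half p Off m bl lv b Q) i = lf Half p Off m (b * binp d lv i) (slot w0 Q i) := by
  have hl' : bl.length = d + 1 := by simp [hl]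
  induction lv with
  | zero =>
    intro b Q i hi
    have : i = 0 := by simpa using hi
    subst this
    have h := rp_lt (w0 := w0) (Half := Half) (p := p) (Off := Off) hm hl' 0 b Q
    rw [pow_zero, mul_one] at h
    rw [slot_zero' _ _ h, rp, binp, mul_one]
    simp [slot]
  | succ lv ih =>
    intro b Q i hi
    set s := (d + 1) ^ lv with hs
    have hs0 : 0 < s := by positivity
    have e : i = i % s + (i / s) * s := by rw [mul_comm]; exact (Nat.mod_add_div _ _).symm
    have hj : i / s < d + 1 := by
      rw [Nat.div_lt_iff_lt_mul hs0]; rw [pow_succ, ← hs] at hi; linarith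
    have hr := Nat.mod_lt i hs0
    rw [rp, ← hs]
    conv_lhs => rw [e]
    rw [slot_rs w w0 s _ (fun c q => rp_lt hm hl' lv _ _) bl Q _ _ hr (by omega), ih _ _ _ hr, slot_mod _ _ _ _ hr,
      mul_assoc w0, slot_shr, mul_comm s, ← e, binp, ← hs, mul_assoc]
    congr 3
    simp [hl]

def encE (n : ℕ) (e : ℕ → ℕ) : ℕ → ℕ
  | 0 => 0
  | A + 1 => encE n e A + e A * n ^ A

theorem encE_lt {A : ℕ} {e : ℕ → ℕ} (h : ∀ a, a < A → e a ≤ d) : encE (d + 1) e A < (d + 1) ^ A := by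
  induction A with
  | zero => simp [encE]
  | succ A ih => exact blk_lt d (ih fun a ha => h a (by omega)) (by have := h A (by omega); omega)

theorem encE_split {s i i' j j' : ℕ} (hi : i < s) (hi' : i' < s) (h : i + j * s = i' + j' * s) : i = i' ∧ j = j' := by
  have hs : 0 < s := by omega
  have h1 := congrArg (· % s) h
  have h2 := congrArg (· / s) h
  simp only [Nat.add_mul_mod_self_right, Nat.mod_eq_of_lt hi, Nat.mod_eq_of_lt hi'] at h1
  simp only [Nat.add_mul_div_right _ _ hs, Nat.div_eq_of_lt hi, Nat.div_eq_of_lt hi', zero_add] at h2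
  exact ⟨h1, h2⟩

theorem binp_enc {A : ℕ} {e : ℕ → ℕ} (h : ∀ a, a < A → e a ≤ d) :
    binp d A (encE (d + 1) e A) = ∏ a ∈ Finset.range A, d.choose (e a) := by
  induction A with
  | zero => simp [binp]
  | succ A ih =>
    have h1 := encE_lt (d := d) (e := e) (A := A) fun a ha => h a (by omega)
    have hs : 0 < (d + 1) ^ A := by positivity
    rw [binp, encE, Nat.add_mul_div_right _ _ hs, Nat.div_eq_of_lt h1, zero_add, Nat.add_mul_mod_self_right,
      Nat.mod_eq_of_lt h1, ih fun a ha => h a (by omega), Finset.prod_range_succ, mul_comm]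

theorem binp_pos {A : ℕ} : ∀ i, i < (d + 1) ^ A → 0 < binp d A i := by
  induction A with
  | zero => intro i _; simp [binp]
  | succ A ih =>
    intro i hi
    have hs : 0 < (d + 1) ^ A := by positivity
    have hj : i / (d + 1) ^ A < d + 1 := by
      rw [Nat.div_lt_iff_lt_mul hs]; rw [pow_succ] at hi; linarith
    exact Nat.mul_pos (Nat.choose_pos (by omega)) (ih _ (Nat.mod_lt _ hs))

theorem val_congr (A : ℕ) (f g : ℕ → ℝ) (x y : ℕ → ℝ) (hx : ∀ a, 0 ≤ x a) (hy : ∀ a, 0 ≤ y a)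
    (h : ∀ i, i < (d + 1) ^ A → f i = g i) : val d A f x y = val d A g x y :=
  le_antisymm (val_mono d A f g x y hx hy fun i hi => (h i hi).le)
    (val_mono d A g f x y hx hy fun i hi => (h i hi).ge)

theorem val_zero (A : ℕ) (x y : ℕ → ℝ) : val d A (fun _ => 0) x y = 0 := by
  simpa using val_smul d A 0 (fun _ => 0) x y

theorem val_sum {ι : Type} (s : Finset ι) (A : ℕ) (f : ι → ℕ → ℝ) (x y : ℕ → ℝ) :
    val d A (fun i => ∑ k ∈ s, f k i) x y = ∑ k ∈ s, val d A (f k) x y := by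
  classical
  induction s using Finset.induction_on with
  | empty => simpa using val_zero A x y
  | insert a s ha ih => simp only [Finset.sum_insert ha]; rw [val_add, ih]

theorem val_single (A : ℕ) (e : ℕ → ℕ) (h : ∀ a, a < A → e a ≤ d) (c : ℝ) (x y : ℕ → ℝ)
    (hx : ∀ a, 0 ≤ x a) (hy : ∀ a, 0 ≤ y a) :
    val d A (fun i => if encE (d + 1) e A = i then c else 0) x y
      = c * ∏ a ∈ Finset.range A, ((d.choose (e a) : ℝ) * (x a ^ e a * y a ^ (d - e a))) := by
  induction A with
  | zero => simp [val, encE]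
  | succ A ih =>
    have h1 := encE_lt (d := d) (e := e) (A := A) fun a ha => h a (by omega)
    rw [val, cas_sum, Finset.sum_eq_single (e A)]
    · have : val d A (fun i => if encE (d + 1) e (A + 1) = i + e A * (d + 1) ^ A then c else 0) x y
          = val d A (fun i => if encE (d + 1) e A = i then c else 0) x y := by
        refine val_congr A _ _ x y hx hy fun i hi => ?_
        simp [encE]
      rw [this, ih fun a ha => h a (by omega), Finset.prod_range_succ]; ring
    · intro j hj hne
      have : val d A (fun i => if encE (d + 1) e (A + 1) = i + j * (d + 1) ^ A then c else 0) x y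
          = val d A (fun _ => 0) x y := by
        refine val_congr A _ _ x y hx hy fun i hi => ?_
        rw [if_neg]
        intro h2
        rw [encE] at h2
        exact hne (encE_split h1 hi h2).2.symm
      rw [this, val_zero, mul_zero]
    · intro hn; exact absurd (Finset.mem_range.mpr (by have := h A (by omega); omega)) hn

theorem prod_enc (A : ℕ) (n : ℕ) (e : ℕ → ℕ) :
    ∏ a ∈ Finset.range A, ((2:ℤ) ^ (w0 * n ^ a)) ^ e a = 2 ^ (w0 * encE n e A) := by
  induction A with
  | zero => simp [encE]
  | succ A ih => rw [Finset.prod_range_succ, ih, encE, ← pow_mul, ← pow_add]; congr 1; ring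

/-- the packed and shifted coefficients -/
def pk (w0 N Half : ℕ) (Z : ℤ) : ℕ := (Int.add Z (Int.ofNat (cst w0 N Half))).toNat

theorem lf_ge {b q : ℕ} {g : ℤ} (hb : 0 < b) (hq : (q : ℤ) = g + Half) (h : lf Half p Off m b q < 2 ^ m) :
    (g : ℝ) / b / 2 ^ p + Off ≤ (lf Half p Off m b q : ℝ) := by
  rw [lf] at h ⊢
  have h' : min ((q + b * 2 ^ p * Off - Half) / (b * 2 ^ p) + 1) (2 ^ m) = (q + b * 2 ^ p * Off - Half) / (b * 2 ^ p) + 1 := by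
    rcases min_choice ((q + b * 2 ^ p * Off - Half) / (b * 2 ^ p) + 1) (2 ^ m) with h2 | h2
    · exact h2
    · omega
  rw [h']
  have hB : 0 < b * 2 ^ p := by positivity
  have h3 : q + b * 2 ^ p * Off - Half < b * 2 ^ p * ((q + b * 2 ^ p * Off - Half) / (b * 2 ^ p) + 1) :=
    Nat.lt_mul_div_succ _ hB
  generalize (q + b * 2 ^ p * Off - Half) / (b * 2 ^ p) + 1 = v at h3 ⊢
  have h4 : g + b * 2 ^ p * Off ≤ b * 2 ^ p * v := by
    have : (q:ℤ) + b * 2 ^ p * Off - Half ≤ b * 2 ^ p * v := by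
      have := h3.le
      have h5 : q + b * 2 ^ p * Off ≤ b * 2 ^ p * v + Half := by omega
      have : ((q + b * 2 ^ p * Off : ℕ) : ℤ) ≤ ((b * 2 ^ p * v + Half : ℕ) : ℤ) := by exact_mod_cast h5
      push_cast at this
      linarith
    linarith
  have h5 : (g : ℝ) + b * 2 ^ p * Off ≤ b * 2 ^ p * v := by exact_mod_cast h4
  have hB' : (0:ℝ) < b * 2 ^ p := by exact_mod_cast hB
  rw [div_div, ← sub_nonneg]
  have : (v:ℝ) - (g / (b * 2 ^ p) + Off) = (b * 2 ^ p * v - (g + b * 2 ^ p * Off)) / (b * 2 ^ p) := by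
    have : (b:ℝ) ≠ 0 := by positivity
    field_simp
  rw [this]
  exact div_nonneg (by linarith) hB'.le

theorem repack {A : ℕ} {x y : ℕ → ℝ} {D : ℕ → ℕ} {Z : ℤ} {r : ℝ} {L T : ℕ} (h : HR A (d + 1) w0 x y D Z r L)
    (hD : ∀ a, a < A → D a = d) (hL : L < Half) (hH : 2 * Half ≤ 2 ^ w0)
    (hm : m < w) (hl : bl = (List.range (d + 1)).map d.choose)
    (hx : ∀ a, 0 ≤ x a) (hy : ∀ a, 0 ≤ y a) (hxy : ∀ a, x a + y a = 1)
    (hT : T = rp w w0 (d + 1) Half p Off m bl A 1 (pk w0 ((d + 1) ^ A) Half Z))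
    (hb : bdChk w ((d + 1) ^ A) m T = true) :
    Bd w m T ∧ r / 2 ^ p + Off ≤ nv w d A T x y := by
  have hTl : T < 2 ^ (w * (d + 1) ^ A) := by rw [hT]; exact rp_lt hm (by simp [hl]) _ _ _
  have hbd : Bd w m T := by
    intro i
    rcases lt_or_ge i ((d + 1) ^ A) with hi | hi
    · exact bdChk_lt hm.le hb i hi
    · rw [slot_of_lt hTl hi]; positivity
  refine ⟨hbd, ?_⟩
  obtain ⟨ι, _, c, e, h1, h2, h3, h4⟩ := h
  have he : ∀ k a, a < A → e k a ≤ d := fun k a ha => (hD a ha) ▸ h1 k a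
  set N := (d + 1) ^ A with hN
  let g : ℕ → ℤ := fun i => ∑ k, if encE (d + 1) (e k) A = i then c k else 0
  have hg : ∀ i, (g i).natAbs < Half := by
    intro i
    refine lt_of_le_of_lt (le_trans (Int.natAbs_sum_le _ _) (le_trans (Finset.sum_le_sum ?_) h4)) hL
    intro k _; split_ifs <;> simp
  have hZ : Z = ∑ i ∈ Finset.range N, g i * 2 ^ (w0 * i) := by
    rw [h2]
    simp only [g, Finset.sum_mul]
    rw [Finset.sum_comm]
    refine Finset.sum_congr rfl fun k _ => ?_
    rw [prod_enc, Finset.sum_eq_single (encE (d + 1) (e k) A)]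
    · simp
    · intro i _ hi; rw [if_neg (Ne.symm hi), zero_mul]
    · intro hn; exact absurd (Finset.mem_range.mpr (encE_lt (he k))) hn
  have hw0 : 0 < w0 := by
    rcases Nat.eq_zero_or_pos w0 with h | h
    · rw [h, pow_zero] at hH; omega
    · exact h
  have hQ : pk w0 N Half Z = ∑ i ∈ Finset.range N, (g i + Half).toNat * 2 ^ (w0 * i) := by
    have hc : cst w0 N Half = ∑ i ∈ Finset.range N, Half * 2 ^ (w0 * i) := by
      have h2' : 2 ≤ 2 ^ w0 := by
        calc 2 = 2 ^ 1 := rfl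
          _ ≤ _ := Nat.pow_le_pow_right (by norm_num) hw0
      rw [cst, pow_mul, ← Nat.geomSum_eq h2', Finset.mul_sum]
      simp only [pow_mul]
    have : Int.add Z (Int.ofNat (cst w0 N Half)) =
        ((∑ i ∈ Finset.range N, (g i + Half).toNat * 2 ^ (w0 * i) : ℕ) : ℤ) := by
      change Z + ((cst w0 N Half : ℕ) : ℤ) = _
      rw [hZ, hc]
      push_cast
      rw [← Finset.sum_add_distrib]
      refine Finset.sum_congr rfl fun i _ => ?_
      have := hg i
      rw [Int.toNat_of_nonneg (by omega)]; ring
    rw [pk, this, Int.toNat_natCast]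
  have hs : ∀ i, i < N → (slot w0 (pk w0 N Half Z) i : ℤ) = g i + Half := by
    intro i hi
    rw [hQ, slot_sum w0 N (fun i => (g i + Half).toNat) ?_ i hi]
    · have := hg i; omega
    · intro i
      have := hg i
      zify
      have : (2 * Half : ℤ) ≤ 2 ^ w0 := by exact_mod_cast hH
      omega
  have hle : val d A (fun i => (2 ^ p : ℝ)⁻¹ * ((g i : ℝ) / binp d A i) + Off) x y ≤ nv w d A T x y := by
    refine val_mono d A _ _ x y hx hy fun i hi => ?_
    have h5 := hbd i
    have h6 := slot_rp (w0 := w0) (Half := Half) (p := p) (Off := Off) hm hl A 1 (pk w0 N Half Z) i hi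
    rw [← hT, one_mul] at h6
    rw [h6] at h5 ⊢
    have := lf_ge (binp_pos i hi) (hs i hi) h5
    rwa [div_eq_mul_inv _ ((2:ℝ) ^ p), mul_comm] at this
  refine le_trans (le_of_eq ?_) hle
  rw [val_add, val_one d A _ x y hxy, val_smul, div_eq_mul_inv, mul_comm]
  congr 2
  have e1 : val d A (fun i => (g i : ℝ) / binp d A i) x y
      = val d A (fun i => ∑ k, if encE (d + 1) (e k) A = i then (c k : ℝ) / binp d A (encE (d + 1) (e k) A) else 0) x y := by
    refine val_congr A _ _ x y hx hy fun i _ => ?_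
    simp only [g, Int.cast_sum, Finset.sum_div]
    refine Finset.sum_congr rfl fun k _ => ?_
    split_ifs with h
    · rw [h]
    · simp
  rw [e1, val_sum, h3]
  refine Finset.sum_congr rfl fun k _ => ?_
  rw [val_single A (e k) (he k) _ x y hx hy, binp_enc (he k),
    Finset.prod_mul_distrib (f := fun a => (d.choose (e k a) : ℝ))]
  have h7 : ((∏ a ∈ Finset.range A, d.choose (e k a) : ℕ) : ℝ) ≠ 0 := by
    rw [← binp_enc (he k)]
    exact_mod_cast (binp_pos _ (encE_lt (he k))).ne'
  rw [← mul_assoc]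
  congr 1
  · push_cast at h7 ⊢
    rw [div_mul_cancel₀ _ h7]
  · refine Finset.prod_congr rfl fun a ha => ?_
    rw [hD a (Finset.mem_range.mp ha)]

end repack

section data

def bs : List (ℕ × List (List ℤ)) := [
  (123, [
    [-114369516656, -3351018154791, 22497124700579, -225871278752147, 303512307948446, 5097553337323517, -38865929715653145, 125227423475693335, -239953571880887641, 294796619894383308, -246523235737715789, 138147155997456969, -50794519414748233, 10870415647023448, -1050204355211998, -13052551532445, -5513345964261],
    [-31977426177, -1628571699572, 19360040560806, -656255242146986, 6612106451065162, -36000243453227984, 108532125364805120, -200858575537752341, 261402288937716146, -289189641418412470, 283951276141137959, -205577252327815913, 91250587260840439, -22039606057566048, 1720732627773785, 139174737272091, 19130505924329],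
    [-53388816181, -467870011883, -78230889366128, 863369218246521, -1310826335514949, -7670722675049186, 13728677754004991, 83435585212656152, -338594341738497120, 544617493654749610, -453993723506048269, 190005212531085339, -33152199064808732, 275497899517466, 169960033640208, 88692014657286, 0],
    [-47046584792, -2301709494308, 80263970269439, -1493592164865641, 15686569377348262, -94876080568503683, 344619486492098838, -775693656179456127, 1117798583327387864, -1080063503977974379, 737507823489567836, -368433675875256485, 130731516640402381, -27350551430763431, 2268579384831493, 0, 0],
    [33218621225, 429972976885, -141993647701898, 3917204280371406, -45579682717089388, 272708628000053465, -963804954481942579, 2152324787573982729, -3126020535555445782, 2964615717290794623, -1800356216955209984, 662800592950601169, -134484245804118443, 12043815565288903, 0, 0, 0],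
    [27573997654, -518091580941, 100191999196095, -2381274300195462, 23356952038353986, -121568642958978659, 380641495955749549, -763256698862056709, 999317628983053334, -850369366221869738, 449280944992586675, -137418969830034976, 19304080772464234, 0, 0, 0, 0],
    [24457960773, 2134916601558, -142045765333014, 3121721557052589, -26099680347135621, 118892873178326735, -329790898455368481, 568848387427509780, -619130711109990715, 405852560386321032, -148039290111322476, 24700705267764555, 0, 0, 0, 0, 0],
    [51982431047, -735121514305, 93574534441501, -1767700601230374, 15867970581367967, -75518407890220093, 197730563266416831, -302734617499702373, 263418888729384605, -122717924108489472, 25591635194884308, 0, 0, 0, 0, 0, 0],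
    [5378976994, 251471072191, -59010902638632, 1172075436380769, -10207668947550009, 42560021517056244, -98238868848418626, 125441906392880966, -85847328642519683, 26581322994407316, 0, 0, 0, 0, 0, 0, 0],
    [56643205207, -1614777313536, 68330178300132, -1228012531002351, 7369031992689169, -25516843776162027, 44992477480093410, -41525351163570622, 19110513889776406, 0, 0, 0, 0, 0, 0, 0, 0],
    [21475458498, 1340630028397, -100078237166118, 1270806163094327, -6912236029116395, 16924012116005782, -21950453920260023, 12972547441736363, 0, 0, 0, 0, 0, 0, 0, 0, 0],
    [-14198629099, -1601016144640, 49418992850967, -618489941368512, 2559997036690540, -4803899768092583, 3853287873760786, 0, 0, 0, 0, 0, 0, 0, 0, 0, 0],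
    [-82865998927, 441891495925, -51926421836579, 340674111972383, -914888805983534, 1523950543334959, 0, 0, 0, 0, 0, 0, 0, 0, 0, 0, 0],
    [-43834501233, -1841207223994, 33701311366795, -169957943531189, 372324301796833, 0, 0, 0, 0, 0, 0, 0, 0, 0, 0, 0, 0],
    [-15972477707, 608296856296, -12799464152083, 49364094648318, 0, 0, 0, 0, 0, 0, 0, 0, 0, 0, 0, 0, 0],
    [-20200074470, -476959494297, 10061204209044, 0, 0, 0, 0, 0, 0, 0, 0, 0, 0, 0, 0, 0, 0],
    [-3429055161, 501884896129, 0, 0, 0, 0, 0, 0, 0, 0, 0, 0, 0, 0, 0, 0, 0],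
    [562199955, 0, 0, 0, 0, 0, 0, 0, 0, 0, 0, 0, 0, 0, 0, 0, 0]]),
  (119, [
    [133239578192, 539707222530, -158596809518110, 1643668281900824, -10698933280295485, 52823949870062229, -186660177565371261, 448552867087099749, -707052083364394427, 726158021150365985, -467013465556627042, 175686145532572643, -36650968098691732, 3445001035370704, 65059623645997, 18083996238413],
    [44603586891, -1989677133205, 87691451944293, -1706427285670814, 15740697733991589, -92757672227423884, 350655710982285859, -817840477417461824, 1180993580475258383, -1047811709120988026, 539405144856337454, -144538242692644537, 15545561740436535, -438712168726344, 323349923092385, 0],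
    [-32899918512, 823569506347, -225510043642791, 4985666902162237, -42175403060037387, 185753127335235372, -487977569378816874, 827224429676038249, -956750045356391408, 781238770892775277, -457037411506653187, 187867903305177723, -48239284133462511, 5642661969805244, 0, 0],
    [-148240507148, -6654457859938, 175789301198974, -2581963934848512, 21051010976004091, -105704896186272084, 355629067332379397, -779764696968854267, 1078492617268180397, -912070881289264506, 447198963447671229, -115459803047601061, 11961814962389135, 0, 0, 0],
    [-224197149451, -3756168467785, -40141896669725, 1389585305858191, -12608314261534000, 61183178013715651, -167986705020605689, 294777644771623295, -339990061755427111, 239204914362806217, -99636646291554984, 19660158988713106, 0, 0, 0, 0],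
    [-124604612992, -8218009150595, 333552377676067, -5278756577774039, 40463639560553114, -167090407703495638, 407089175170990047, -593348239645137374, 498375439270434417, -227187332446695373, 43700203052804987, 0, 0, 0, 0, 0],
    [177106090659, 15648429101060, -447203875415730, 6712737911018250, -43418516977501319, 145643757452119262, -270310476414117932, 278670058226447412, -151187992900026388, 34625582122390960, 0, 0, 0, 0, 0, 0],
    [4552403063, -2214152234528, 93329931016252, -2309043375993596, 17022112199739641, -59254064163119299, 101982611373175907, -89531728221314937, 36474739608702575, 0, 0, 0, 0, 0, 0, 0],
    [-159566130333, -4371794440768, -138669036105437, 1832024856432284, -11110689704274261, 29704764065978630, -37426281646983621, 22258083969564398, 0, 0, 0, 0, 0, 0, 0, 0],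
    [25359142493, -3101259166107, 126468195775196, -1422616715257917, 5436152547241670, -9199132849183090, 7764157120543737, 0, 0, 0, 0, 0, 0, 0, 0, 0],
    [-30914906726, 3935978406544, -89289540592113, 600494242347847, -1630384124435262, 2196073128491609, 0, 0, 0, 0, 0, 0, 0, 0, 0, 0],
    [20501754605, -1138436859384, 58890526089038, -305269201161111, 534434637598085, 0, 0, 0, 0, 0, 0, 0, 0, 0, 0, 0],
    [109089071989, 8479139004277, -40275985752694, 193935925648953, 0, 0, 0, 0, 0, 0, 0, 0, 0, 0, 0, 0],
    [-290829455370, -10013980515348, 32810151783596, 0, 0, 0, 0, 0, 0, 0, 0, 0, 0, 0, 0, 0],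
    [147135076519, 3678498070189, 0, 0, 0, 0, 0, 0, 0, 0, 0, 0, 0, 0, 0, 0],
    [66137584786, 0, 0, 0, 0, 0, 0, 0, 0, 0, 0, 0, 0, 0, 0, 0]]),
  (114, [
    [-444827514589, -10949592054248, 261423308638415, -3494597892387396, 31848229128563778, -173094771408483068, 547557553905626675, -1034193181690943608, 1195733579908854228, -833823005612214956, 328023977588854229, -65843072457104406, 6292008074294963, -636592174751715, 40642846622513],
    [-25165476308, 7106236725854, -235433433456916, 4322144283589849, -34135240888091576, 156101765059358619, -455716716275509432, 864398408120943696, -1047448706262305953, 793241617463541609, -367832432117392287, 98842505096395718, -13711323313802686, 605582213594600, 0],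
    [-316229854928, -4269524500435, 100617401278401, -635906877640144, 3617244304502483, -8471934054508565, 18337090822365843, -50415754180272023, 101772465360883605, -127679275557456086, 86157659947222071, -30996374099087532, 5360139757957070, 0, 0],
    [9570256491, 3611996831473, -315481455945120, 4871234035582601, -33281957202887222, 130888318702414494, -324885286923726697, 517135371215637385, -513345791362513898, 303466161742963849, -97468969204479179, 13410007411479025, 0, 0, 0],
    [-220107263998, -13379222044297, 397222138176759, -5677328696807943, 40545027281919962, -157304410957142058, 344219773578862155, -439776182820460640, 317621256808089376, -120053183991502164, 19778816657762105, 0, 0, 0, 0],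
    [544811617979, 18992533808132, -382418487869281, 5565819499750665, -34259280363644136, 107831475190920290, -192699417919404843, 193211305619852660, -106131811343649707, 28187872217147884, 0, 0, 0, 0, 0],
    [363509761957, -1974506209837, 431965770530430, -6019964315114636, 33000025216333606, -87879859385052936, 122654491843775061, -86687466787538610, 26560877885593665, 0, 0, 0, 0, 0, 0],
    [108542073404, 5143589483044, -188479017365060, 2067726077654092, -9017374235488313, 19166872773481576, -18605295431254900, 8945395044821073, 0, 0, 0, 0, 0, 0, 0],
    [-274393304579, -11319515448237, 129583987713564, -1109415823076556, 4066495594920467, -6808474369447252, 5192452808767222, 0, 0, 0, 0, 0, 0, 0, 0],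
    [42887918563, 5543607545730, -119339736371059, 720134503557521, -1639892594332752, 1683830071910990, 0, 0, 0, 0, 0, 0, 0, 0, 0],
    [112763922802, -63690094695, 74523872123987, -317561819001104, 594838579947121, 0, 0, 0, 0, 0, 0, 0, 0, 0, 0],
    [172485792309, 6467711496044, -28950632378592, 225891373298950, 0, 0, 0, 0, 0, 0, 0, 0, 0, 0, 0],
    [-63213994866, -4544420747199, 38251411463037, 0, 0, 0, 0, 0, 0, 0, 0, 0, 0, 0, 0],
    [256590912364, 4971864772500, 0, 0, 0, 0, 0, 0, 0, 0, 0, 0, 0, 0, 0],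
    [129252739619, 0, 0, 0, 0, 0, 0, 0, 0, 0, 0, 0, 0, 0, 0]]),
  (109, [
    [512064885034, 12003837700187, -107884262814796, 2364314446182753, -27906038284003766, 146490681097729202, -399302224792286308, 625746073676559915, -585228705544050662, 316165574480536477, -93108180273239820, 14108484052580076, -1277841424242817, 78889904620544],
    [-83928179011, -22608634051127, 625731809017223, -7514556083948679, 46188444998835385, -170866587633381079, 409529071382810461, -623611229872010550, 583600674545289224, -330149518281421183, 107528649726573401, -18299419529126265, 1196471290518069, 0],
    [-493296214280, 434554218362, -340427532267433, 5357560433103264, -36375832491454220, 130288166635713958, -271449635332123050, 344343753941434697, -265654483067595398, 118800298444218636, -27327067341980300, 2431768688106632, 0, 0],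
    [-890268047017, -22882511187936, 616454585198819, -6827167708260314, 40083872536982692, -132653274386273044, 256432025542083385, -297580920025377804, 201808728400035320, -75501065562196603, 13190850948358178, 0, 0, 0],
    [626120185166, 29445491799235, -525539909346067, 6742255383438309, -39576435669208592, 120310721107938258, -201223905576105015, 184739508206992886, -88549067940678742, 17906947733875109, 0, 0, 0, 0],
    [62146922570, -4943873861639, 325749024988640, -3850628419264162, 18346968992757593, -41508307303095702, 47920438921737520, -26106192289430848, 5980992297109080, 0, 0, 0, 0, 0],
    [-153826788093, 9828250197387, -304906769015439, 2449152282410092, -11345797705043941, 25846109183903037, -27994474595425069, 14526326698524587, 0, 0, 0, 0, 0, 0],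
    [-529344356144, -16413981561563, 121193518370055, -992142903111363, 3474710519778299, -5838262750664443, 4371888981860377, 0, 0, 0, 0, 0, 0, 0],
    [-36890332400, 4004875426663, -126820401355608, 786132557726677, -1740031015661049, 1467083745411217, 0, 0, 0, 0, 0, 0, 0, 0],
    [-210046234056, -4615800347345, 70061162514795, -276400454956371, 552691526126352, 0, 0, 0, 0, 0, 0, 0, 0, 0],
    [171343682809, 10482503593918, -56846267625351, 177687294056031, 0, 0, 0, 0, 0, 0, 0, 0, 0, 0],
    [118670518360, -2338099490996, 19647335755586, 0, 0, 0, 0, 0, 0, 0, 0, 0, 0, 0],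
    [321866298139, 6225013393648, 0, 0, 0, 0, 0, 0, 0, 0, 0, 0, 0, 0],
    [73484213095, 0, 0, 0, 0, 0, 0, 0, 0, 0, 0, 0, 0, 0]]),
  (103, [
    [118280332539, -5615923938379, 239363117355125, -5634452233082821, 45092044479541837, -168535669099719354, 344866202106327826, -416293927974337343, 296631161398275321, -119808803671210671, 25670935324433794, -2801315357948155, 152940344778275],
    [190160463657, 6979000325722, -383984768899887, 5002484381136160, -32239380106412825, 110114339866886001, -214360826576599767, 236646752549982751, -148419703943551558, 52610769579937584, -9863662994278667, 799385988578389, 0],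
    [-448564388894, -11023085137850, 245574666428191, -3879404643993994, 25250533058034385, -81134370365209452, 143421054608629730, -144252130393913825, 81941279439542806, -23769568184584844, 2675670955947791, 0, 0],
    [534079455961, 18317736809610, -482176666342675, 4869099867162409, -23096405127627556, 55546335317356696, -72984513718312085, 51437695149074013, -18433215850330961, 3190690429503537, 0, 0, 0],
    [1083884617845, 13798723290734, 104594227608706, -1908942288942629, 10587478078503691, -27576375096434461, 36243213671593451, -24126087245637979, 6944019984426693, 0, 0, 0, 0],
    [549749306414, 9128200424403, -131600988070046, 1536523361792178, -8227885033133632, 18989717240949448, -20058615562666502, 7486153677459928, 0, 0, 0, 0, 0],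
    [-143334305722, -9721627675480, 185407845161988, -1261115366171344, 3398283152200274, -4051219689530312, 1787986150149229, 0, 0, 0, 0, 0, 0],
    [-481685921650, -2593569585352, -88588977480862, 728539075005693, -1755795458252631, 2043296574423810, 0, 0, 0, 0, 0, 0, 0],
    [-303721774652, -9952993777452, 88735672755292, -346780183365827, 449230075526742, 0, 0, 0, 0, 0, 0, 0, 0],
    [233628065008, 6243832962442, -20707093237014, 80946713690028, 0, 0, 0, 0, 0, 0, 0, 0, 0],
    [239275444595, -905117894036, 22668133575486, 0, 0, 0, 0, 0, 0, 0, 0, 0, 0],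
    [117832842215, 2444904140573, 0, 0, 0, 0, 0, 0, 0, 0, 0, 0, 0],
    [37188226682, 0, 0, 0, 0, 0, 0, 0, 0, 0, 0, 0, 0]]),
  (98, [
    [-518394297973, 17453278887862, -739497234730900, 7963673702609793, -37158751634289720, 91463997577642522, -132677745031985986, 118934274644165087, -63698008112617110, 19471691233732310, -3158434336433886, 234809667288381],
    [-202293872433, -13486097645827, 390737327833463, -4533185326153963, 23037461721757900, -60671201204943947, 87203809805336866, -69828334573608366, 30763122153017472, -6883890930109258, 619192932088317, 0],
    [22314830892, 5415688719235, -134665838382644, 1792285689128267, -8469736626646703, 18081105903037365, -21533180073042193, 14766639833350601, -5558003223768672, 737695798696787, 0, 0],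
    [-27884025676, -3731410223714, 114562402282905, -1033874531227652, 4030767480196026, -7498644168697624, 7282716368781724, -3392610253398379, 692473497341110, 0, 0, 0],
    [-224117997144, 2248092667434, -174694318168287, 953601376769670, -2630409045459832, 4947215483783473, -4879879809102929, 2103631160772833, 0, 0, 0, 0],
    [-12076228129, -4106298598323, 84463033246481, -615878473671258, 1829370398456118, -2181731482183082, 954592868557923, 0, 0, 0, 0, 0],
    [94930919781, 4782486077724, -46104355599614, 247474602957141, -429114129764689, 340491183061850, 0, 0, 0, 0, 0, 0],
    [89454059523, -1725480702582, 50214393451481, -160438801873765, 209943294662907, 0, 0, 0, 0, 0, 0, 0],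
    [49964126302, 4108987336253, -21789978330472, 49456908241369, 0, 0, 0, 0, 0, 0, 0, 0],
    [40084835518, -2143883213683, 10353701764027, 0, 0, 0, 0, 0, 0, 0, 0, 0],
    [45112665962, 1030803554499, 0, 0, 0, 0, 0, 0, 0, 0, 0, 0],
    [13601063817, 0, 0, 0, 0, 0, 0, 0, 0, 0, 0, 0]]),
  (92, [
    [-366657444994, -6917427442437, 110154085618080, -1726721297874109, 7032351256017694, -14740390932692934, 17222035946516229, -11946539886739213, 4773759158095240, -1240047050410649, 173112182618480],
    [-91005763974, 2763774386348, -86369151427623, 515221932768162, -2088764121065580, 4851862308708638, -6417952188092113, 4694885645238682, -1846949360588414, 288899590268398, 0],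
    [-18346975239, -3508969263734, 92188811314378, -771509758925391, 2710988028470819, -4801310986734329, 4432781304749557, -2017287737448124, 343087667401686, 0, 0],
    [-5640729821, 4213004601189, -91191110453494, 547719167384860, -1455908782034513, 1848358941100928, -1076134934938362, 220631763801791, 0, 0, 0],
    [36236401670, -2970890906065, 70769336645693, -372442167420841, 814339240299362, -705119406645551, 232565153794146, 0, 0, 0, 0],
    [28673032811, 3322560883928, -35393257692816, 152957625006854, -233555727804757, 145239553352836, 0, 0, 0, 0, 0],
    [16605799381, -2745238531890, 24209035361218, -60194271405752, 57985416916023, 0, 0, 0, 0, 0, 0],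
    [13181360732, 2982024218679, -17716335316243, 29549435908034, 0, 0, 0, 0, 0, 0, 0],
    [9937427461, -1266359970746, 4417122221372, 0, 0, 0, 0, 0, 0, 0, 0],
    [13236317262, 531989335311, 0, 0, 0, 0, 0, 0, 0, 0, 0],
    [9347792981, 0, 0, 0, 0, 0, 0, 0, 0, 0, 0]]),
  (86, [
    [805488923, 4265735542399, -85166451386558, 574316962677625, -1858372545166947, 3234637056382133, -3130235934466132, 1650238826305520, -432269203703727, 42541516537333],
    [1147663644, -4274490103063, 73515853716729, -442798899626948, 1251657548369316, -1812235367064279, 1361076909631556, -502910911362253, 72449938742717, 0],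
    [4037889079, 2975389001907, -49094065322303, 266595283766278, -652771533500329, 786096389055109, -451239404370883, 96849901747276, 0, 0],
    [6896972847, -4821335297018, 63237977133693, -275671685788074, 520755787681405, -429722513201901, 123041497050168, 0, 0, 0],
    [4142541440, 3505449474016, -36199257168332, 120485697803939, -150755201093508, 59552280724698, 0, 0, 0, 0],
    [916503480, -2922083228574, 18792154729819, -36826982002357, 22348276625159, 0, 0, 0, 0, 0],
    [-111098813, 2334144851935, -10513785166966, 11510669780307, 0, 0, 0, 0, 0, 0],
    [6810678411, -736803016986, 2324966926896, 0, 0, 0, 0, 0, 0, 0],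
    [-3728116903, 195223743796, 0, 0, 0, 0, 0, 0, 0, 0],
    [12268482593, 0, 0, 0, 0, 0, 0, 0, 0, 0]]),
  (81, [
    [447047453645, -20680175213506, 291102829872924, -1549755653674281, 3776733864108642, -4735432709467608, 3146289184155108, -996519081947057, 104368807340524],
    [-62306807747, 2229831979164, -27129128053653, 134048451186685, -295952286804945, 320279220153112, -173797256876889, 38022641007105, 0],
    [-55033652366, -2258459948324, 23618303348069, -84914897999068, 152157365550732, -133461292560519, 42216459751652, 0, 0],
    [-28772387300, 3183776145094, -24844099712558, 71102965056110, -81744940480630, 30642168462692, 0, 0, 0],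
    [-7282644615, -1430808040931, 10433510012208, -21991020143990, 13133580217053, 0, 0, 0, 0],
    [8046057402, 1108538452375, -5053766411277, 4877104884895, 0, 0, 0, 0, 0],
    [9490576917, -558456747519, 1304191897865, 0, 0, 0, 0, 0, 0],
    [-15828858842, 107796405025, 0, 0, 0, 0, 0, 0, 0],
    [11362115268, 0, 0, 0, 0, 0, 0, 0, 0]]),
  (75, [
    [-489802012936, 732251614479, -4912318269551, 65225824534391, -162386953297308, 230293187705205, -167240124645995, 32131680321803],
    [-147343022689, -3982383869664, 37417580159804, -115891090553699, 175451037703876, -114486085263759, 19724902250183, 0],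
    [143948873016, 556404149705, -7739061725443, 21784330280755, -40244281391272, 27746327563365, 0, 0],
    [57927928791, -2283050368239, 14189223630673, -31686455003471, 20909874915464, 0, 0, 0],
    [15613643270, 816389844269, -3938056441908, 3865774896041, 0, 0, 0, 0],
    [4563948695, -262318654949, 647499495502, 0, 0, 0, 0, 0],
    [-17081737433, 104943495972, 0, 0, 0, 0, 0, 0],
    [13376822832, 0, 0, 0, 0, 0, 0, 0]]),
  (69, [
    [-894109631, -1946436147642, 16104931977437, -47983307298346, 62867957057210, -35993374835480, 7267682328125],
    [-6437245885, 1823444129264, -11955930950501, 26209479768892, -22573423971960, 6421294399759, 0],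
    [-3777307599, -854610260313, 4557207414890, -7155026237034, 3394923058176, 0, 0],
    [-11126513485, 382656689326, -1823802632322, 2004810700140, 0, 0, 0],
    [-5768000346, -301327520221, 738460785577, 0, 0, 0, 0],
    [-9931554720, 67449835900, 0, 0, 0, 0, 0],
    [15319155438, 0, 0, 0, 0, 0, 0]]),
  (63, [
    [363883396, 1002359335502, -6171311886129, 12621890590933, -10103449529542, 2666414791348],
    [9780722091, -666663590652, 3238411708078, -4570043567174, 1899182318384, 0],
    [5708640088, 214724848953, -826204637329, 804718653201, 0, 0],
    [9172211785, -69384237107, 298153939796, 0, 0, 0],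
    [-7048033750, 84157455585, 0, 0, 0, 0],
    [17577171660, 0, 0, 0, 0, 0]]),
  (56, [
    [-2520083176, -346138471808, 1740478481977, -2443677970315, 985598366874],
    [-14774847755, 313726402034, -948824926237, 654377876476, 0],
    [14471306086, -131256727855, 210826866645, 0, 0],
    [-24795836430, 73647284345, 0, 0, 0],
    [11735700398, 0, 0, 0, 0]]),
  (50, [
    [-9100306432, 135454299557, -388159449686, 262767296441],
    [28058653137, -140304872251, 150919178540, 0],
    [-16132866681, 47479450285, 0, 0],
    [8220504421, 0, 0, 0]]),
  (44, [
    [19579787528, -87718999113, 81717612418],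
    [-16994473771, 38930460145, 0],
    [4578119175, 0, 0]]),
  (38, [
    [-7351206825, 17035742413],
    [4236337865, 0]]),
  (31, [
    [2800496138]])]

def ccf : ℤ := 36147609751794

def acf : List ℤ := [
  783881892797108303710732021564555382590703955123039423692800,
  301277203862988486238891533951006727208683115465406910707939,
  14235665501385271740741295113488894947355343687974256290474,
  599494793500892412865284953774451957379658525643672616364,
  26200328231105646150090840316469216449152046238197333276,
  113757876425736760739941448565898036737954746332804333,
  47259087525249699853553398206683809826689544598366,
  178837775982789086917726080651014826812781540812,
  11928780161333989415128228059363102134213264632,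
  503079833996826043021023233226759880847373759,
  136287603883533770824729491597616405084111103,
  290060624124333047762488221737794070119315,
  8430761512921611205789825834547180799876,
  126710226718714426328310433095832044807,
  6651117508351330584735924695771137288,
  90742072993833776664862431602743028,
  2716625586189573179006219175409628,
  32827309552110000805049931327027,
  978690978756088039720158345153,
  12050800805217118988393894403,
  309307069781723552410466142,
  3765526968567135141001878,
  94220058588993095819085,
  1070841196951293527067,
  21717286005803515176,
  241447256851126922,
  4848504766546521,
  53280140983621,
  979297122549,
  10017959455,
  166815220,
  1669542]

def bl16 : List ℕ := [1, 16, 120, 560, 1820, 4368, 8008, 11440, 12870, 11440, 8008, 4368, 1820, 560, 120, 16, 1]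
def bl32 : List ℕ := [1, 32, 496, 4960, 35960, 201376, 906192, 3365856, 10518300, 28048800, 64512240, 129024480, 225792840, 347373600, 471435600, 565722720, 601080390, 565722720, 471435600, 347373600, 225792840, 129024480, 64512240, 28048800, 10518300, 3365856, 906192, 201376, 35960, 4960, 496, 32, 1]

/-- packed root coefficients of the three-point form -/
def T0 : ℕ := rp 72 278 17 (2 ^ 277) 176 (2 ^ 51) 56 bl16 3 1 (pk 278 (17 ^ 3) (2 ^ 277)
  (Ks oZ bs 16 (2 ^ (278 * 17 ^ 0)) 1 (2 ^ (278 * 17 ^ 1)) 1 (2 ^ (278 * 17 ^ 2)) 1))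

/-- packed root coefficients of the determinant -/
def D0 : ℕ := rp 72 70 17 (2 ^ 69) 0 (2 ^ 19) 20 bl16 3 1 (pk 70 (17 ^ 3) (2 ^ 69)
  (DE oZ (2 ^ (70 * 17 ^ 0)) 1 (2 ^ (70 * 17 ^ 1)) 1 (2 ^ (70 * 17 ^ 2)) 1))

/-- packed root coefficients of the two-point form -/
def B0 : ℕ := rp 90 261 33 (2 ^ 260) 164 (2 ^ 54) 56 bl32 1 1 (pk 261 (33 ^ 1) (2 ^ 260)
  (BE oZ bs ccf (2 ^ 204) acf (2 ^ (261 * 33 ^ 0)) 1))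

end data

section real

theorem gU_scale (ν : ℕ) (c w s : ℝ) : ∀ k, gU ν (c * w) (c ^ 2 * s) k = c ^ k * gU ν w s k ∧
    gU ν (c * w) (c ^ 2 * s) (k + 1) = c ^ (k + 1) * gU ν w s (k + 1) := by
  intro k
  induction k with
  | zero => simp only [gU]; constructor <;> ring
  | succ k ih =>
    refine ⟨ih.2, ?_⟩
    rw [gU, ih.1, ih.2, gU]; ring

theorem nxt_oR (ν : ℕ) (w s : ℝ) (k : ℕ) : nxt oR ν w s k (gU ν w s k) (gU ν w s (k + 1)) = gU ν w s (k + 2) := by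
  simp only [nxt, oR, gU, Int.ofNat_eq_natCast, Int.cast_natCast]

theorem kgo_add (x1 y1 x2 y2 w s : ℝ) (m : ℕ) : ∀ bs k z a b c,
    kgo oR x1 y1 x2 y2 w s 1 m bs k (z + a) b c = z + kgo oR x1 y1 x2 y2 w s 1 m bs k a b c := by
  induction m with
  | zero => intro bs k z a b c; rfl
  | succ m ih =>
    intro bs k z a b c
    rw [kgo, kgo, ← ih]
    congr 1
    simp only [oR]; ring

theorem ago_add (u q : ℝ) (l : List ℤ) : ∀ k z a b c,
    ago oR u 1 q l k (z + a) b c = z + ago oR u 1 q l k a b c := by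
  induction l with
  | nil => intro k z a b c; rfl
  | cons t l ih =>
    intro k z a b c
    rw [ago, ago, ← ih]
    congr 1
    simp only [oR]; ring

theorem nxt_cast (ν : ℕ) (w s : ℤ) (k : ℕ) (a b : ℤ) :
    ((nxt oZ ν w s k a b : ℤ) : ℝ) = nxt oR ν (w : ℝ) s k a b := by
  have : nxt oZ ν w s k a b = (Int.ofNat (2 * (k + 1) + ν)) * (w * b) - (Int.ofNat ((k + 1) * (k + ν))) * (s * a) := rfl
  rw [this]
  simp only [nxt, oR]
  push_cast
  rfl

theorem ago_cast (u e q : ℤ) (l : List ℤ) : ∀ (k : ℕ) (a b c : ℤ),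
    ((ago oZ u e q l k a b c : ℤ) : ℝ) = ago oR (u : ℝ) e q l k a b c := by
  induction l with
  | nil => intro k a b c; rfl
  | cons t l ih =>
    intro k a b c
    rw [ago, ago, ih, nxt_cast]
    congr 1
    have : oZ.add (oZ.mul a e) (oZ.mul (oZ.cst t) c) = a * e + t * c := rfl
    rw [this]
    simp only [oR]
    push_cast
    rfl

/-- barycentric coordinates -/
noncomputable def Xc (u : ℝ) : ℝ := (2 * u + 2) / 3
noncomputable def Yc (u : ℝ) : ℝ := (1 - 2 * u) / 3

theorem XY (u : ℝ) : Xc u + Yc u = 1 := by unfold Xc Yc; ring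

theorem uXY (u : ℝ) : uF oR (Xc u) (Yc u) = 2 * u := by
  simp only [uF, oR, Xc, Yc]; push_cast; ring

variable (S : Finset (EuclideanSpace ℝ (Fin 10))) (hnorm : ∀ x ∈ S, ‖x‖ = 1)

theorem Adm.cg {S : Finset (EuclideanSpace ℝ (Fin 10))} {A A' : ℝ} {B B' : ℝ → ℝ} {K K' : ℝ → ℝ → ℝ → ℝ}
    (h : Adm S A B K) (hA : A = A') (hB : ∀ u, B u = B' u) (hK : ∀ u v t, K u v t = K' u v t) : Adm S A' B' K' := by
  have e1 : B = B' := funext hB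
  have e2 : K = K' := by funext u v t; exact hK u v t
  rw [← hA, ← e1, ← e2]; exact h

include hnorm in
theorem adm_gram (m k : ℕ) (l : List (List ℤ)) :
    Adm S 0 (fun u => gram oR (Xc u) (Yc u) (Xc u) (Yc u) m l *
        gU 7 (4 * (1 - u ^ 2)) (4 ^ 2 * ((1 - u ^ 2) * (1 - u ^ 2))) k)
      (fun u v t => gram oR (Xc u) (Yc u) (Xc v) (Yc v) m l *
        gU 7 (4 * (t - u * v)) (4 ^ 2 * ((1 - u ^ 2) * (1 - v ^ 2))) k) := by
  induction l with
  | nil => exact (Adm.zero S).cg rfl (fun u => by simp [gram, oR]) (fun u v t => by simp [gram, oR])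
  | cons r l ih =>
    refine (((adm1 S hnorm (fun u => hF0 oR (Xc u) (Yc u) m r) k).smul (4 ^ k) (by positivity)).add ih).cg
      (by ring) (fun u => ?_) (fun u v t => ?_)
    · rw [(gU_scale 7 4 _ _ k).1]
      simp only [gram, oR]; ring
    · rw [(gU_scale 7 4 _ _ k).1]
      simp only [gram, oR]; ring

include hnorm in
theorem adm_blk (m k : ℕ) (b : ℕ × List (List ℤ)) :
    Adm S 0 (fun u => blk oR (Xc u) (Yc u) (Xc u) (Yc u) m b *
        gU 7 (4 * (1 - u ^ 2)) (4 ^ 2 * ((1 - u ^ 2) * (1 - u ^ 2))) k)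
      (fun u v t => blk oR (Xc u) (Yc u) (Xc v) (Yc v) m b *
        gU 7 (4 * (t - u * v)) (4 ^ 2 * ((1 - u ^ 2) * (1 - v ^ 2))) k) := by
  refine ((adm_gram S hnorm m k b.2).smul (2 ^ b.1) (by positivity)).cg (by ring) (fun u => ?_) (fun u v t => ?_)
  · simp only [blk, oR, Int.ofNat_eq_natCast, Int.cast_natCast]; push_cast; ring
  · simp only [blk, oR, Int.ofNat_eq_natCast, Int.cast_natCast]; push_cast; ring

include hnorm in
theorem adm_kgo (m : ℕ) : ∀ (bs : List (ℕ × List (List ℤ))) (k : ℕ) (A : ℝ) (B : ℝ → ℝ) (K : ℝ → ℝ → ℝ → ℝ), Adm S A B K →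
    Adm S A (fun u => kgo oR (Xc u) (Yc u) (Xc u) (Yc u) (4 * (1 - u ^ 2)) (4 ^ 2 * ((1 - u ^ 2) * (1 - u ^ 2))) 1 m bs k
        (B u) (gU 7 (4 * (1 - u ^ 2)) (4 ^ 2 * ((1 - u ^ 2) * (1 - u ^ 2))) k)
        (gU 7 (4 * (1 - u ^ 2)) (4 ^ 2 * ((1 - u ^ 2) * (1 - u ^ 2))) (k + 1)))
      (fun u v t => kgo oR (Xc u) (Yc u) (Xc v) (Yc v) (4 * (t - u * v)) (4 ^ 2 * ((1 - u ^ 2) * (1 - v ^ 2))) 1 m bs k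
        (K u v t) (gU 7 (4 * (t - u * v)) (4 ^ 2 * ((1 - u ^ 2) * (1 - v ^ 2))) k)
        (gU 7 (4 * (t - u * v)) (4 ^ 2 * ((1 - u ^ 2) * (1 - v ^ 2))) (k + 1))) := by
  induction m with
  | zero => intro bs k A B K h; exact h
  | succ m ih =>
    intro bs k A B K h
    refine (ih bs.tail (k + 1) _ _ _ (h.add (adm_blk S hnorm m (k + 1) (bs.headD (0, []))))).cg (by ring)
      (fun u => ?_) (fun u v t => ?_)
    · rw [kgo, nxt_oR]
      congr 1
      simp only [oR, mul_one]
    · rw [kgo, nxt_oR]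
      congr 1
      simp only [oR, mul_one]

include hnorm in
theorem adm_ago (l : List ℤ) : (∀ t ∈ l, 0 ≤ t) → ∀ (k : ℕ) (A : ℝ) (B : ℝ → ℝ) (K : ℝ → ℝ → ℝ → ℝ), Adm S A B K →
    Adm S (ago oR (2 * 1) 1 (2 ^ 2 * 1) l k A (gU 8 (2 * 1) (2 ^ 2 * 1) k) (gU 8 (2 * 1) (2 ^ 2 * 1) (k + 1)))
      (fun u => ago oR (2 * u) 1 (2 ^ 2 * 1) l k (B u) (gU 8 (2 * u) (2 ^ 2 * 1) k) (gU 8 (2 * u) (2 ^ 2 * 1) (k + 1))) K := by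
  induction l with
  | nil => intro _ k A B K h; exact h
  | cons t l ih =>
    intro hl k A B K h
    have ht : (0:ℝ) ≤ t := by exact_mod_cast hl t (by simp)
    refine (ih (fun s hs => hl s (by simp [hs])) (k + 1) _ _ _ (h.add ((adm2 S hnorm (k + 1)).smul (t * 2 ^ (k + 1)) (by positivity)))).cg
      ?_ (fun u => ?_) (fun u v t => by ring)
    · rw [ago, nxt_oR, (gU_scale 8 2 1 1 k).2]
      congr 1
      simp only [oR]; ring
    · rw [ago, nxt_oR, (gU_scale 8 2 u 1 k).2]
      congr 1
      simp only [oR]; ring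

/-- the value of the whole form -/
theorem KE_val (bs : List (ℕ × List (List ℤ))) (m : ℕ) (u v t : ℝ) :
    KE oR bs m (Xc u) (Yc u) (Xc v) (Yc v) (Xc t) (Yc t) =
      kTop oR bs m (Xc u) (Yc u) (Xc v) (Yc v) (4 * (t - u * v)) (4 ^ 2 * ((1 - u ^ 2) * (1 - v ^ 2))) 1 := by
  rw [KE, uXY, uXY, uXY]
  have e : ∀ u, oR.add (Xc u) (Yc u) = 1 := XY
  simp only [e]
  congr 1
  · simp only [oR]; push_cast; ring
  · simp only [oR, qF]; push_cast; ring

theorem DE_val (u v t : ℝ) : DE oR (Xc u) (Yc u) (Xc v) (Yc v) (Xc t) (Yc t) =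
    65536 * (1 + 2 * u * v * t - u ^ 2 - v ^ 2 - t ^ 2) := by
  rw [DE, uXY, uXY, uXY]
  have e : ∀ u, oR.add (Xc u) (Yc u) = 1 := XY
  simp only [e]
  simp only [oR, DE', sqF]; push_cast; ring

theorem hF_symm_gram (x1 y1 x2 y2 : ℝ) (m : ℕ) (l : List (List ℤ)) :
    gram oR x1 y1 x2 y2 m l = gram oR x2 y2 x1 y1 m l := by
  induction l with
  | nil => rfl
  | cons r l ih => rw [gram, gram, ih]; simp only [oR]; rw [mul_comm (hF0 _ x1 _ _ _)]

theorem blk_symm (x1 y1 x2 y2 : ℝ) (m : ℕ) (b : ℕ × List (List ℤ)) :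
    blk oR x1 y1 x2 y2 m b = blk oR x2 y2 x1 y1 m b := by
  rw [blk, blk, hF_symm_gram]

theorem kgo_symm (x1 y1 x2 y2 w s e : ℝ) (m : ℕ) : ∀ bs k a b c,
    kgo oR x1 y1 x2 y2 w s e m bs k a b c = kgo oR x2 y2 x1 y1 w s e m bs k a b c := by
  induction m with
  | zero => intros; rfl
  | succ m ih => intro bs k a b c; rw [kgo, kgo, ih, blk_symm]

theorem KE_symm (bs : List (ℕ × List (List ℤ))) (m : ℕ) (u v t : ℝ) :
    KE oR bs m (Xc u) (Yc u) (Xc v) (Yc v) (Xc t) (Yc t) = KE oR bs m (Xc v) (Yc v) (Xc u) (Yc u) (Xc t) (Yc t) := by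
  rw [KE_val, KE_val, kTop, kTop, kgo_symm, blk_symm, mul_comm u v, mul_comm (1 - u ^ 2)]

include hnorm in
theorem adm_all (e : ℕ) (r : List ℤ) (rs : List (List ℤ)) (bt : List (ℕ × List (List ℤ))) (c a0 : ℤ) (al : List ℤ)
    (hal : ∀ t ∈ al, 0 ≤ t) :
    Adm S ((ago oZ 2 1 4 al 0 (2 ^ e * (c * c)) 1 16 : ℤ) : ℝ)
      (fun u => BE oR ((e, r :: rs) :: bt) c a0 al (Xc u) (Yc u) - a0)
      (fun u v t => KE oR ((e, r :: rs) :: bt) 16 (Xc u) (Yc u) (Xc v) (Yc v) (Xc t) (Yc t)) := by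
  have h0 := (((adm0 S c (fun u => hF0 oR (Xc u) (Yc u) 16 r)).add (adm_gram S hnorm 16 0 rs)).smul (2 ^ e) (by positivity))
  have h1 := adm_ago S hnorm al hal 0 _ _ _ (adm_kgo S hnorm 16 bt 0 _ _ _ h0)
  refine h1.cg ?_ (fun u => ?_) (fun u v t => ?_)
  · rw [ago_cast]
    simp only [gU]
    push_cast
    congr 1 <;> ring
  · have e : ∀ u, oR.add (Xc u) (Yc u) = 1 := XY
    have q : qF oR 1 (2 * u) = 4 * (1 - u ^ 2) := by simp only [qF, oR]; push_cast; ring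
    have q' : sqF oR (4 * (1 - u ^ 2)) = 4 ^ 2 * ((1 - u ^ 2) * (1 - u ^ 2)) := by simp only [sqF, oR]; ring
    have c1 : oR.cst 1 = 1 := by simp [oR]
    have g1 : oR.mul (oR.cst 4) (sqF oR 1) = 2 ^ 2 * 1 := by simp only [oR, sqF]; push_cast; ring
    have g2 : oR.mul (oR.cst 8) (2 * u) = gU 8 (2 * u) (2 ^ 2 * 1) (0 + 1) := by simp only [oR, gU]; push_cast; ring
    have g3 : oR.mul (oR.cst 7) (4 * (1 - u ^ 2)) = gU 7 (4 * (1 - u ^ 2)) (4 ^ 2 * ((1 - u ^ 2) * (1 - u ^ 2))) (0 + 1) := by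
      simp only [oR, gU]; push_cast; ring
    have g4 : sqF oR (sqF oR (sqF oR (sqF oR 1))) = 1 := by simp only [sqF, oR]; ring
    rw [BE, uXY]
    simp only [e, q, q', c1, g1, g2, g4, kTop, g3, List.headD_cons, List.tail_cons]
    have h8 := ago_add (2 * u) (2 ^ 2 * 1) al 0 a0 0 (gU 8 (2 * u) (2 ^ 2 * 1) 0) (gU 8 (2 * u) (2 ^ 2 * 1) (0 + 1))
    rw [add_zero] at h8
    have h9 := fun z => ago_add (2 * u) (2 ^ 2 * 1) al 0 z 0 (gU 8 (2 * u) (2 ^ 2 * 1) 0) (gU 8 (2 * u) (2 ^ 2 * 1) (0 + 1))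
    simp only [add_zero] at h9
    rw [h9]
    have c0 : oR.cst a0 = a0 := rfl
    have gz : ∀ ν w s, gU (R := ℝ) ν w s 0 = 1 := fun _ _ _ => rfl
    simp only [gz] at h8 ⊢
    rw [c0, h8]
    have k9 := fun z => kgo_add (Xc u) (Yc u) (Xc u) (Yc u) (4 * (1 - u ^ 2)) (4 ^ 2 * ((1 - u ^ 2) * (1 - u ^ 2))) 16 bt 0 z 0 1
      (gU 7 (4 * (1 - u ^ 2)) (4 ^ 2 * ((1 - u ^ 2) * (1 - u ^ 2))) (0 + 1))
    simp only [add_zero] at k9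
    rw [k9, k9 (blk _ _ _ _ _ _ _)]
    simp only [blk, gram, oR]
    have : ∀ a b : ℤ, Int.mul a b = a * b := fun _ _ => rfl
    simp only [this]
    push_cast
    simp only [Int.ofNat_eq_natCast, Int.cast_natCast]
    push_cast
    ring
  · rw [KE_val, kTop]
    have c1 : oR.cst 1 = 1 := by simp [oR]
    have g3 : oR.mul (oR.cst 7) (4 * (t - u * v)) = gU 7 (4 * (t - u * v)) (4 ^ 2 * ((1 - u ^ 2) * (1 - v ^ 2))) (0 + 1) := by
      simp only [oR, gU]; push_cast; ring
    rw [c1, g3]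
    simp only [List.headD_cons, List.tail_cons]
    congr 1
    simp only [blk, gram, oR, gU, Int.ofNat_eq_natCast, Int.cast_natCast]
    push_cast
    ring

end real

section trees
open Tr

def t1 : Tr :=
  (B (A (B (C (G 805306368) (C (G 16777216) Z)) (B (C (G 25165824) (C (A (G 1572864) (C (G 98304) Z)) (C Z (B (C Z (A
  (C Z (A (G 12288) (G 768))) Z)) (C Z (A (C Z (C Z (C Z (C Z (A (C Z (A (G 12288) (G 6144))) (G 192)))))) Z)))))) (C
  (A (G 6144) (B (G 196608) (G 8192))) (A (C Z (C Z (C Z (C Z (C Z (C Z (A (C Z (C Z (B (G 512) Z))) Z))))))) Z)))) (B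
  S (C (B (A (C (G 1048576) (C (G 393216) (A (G 98304) (G 1536)))) S) (B (C (A (G 131072) (A (C (G 49152) (A (G 24576)
  (B S (G 4096)))) S)) (C (A (B (C (G 32768) (G 8192)) (A (G 12288) (C (C (G 12288) (B (G 8192) (G 4096))) (G 384))))
  (A (C (A (B (C (G 12288) (A (G 12288) (C (B S (G 6144)) (B S (G 4096))))) (B (C (A (G 8192) (B (G 6144) (G 4096)))
  (C (A (G 6144) (B (A (G 6144) (G 4096)) (G 3072))) (G 3072))) (C (A (G 6144) (G 3072)) (C (A (G 3072) Z) Z)))) (B S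
  (A (B (C (G 3072) (G 768)) Z) Z))) (C (C (A (B (G 3072) Z) Z) Z) Z)) S)) Z)) (A (C (A (G 24576) (B (G 24576) Z)) (A
  (G 3072) (C (B (C (B (G 4096) Z) Z) Z) Z))) (C (A (B (C (G 6144) (G 3072)) Z) Z) (A (C (B (C (G 512) Z) Z) Z) Z)))))
  (C Z (A Z Z))))) (A (C (A (B Z (C Z (B Z (C Z (A Z (B Z Z)))))) (B Z (C (A Z (B Z Z)) (B Z Z)))) (B (A (C Z (B Z (B
  (A Z Z) (C Z (C Z (C Z (C Z (C Z (C Z (A Z Z)))))))))) Z) (A (C (B Z Z) (C Z (C Z (C Z (B (C Z (C Z (A Z Z))) Z)))))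
  (C (B Z Z) Z)))) (C (A (C (B Z (B Z (C (A Z Z) Z))) (B (A Z (B Z (C Z (B Z Z)))) (B (C Z (A (B Z Z) Z)) (C Z Z))))
  (B (C Z (B (C Z (B Z (A (B Z (C Z Z)) (C Z Z)))) (C Z (B (C (A (A (B Z Z) (B (C Z Z) Z)) Z) Z) Z)))) (C (B (C Z (B Z
  Z)) Z) (B Z (C Z (A (C Z Z) Z)))))) (B (B Z (C (A Z (B Z (C Z Z))) Z)) (C (C (B (C (A (B Z Z) Z) Z) (C (A (C Z Z) Z)
  Z)) Z) (C Z (C Z (A Z Z))))))))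
def t2 : Tr :=
  (C S (A (B (C (A (A (B (C Z (B (C Z (A Z Z)) (C Z (C Z Z)))) (C S (B (C Z (A (C Z Z) Z)) (C S (B Z Z))))) (B (C Z (B
  (C Z Z) (C Z Z))) (C S (B (C Z Z) (C S (B Z (C S Z))))))) (C (B Z S) (B (A (C Z (C Z Z)) (C Z (C Z Z))) (A (B (C (A
  (B Z Z) (B Z Z)) Z) (C S (B Z (C S (B Z Z))))) (B (C Z Z) Z))))) (C (A (B (C (A (C (B (A Z Z) Z) Z) (C (B Z Z) Z))
  Z) (A Z Z)) (B (C (A Z Z) Z) (A (C (B Z Z) Z) Z))) (A (C Z (B (A Z Z) Z)) (B (C Z (C Z (A Z Z))) (A (B (C Z (C Z (A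
  Z (C Z (C Z (B Z Z)))))) Z) (C Z (B (C Z (A (C Z (C Z (C Z (C Z (B Z Z))))) Z)) (A Z (C Z (B Z Z)))))))))) (C S (A Z
  (A (B (C (B Z Z) Z) Z) (B (B (C (C Z Z) Z) Z) Z))))) (B (C (A (A (B (C Z (C Z Z)) (C S Z)) (B (C (B (C Z Z) (C S Z))
  (C Z Z)) (C S Z))) (B (C (A (A (B (C Z Z) Z) Z) Z) Z) (C S (C (B Z S) (A Z Z))))) (C (A (A (C (B Z Z) Z) (B (C Z Z)
  (B (C Z Z) (C Z Z)))) Z) (A (C (A Z (B Z Z)) (B (A Z Z) (A (C Z (B Z (A (C Z (B Z Z)) (C Z (B Z Z))))) Z))) (C (B Z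
  Z) (B Z Z))))) (C S (A (A Z (B (C Z (C Z (C Z (B (C Z (B (C Z (A Z Z)) Z)) Z)))) (C S Z))) (B Z (C S (B Z (C S (B Z
  (C S (B Z (C S (A (B Z (A Z Z)) Z))))))))))))))
def t3 : Tr :=
  (A (B (G 51539607552) (C S (A Z (A (B (C (G 262144) (G 384)) (C S (A (B Z (C S (B Z Z))) (B Z (C S (B Z (C S
  Z))))))) (B (C (G 262144) Z) (C S (B Z (C S (A (B Z Z) (B Z Z)))))))))) (B S (C S (B (C (A (A (B (G 98304) (C S Z))
  (B S Z)) S) (A (A Z (B S (C Z (A (B Z Z) (B S Z))))) S)) (A (C S (A (B (C Z Z) (C S Z)) (B Z Z))) (C S (B (A Z S) (A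
  Z (C S Z)))))))))
def t4 : Tr :=
  (B S (C (A (B (C (A (B Z (C (B Z (A Z Z)) (B Z (A Z Z)))) (B S (B (A (C (A Z Z) (A (B Z Z) (B S Z))) S) (A (C Z Z)
  Z)))) (C Z (A (B (A (B (C Z Z) (C Z Z)) (C (B S Z) Z)) Z) Z))) (B (C (A (B (C (A (B (C Z (A Z Z)) (C Z (A Z Z))) Z)
  (A (B (C (A Z Z) Z) (A (C Z Z) (C (C Z Z) Z))) Z)) (C Z Z)) Z) (C Z Z)) (A (C Z (C Z Z)) (C Z (C Z Z))))) (B S (C Z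
  (C (A (B Z Z) Z) Z)))) (A (B (C (A (B Z (B (A Z (C Z Z)) (C (A (C Z Z) (C (C Z Z) Z)) Z))) (B S (C (A (B (C (C Z Z)
  Z) (C (C Z Z) Z)) (C (C Z Z) Z)) Z))) Z) (C (A (A (C (C (B Z Z) Z) Z) (C (C Z Z) Z)) Z) Z)) (C (B S Z) (B S Z)))))
def t5 : Tr :=
  (B S (C S (A (B (C (A (B (C Z Z) (C S Z)) (B S (C S (A Z (C S Z))))) (C (C (C (A (B Z Z) (B S Z)) (A Z Z)) Z) (C Z
  (C (A Z Z) (C Z (C Z (C Z (A Z (B S Z))))))))) (C S (B (C (B (A Z (A Z Z)) Z) Z) (C S (B Z (C S (B (C Z (A Z Z)) (C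
  S (A (B Z (C S (B Z (C S (A (B Z (C S (B Z (C S (B Z (A Z (C S (B Z (C S (B Z (C S (A Z Z)))))))))))) Z))))) (B Z (C
  S (A Z Z)))))))))))) (B S (C S (A (B (C Z Z) (C S (B Z (C S (C Z (B Z (B Z (C S (A Z Z))))))))) (B S (C S Z))))))))
def tB : Tr := (A (A (A (A Z Z) Z) Z) (A (A Z Z) (A (A Z Z) Z)))
def p0 : Pos := ⟨0, 20, 0, 20, 0, 20⟩
end trees

section checks
set_option maxRecDepth 100000
set_option exponentiation.threshold 1000000

theorem ck1 : chk 72 16 3 56 20 t1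
    (nL 72 16 3 0 (nR 72 16 3 2 (nL 72 16 3 1 (nL 72 16 3 0 T0)))) (2 ^ 51)
    (nL 72 16 3 0 (nR 72 16 3 2 (nL 72 16 3 1 (nL 72 16 3 0 D0)))) (2 ^ 19)
    (Pos.left (Pos.right (Pos.left (Pos.left p0 0) 1) 2) 0) = true := by decide +kernel

theorem ck2 : chk 72 16 3 56 20 t2
    (nR 72 16 3 1 (nL 72 16 3 0 T0)) (2 ^ 51)
    (nR 72 16 3 1 (nL 72 16 3 0 D0)) (2 ^ 19)
    (Pos.right (Pos.left p0 0) 1) = true := by decide +kernel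

theorem ck3 : (bdChk 72 (17 ^ 3) 56 T0 && bdChk 72 (17 ^ 3) 20 D0 &&
  chk 72 16 3 56 20 t3
    (nL 72 16 3 2 (nL 72 16 3 1 (nL 72 16 3 0 T0))) (2 ^ 51)
    (nL 72 16 3 2 (nL 72 16 3 1 (nL 72 16 3 0 D0))) (2 ^ 19)
    (Pos.left (Pos.left (Pos.left p0 0) 1) 2) &&
  chk 72 16 3 56 20 t4
    (nR 72 16 3 0 (nR 72 16 3 2 (nL 72 16 3 1 (nL 72 16 3 0 T0)))) (2 ^ 51)
    (nR 72 16 3 0 (nR 72 16 3 2 (nL 72 16 3 1 (nL 72 16 3 0 D0)))) (2 ^ 19)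
    (Pos.right (Pos.right (Pos.left (Pos.left p0 0) 1) 2) 0) &&
  chk 72 16 3 56 20 t5
    (nR 72 16 3 0 T0) (2 ^ 51)
    (nR 72 16 3 0 D0) (2 ^ 19)
    (Pos.right p0 0)) = true := by decide +kernel

theorem ckB : (Nat.blt (BE oN bs ccf (2 ^ 204) acf 1 1) (2 ^ 260) && bdChk 90 (33 ^ 1) 56 B0 &&
  chk 90 32 1 56 1 tB B0 (2 ^ 54) 0 0 p0) = true := by decide +kernel

theorem ckL : (Nat.blt (Ks oN bs 16 1 1 1 1 1 1) (2 ^ 277) && Nat.blt (DE oN 1 1 1 1 1 1) (2 ^ 69)) = true := by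
  decide +kernel

theorem ckA : (acf.all (fun t => decide (0 ≤ t)) && decide (ago oZ 2 1 4 acf 0 (2 ^ 123 * (ccf * ccf)) 1 16 < 554 * 2 ^ 204)) = true := by
  decide +kernel

theorem acf_len : acf.length = 32 := rfl
theorem bl16_eq : bl16 = (List.range (16 + 1)).map (Nat.choose 16) := by decide +kernel
theorem bl32_eq : bl32 = (List.range (32 + 1)).map (Nat.choose 32) := by decide +kernel

end checks

section final

theorem chkA {w d A m md : ℕ} {l r : Tr} {T off D offD : ℕ} {p : Pos} (h0 : (Nat.blt 0 A && p.ok 0) = true)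
    (h1 : chk w d A m md l (nL w d A 0 T) off (nL w d A 0 D) offD (p.left 0) = true)
    (h2 : chk w d A m md r (nR w d A 0 T) off (nR w d A 0 D) offD (p.right 0) = true) :
    chk w d A m md (.A l r) T off D offD p = true := by
  rw [chk, h0, h1, h2]; rfl

theorem chkB {w d A m md : ℕ} {l r : Tr} {T off D offD : ℕ} {p : Pos} (h0 : (Nat.blt 1 A && p.ok 1) = true)
    (h1 : chk w d A m md l (nL w d A 1 T) off (nL w d A 1 D) offD (p.left 1) = true)
    (h2 : chk w d A m md r (nR w d A 1 T) off (nR w d A 1 D) offD (p.right 1) = true) :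
    chk w d A m md (.B l r) T off D offD p = true := by
  rw [chk, h0, h1, h2]; rfl

theorem chkC {w d A m md : ℕ} {l r : Tr} {T off D offD : ℕ} {p : Pos} (h0 : (Nat.blt 2 A && p.ok 2) = true)
    (h1 : chk w d A m md l (nL w d A 2 T) off (nL w d A 2 D) offD (p.left 2) = true)
    (h2 : chk w d A m md r (nR w d A 2 T) off (nR w d A 2 D) offD (p.right 2) = true) :
    chk w d A m md (.C l r) T off D offD p = true := by
  rw [chk, h0, h1, h2]; rfl

theorem ck_all : bdChk 72 (17 ^ 3) 56 T0 = true ∧ bdChk 72 (17 ^ 3) 20 D0 = true ∧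
    chk 72 16 3 56 20 (.A (.B (.C t3 (.A t1 t4)) t2) t5) T0 (2 ^ 51) D0 (2 ^ 19) p0 = true := by
  have h := ck3
  simp only [Bool.and_eq_true] at h
  obtain ⟨⟨⟨⟨h1, h2⟩, h3⟩, h4⟩, h5⟩ := h
  exact ⟨h1, h2, chkA rfl (chkB rfl (chkC rfl h3 (chkA rfl ck1 h4)) ck2) h5⟩

theorem p0_ord (x : ℕ → ℝ) (h1 : x 0 ≤ x 1) (h2 : x 1 ≤ x 2) : p0.Ord x := by
  refine ⟨?_, ?_, ?_, ?_, ?_⟩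
  · simp only [p0, Nat.cast_zero, zero_add]; exact mul_le_mul_of_nonneg_left h1 (by positivity)
  · simp only [p0, Nat.cast_zero, zero_add]; exact mul_le_mul_of_nonneg_left h2 (by positivity)
  · intro h; exact absurd h (lt_irrefl 0)
  · intro h; exact absurd h (lt_irrefl 0)
  · intro h; exact absurd h (lt_irrefl 0)

theorem Ks_le (x y : ℕ → ℝ) (hx : ∀ a, 0 ≤ x a) (hy : ∀ a, 0 ≤ y a) (hxy : ∀ a, x a + y a = 1)
    (h1 : x 0 ≤ x 1) (h2 : x 1 ≤ x 2) (hD : 0 ≤ DE oR (x 0) (y 0) (x 1) (y 1) (x 2) (y 2)) :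
    Ks oR bs 16 (x 0) (y 0) (x 1) (y 1) (x 2) (y 2) ≤ 0 := by
  obtain ⟨b1, b2, hc⟩ := ck_all
  have hl := ckL
  simp only [Bool.and_eq_true] at hl
  have l1 : Ks oN bs 16 1 1 1 1 1 1 < 2 ^ 277 := Nat.le_of_ble_eq_true hl.1
  have l2 : DE oN 1 1 1 1 1 1 < 2 ^ 69 := Nat.le_of_ble_eq_true hl.2
  have hdeg : ∀ a, a < 3 → 16 * ((Pi.single 0 1 : ℕ → ℕ) a + (Pi.single 1 1 : ℕ → ℕ) a + (Pi.single 2 1 : ℕ → ℕ) a) = 16 := by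
    intro a ha
    interval_cases a <;> simp
  obtain ⟨c1, c2⟩ := repack (T := T0) (HR.Ks (n := 16 + 1) (w0 := 278) (x := x) (y := y) 16 bs) hdeg l1
    (le_of_eq (pow_succ' 2 277).symm) (w := 72) (by norm_num) bl16_eq hx hy hxy rfl b1
  obtain ⟨d1, d2⟩ := repack (T := D0) (HR.DE (n := 16 + 1) (w0 := 70) (x := x) (y := y)) hdeg l2
    (le_of_eq (pow_succ' 2 69).symm) (w := 72) (by norm_num) bl16_eq hx hy hxy rfl b2
  have hg := chk_good (by norm_num) (by norm_num) (by norm_num) _ _ _ _ _ _ hc c1 d1 x y hx hy hxy (p0_ord x h1 h2)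
    (by rw [pow_zero, div_one] at d2; linarith)
  have : Ks oR bs 16 (x 0) (y 0) (x 1) (y 1) (x 2) (y 2) / 2 ^ 176 ≤ 0 :=
    add_le_iff_nonpos_left.mp (c2.trans hg)
  by_contra hn
  exact absurd this (not_le.mpr (div_pos (not_le.mp hn) (by positivity)))

theorem BE_le (u : ℝ) (h1 : -1 ≤ u) (h2 : u ≤ 1 / 2) : BE oR bs ccf (2 ^ 204) acf (Xc u) (Yc u) ≤ 0 := by
  have h := ckB
  simp only [Bool.and_eq_true] at h
  obtain ⟨⟨l1, b1⟩, hc⟩ := h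
  have l1 : BE oN bs ccf (2 ^ 204) acf 1 1 < 2 ^ 260 := Nat.le_of_ble_eq_true l1
  have hx : ∀ _ : ℕ, 0 ≤ Xc u := fun _ => by unfold Xc; linarith
  have hy : ∀ _ : ℕ, 0 ≤ Yc u := fun _ => by unfold Yc; linarith
  have hdeg : ∀ a, a < 1 → 32 * (Pi.single 0 1 : ℕ → ℕ) a = 32 := by
    intro a ha
    interval_cases a; simp
  obtain ⟨c1, c2⟩ := repack (T := B0) (HR.BE (n := 32 + 1) (w0 := 261) (x := fun _ => Xc u) (y := fun _ => Yc u)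
    bs ccf (2 ^ 204) acf acf_len) hdeg l1
    (le_of_eq (pow_succ' 2 260).symm) (w := 90) (by norm_num) bl32_eq hx hy (fun _ => XY u) rfl b1
  have hg := chk_good (by norm_num) (by norm_num) (by norm_num) _ _ _ _ _ _ hc c1
    (fun i => by rw [slot_eq_zero]; norm_num) (fun _ => Xc u) (fun _ => Yc u) hx hy (fun _ => XY u)
    (p0_ord _ le_rfl le_rfl)
    (by rw [nv]; simp only [slot_eq_zero, Nat.cast_zero]; rw [val_zero])
  have : BE oR bs ccf (2 ^ 204) acf (Xc u) (Yc u) / 2 ^ 164 ≤ 0 :=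
    add_le_iff_nonpos_left.mp (c2.trans hg)
  by_contra hn
  exact absurd this (not_le.mpr (div_pos (not_le.mp hn) (by positivity)))

noncomputable def Kf (u v t : ℝ) : ℝ := KE oR bs 16 (Xc u) (Yc u) (Xc v) (Yc v) (Xc t) (Yc t)

theorem Kf_ord (u v t : ℝ) (hu : -1 ≤ u) (ht : t ≤ 1 / 2) (huv : u ≤ v) (hvt : v ≤ t)
    (hD : 0 ≤ 1 + 2 * u * v * t - u ^ 2 - v ^ 2 - t ^ 2) : Kf u v t + Kf u t v + Kf v t u ≤ 0 := by
  let z : ℕ → ℝ := fun a => if a = 0 then u else if a = 1 then v else t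
  have hz : ∀ a, -1 ≤ z a ∧ z a ≤ 1 / 2 := by
    intro a
    simp only [z]
    split_ifs <;> constructor <;> linarith
  have h := Ks_le (fun a => Xc (z a)) (fun a => Yc (z a)) (fun a => by have := hz a; simp only [Xc]; linarith)
    (fun a => by have := hz a; simp only [Yc]; linarith) (fun a => XY _)
    (show Xc u ≤ Xc v by unfold Xc; linarith) (show Xc v ≤ Xc t by unfold Xc; linarith)
    (by
      show 0 ≤ DE oR (Xc u) (Yc u) (Xc v) (Yc v) (Xc t) (Yc t)
      rw [DE_val]; positivity)
  have e : Kf u v t + (Kf u t v + Kf v t u) ≤ 0 := h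
  linarith

theorem Kf_symm (u v t : ℝ) : Kf u v t = Kf v u t := KE_symm bs 16 u v t

theorem Kf_le (u v t : ℝ) (hu : -1 ≤ u) (hu' : u ≤ 1 / 2) (hv : -1 ≤ v) (hv' : v ≤ 1 / 2) (ht : -1 ≤ t) (ht' : t ≤ 1 / 2)
    (hD : 0 ≤ 1 + 2 * u * v * t - u ^ 2 - v ^ 2 - t ^ 2) : Kf u v t + Kf u t v + Kf v t u ≤ 0 := by
  have s1 := Kf_symm u v t
  have s2 := Kf_symm u t v
  have s3 := Kf_symm v t u
  rcases le_total u v with a | a <;> rcases le_total v t with b | b <;> rcases le_total u t with c | c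
  · linarith [Kf_ord u v t hu ht' a b (by linarith)]
  · linarith [Kf_ord u v t hu ht' a b (by linarith)]
  · linarith [Kf_ord u t v hu hv' c b (by linarith)]
  · linarith [Kf_ord t u v ht hv' c a (by linarith)]
  · linarith [Kf_ord v u t hv ht' a c (by linarith)]
  · linarith [Kf_ord v t u hv hu' b c (by linarith)]
  · linarith [Kf_ord t v u ht hu' b a (by linarith)]
  · linarith [Kf_ord t v u ht hu' b a (by linarith)]

theorem bs_shape : ∃ r rs bt, bs = (123, r :: rs) :: bt := ⟨_, _, _, rfl⟩

end final

theorem kissing_number_dim10_le_554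
    (S : Finset (EuclideanSpace ℝ (Fin 10)))
    (hnorm : ∀ x ∈ S, ‖x‖ = 1)
    (hdist : ∀ x ∈ S, ∀ y ∈ S, x ≠ y → 1 ≤ dist x y) :
    S.card ≤ 554 := by
  obtain ⟨r, rs, bt, hb⟩ := bs_shape
  have hA := ckA
  rw [Bool.and_eq_true, decide_eq_true_eq, List.all_eq_true] at hA
  obtain ⟨hA1, hA2⟩ := hA
  have h := adm_all S hnorm 123 r rs bt ccf (2 ^ 204) acf (fun t ht => of_decide_eq_true (hA1 t ht))
  rw [← hb] at h
  have hA3 : ((ago oZ 2 1 4 acf 0 (2 ^ 123 * (ccf * ccf)) 1 16 : ℤ) : ℝ) < ((554 * 2 ^ 204 : ℤ) : ℝ) :=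
    Int.cast_lt.mpr hA2
  have e204 : ((2 ^ 204 : ℤ) : ℝ) = 2 ^ 204 := by rw [Int.cast_pow, Int.cast_ofNat]
  have hk := kiss_bound S hnorm hdist _ _ _ h (2 ^ 204)
    (fun u h1 h2 => by
      have := sub_le_sub_right (BE_le u h1 h2) (2 ^ 204)
      rw [zero_sub] at this
      refine le_trans (le_of_eq ?_) this
      exact congrArg (fun z => BE oR bs ccf (2 ^ 204) acf (Xc u) (Yc u) - z) e204)
    (fun u v t h1 h2 h3 h4 h5 h6 hD => Kf_le u v t h1 h2 h3 h4 h5 h6 hD)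
  generalize ((ago oZ 2 1 4 acf 0 (2 ^ 123 * (ccf * ccf)) 1 16 : ℤ) : ℝ) = A at hA3 hk
  by_contra hn
  have hc : (555 : ℝ) ≤ S.card := by
    have : 555 ≤ S.card := by omega
    exact_mod_cast this
  have h1 := le_of_mul_le_mul_left hk (by linarith)
  push_cast at hA3
  have h2 : (554 : ℝ) * 2 ^ 204 ≤ ((S.card : ℝ) - 1) * 2 ^ 204 :=
    mul_le_mul_of_nonneg_right (by linarith) (by positivity)
  linarith
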